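/- Let n ≥ 1 and p ∈ [1,2], and let ν_pⁿ be the probability measure on ℝⁿ with density c_pⁿ·exp(−Σ_{i=1}ⁿ |x_i|^p / p) with respect to Lebesgue measure. Let μ = exp(−U)·ν_pⁿ be a second probability measure on ℝⁿ, where U : ℝⁿ → ℝ is convex and unconditional, meaning U(±x₁,…,±x_n) = U(x₁,…,x_n) for all x ∈ ℝⁿ and all choices of signs. Then for every k ≥ 1, λ_k^Lip(ℝⁿ,|·|,μ) ≥ λ_k^Lip(ℝⁿ,|·|,ν_pⁿ). -/

import Mathlib

open MeasureTheory Filter Topology ENNReal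

/-- The local Lipschitz constant `|∇f|(x) = limsup_{y→x} |f(y)-f(x)|/d(y,x)`
(equal to `0` at isolated points, by the convention `Real.sInf ∅ = 0`). -/
noncomputable def localLip {Ω : Type*} [PseudoMetricSpace Ω] (f : Ω → ℝ) (x : Ω) : ℝ :=
  Filter.limsup (fun y => |f y - f x| / dist y x) (nhdsWithin x {x}ᶜ)

/-- Membership in the metric Sobolev space `W^{1,2}_Lip(Ω,d,μ)`. -/
def memW12Lip {Ω : Type*} [PseudoMetricSpace Ω] [MeasurableSpace Ω]
    (μ : Measure Ω) (f : Ω → ℝ) : Prop :=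
  LocallyLipschitz f ∧
    (∫⁻ x, ENNReal.ofReal ((f x) ^ 2) ∂μ) + (∫⁻ x, ENNReal.ofReal ((localLip f x) ^ 2) ∂μ) < ⊤

/-- The `k`-th metric eigenvalue `λ_k^Lip(Ω,d,μ)`: the infimum over `k`-dimensional
linear subspaces `F ⊆ W^{1,2}_Lip` of the supremum of the Rayleigh quotient over `F`. -/
noncomputable def lambdaLip {Ω : Type*} [PseudoMetricSpace Ω] [MeasurableSpace Ω]
    (μ : Measure Ω) (k : ℕ) : ℝ :=
  sInf { a : ℝ | ∃ F : Submodule ℝ (Ω → ℝ), Module.finrank ℝ F = k ∧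
    (∀ f ∈ F, memW12Lip μ f) ∧
    a = sSup { r : ℝ | ∃ f ∈ F, (∫ x, (f x) ^ 2 ∂μ) ≠ 0 ∧
      r = (∫ x, (localLip f x) ^ 2 ∂μ) / (∫ x, (f x) ^ 2 ∂μ) } }

/-- The `p`-exponential probability measure `ν_pⁿ` on `ℝⁿ`, with density proportional
to `exp(-∑ᵢ |xᵢ|^p / p)` with respect to Lebesgue measure, normalized to mass one. -/
noncomputable def nuP (n : ℕ) (p : ℝ) : Measure (EuclideanSpace ℝ (Fin n)) :=
  ((volume.withDensity fun x : EuclideanSpace ℝ (Fin n) =>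
      ENNReal.ofReal (Real.exp (-(∑ i, |x i| ^ p) / p))) Set.univ)⁻¹ •
    volume.withDensity fun x : EuclideanSpace ℝ (Fin n) =>
      ENNReal.ofReal (Real.exp (-(∑ i, |x i| ^ p) / p))

/-!
A contraction `T` pushing `ν` forward to `μ` does not increase Rayleigh quotients under `f ↦ f ∘ T`,
so it suffices to find a 1-Lipschitz map transporting `nuP n p` to `μ` (Kim–Milman).

Regularize `|x| ^ p / p` to a smooth potential `v` with `v'' ≥ δ > 0`, and `exp (-U)` to a smooth,
bounded, unconditional, log-concave `f`. Run the semigroup `P_t` of `dX = -v'(X) dt + √2 dB`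
(coordinatewise drift) from `f`. With `ρ = exp (-∑ v(xᵢ))`, the densities `P_t f · ρ` interpolate
between `f ρ` and a multiple of `ρ`, and to first order `x ↦ x + h ∇ log P_t f (x)` transports the
one at time `t + h` to the one at time `t`. This map contracts because `P_t f` stays log-concave:
since `v'` is odd and concave on `[0, ∞)`, which is where `p ≤ 2` enters, composition with the drift
step preserves unconditional log-concave functions, and convolution with a Gaussian does so by
Prékopa–Leindler.

Replacing the semigroup by its Euler scheme of step `h` avoids all parabolic theory: the transport
steps are exact contractions, and each is wrong by only `O(h ^ (3 / 2))` against smooth test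
functions. Taking `t` large, so that `P_t f` is nearly constant (its gradient decays like
`exp (-δ t)`), and then `h` small gives contractions transporting `ρ` to `f ρ` up to an arbitrarily
small error. A limit exists by compactness of the 1-Lipschitz maps fixing the origin.
-/

namespace SpectralComparison

/-! ### The local Lipschitz constant -/

section LocalLip

variable {Ω Ω' : Type*} [MetricSpace Ω] [MetricSpace Ω'] {f g : Ω → ℝ} {x : Ω}

lemma localLip_eq_zero_of_isolated (h : 𝓝[≠] x = ⊥) : localLip f x = 0 := by
  simp [localLip, h, limsup_eq]

lemma isBoundedUnder_slope (hf : LocallyLipschitz f) (x : Ω) :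
    IsBoundedUnder (· ≤ ·) (𝓝[≠] x) fun y => |f y - f x| / dist y x := by
  obtain ⟨K, t, ht, hK⟩ := hf x
  refine ⟨K, eventually_map.2 ?_⟩
  filter_upwards [mem_nhdsWithin_of_mem_nhds ht] with y hy
  exact div_le_of_le_mul₀ dist_nonneg K.2 (hK.dist_le_mul y hy x (mem_of_mem_nhds ht))

lemma isCoboundedUnder_slope (f : Ω → ℝ) (x : Ω) [(𝓝[≠] x).NeBot] :
    IsCoboundedUnder (· ≤ ·) (𝓝[≠] x) fun y => |f y - f x| / dist y x :=
  (isBoundedUnder_of ⟨0, fun _ => by positivity⟩ :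
    IsBoundedUnder (· ≥ ·) _ _).isCoboundedUnder_le

lemma localLip_le_of_eventually_le {c : ℝ} (hc : 0 ≤ c)
    (h : ∀ᶠ y in 𝓝 x, |f y - f x| ≤ c * dist y x) : localLip f x ≤ c := by
  rcases (𝓝[≠] x).eq_or_neBot with hx | hx
  · rwa [localLip_eq_zero_of_isolated hx]
  · refine limsup_le_of_le (isCoboundedUnder_slope f x) ?_
    filter_upwards [mem_nhdsWithin_of_mem_nhds h] with y hy
    exact div_le_of_le_mul₀ dist_nonneg hc hy

lemma eventually_abs_sub_le_of_localLip_lt (hf : LocallyLipschitz f) {c : ℝ}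
    (h : localLip f x < c) : ∀ᶠ y in 𝓝 x, |f y - f x| ≤ c * dist y x := by
  have hslope := eventually_lt_of_limsup_lt h (isBoundedUnder_slope hf x)
  filter_upwards [eventually_nhdsWithin_iff.1 hslope] with y hy
  rcases eq_or_ne y x with rfl | hyx
  · simp
  · exact ((div_lt_iff₀ (dist_pos.2 hyx)).1 (hy hyx)).le

lemma localLip_nonneg (hf : LocallyLipschitz f) (x : Ω) : 0 ≤ localLip f x := by
  rcases (𝓝[≠] x).eq_or_neBot with hx | hx
  · rw [localLip_eq_zero_of_isolated hx]
  · exact le_limsup_of_frequently_le (Eventually.of_forall fun y => by positivity).frequently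
      (isBoundedUnder_slope hf x)

lemma localLip_le_of_lipschitzWith {K : NNReal} (hf : LipschitzWith K f) (x : Ω) :
    localLip f x ≤ K :=
  localLip_le_of_eventually_le K.2 (Eventually.of_forall fun y => hf.dist_le_mul y x)

lemma localLip_comp_le {f : Ω' → ℝ} (hf : LocallyLipschitz f) {T : Ω → Ω'}
    (hT : LipschitzWith 1 T) (x : Ω) : localLip (f ∘ T) x ≤ localLip f (T x) := by
  refine le_of_forall_gt_imp_ge_of_dense fun c hc => ?_
  have hc₀ : 0 ≤ c := (localLip_nonneg hf _).trans hc.le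
  refine localLip_le_of_eventually_le hc₀ ?_
  filter_upwards [hT.continuous.continuousAt.eventually
    (eventually_abs_sub_le_of_localLip_lt hf hc)] with y hy
  refine hy.trans (mul_le_mul_of_nonneg_left ?_ hc₀)
  simpa using hT.dist_le_mul y x

lemma localLip_add_le (hf : LocallyLipschitz f) (hg : LocallyLipschitz g) (x : Ω) :
    localLip (f + g) x ≤ localLip f x + localLip g x := by
  have hf₀ := localLip_nonneg hf x
  have hg₀ := localLip_nonneg hg x
  refine le_of_forall_pos_le_add fun ε hε => localLip_le_of_eventually_le (by positivity) ?_
  filter_upwards [eventually_abs_sub_le_of_localLip_lt hf (lt_add_of_pos_right _ (half_pos hε)),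
    eventually_abs_sub_le_of_localLip_lt hg (lt_add_of_pos_right _ (half_pos hε))] with y hfy hgy
  calc |(f + g) y - (f + g) x| = |(f y - f x) + (g y - g x)| := by
        congr 1; simp only [Pi.add_apply]; ring
    _ ≤ |f y - f x| + |g y - g x| := abs_add_le _ _
    _ ≤ (localLip f x + localLip g x + ε) * dist y x := by linarith

lemma localLip_smul_le (hf : LocallyLipschitz f) (a : ℝ) (x : Ω) :
    localLip (a • f) x ≤ |a| * localLip f x := by
  have hbound : ∀ c, localLip f x < c → localLip (a • f) x ≤ |a| * c := fun c hc => by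
    have hc₀ : 0 ≤ c := (localLip_nonneg hf x).trans hc.le
    refine localLip_le_of_eventually_le (by positivity) ?_
    filter_upwards [eventually_abs_sub_le_of_localLip_lt hf hc] with y hy
    simp only [Pi.smul_apply, smul_eq_mul, ← mul_sub, abs_mul, mul_assoc]
    gcongr
  exact ge_of_tendsto (tendsto_nhdsWithin_of_tendsto_nhds (tendsto_id.const_mul |a|))
    (by filter_upwards [self_mem_nhdsWithin] with c hc using hbound c hc : ∀ᶠ c in 𝓝[>] _, _)

lemma lt_localLip_iff {c : ℝ} (hf : LocallyLipschitz f) (hc : 0 ≤ c) :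
    c < localLip f x ↔ ∃ a : ℚ, c < a ∧ ∀ m : ℕ, ∃ y, 0 < dist y x ∧
      dist y x < 1 / ((m : ℝ) + 1) ∧ a * dist y x < |f y - f x| := by
  constructor
  · intro h
    have : (𝓝[≠] x).NeBot := ⟨fun hx => by
      rw [localLip_eq_zero_of_isolated hx] at h; linarith⟩
    obtain ⟨a, hca, ha⟩ := exists_rat_btwn h
    refine ⟨a, hca, fun m => ?_⟩
    have hnear : ∀ᶠ y in 𝓝[≠] x, dist y x < 1 / ((m : ℝ) + 1) :=
      mem_nhdsWithin_of_mem_nhds (Metric.ball_mem_nhds x (by positivity))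
    have hne : ∀ᶠ y in 𝓝[≠] x, y ≠ x := self_mem_nhdsWithin
    obtain ⟨y, hy, hym, hyx⟩ := ((frequently_lt_of_lt_limsup (isCoboundedUnder_slope f x)
      ha).and_eventually (hnear.and hne)).exists
    have hd : 0 < dist y x := dist_pos.2 hyx
    exact ⟨y, hd, hym, (lt_div_iff₀ hd).1 hy⟩
  · rintro ⟨a, hca, h⟩
    refine hca.trans_le (le_limsup_of_frequently_le ?_ (isBoundedUnder_slope hf x))
    rw [frequently_nhdsWithin_iff, Metric.nhds_basis_ball.frequently_iff]
    intro r hr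
    obtain ⟨m, hm⟩ := exists_nat_one_div_lt hr
    obtain ⟨y, hd, hym, hy⟩ := h m
    exact ⟨y, hym.trans hm, (le_div_iff₀ hd).2 hy.le, dist_pos.1 hd⟩

lemma locallyLipschitz_smul (a : ℝ) (hf : LocallyLipschitz f) : LocallyLipschitz (a • f) :=
  (lipschitzWith_smul a).locallyLipschitz.comp hf

/-- The tent function of height and radius `r` centred at `a`. -/
noncomputable def tent (r : ℝ) (a x : Ω) : ℝ := max 0 (r - dist x a)

lemma lipschitzWith_tent (r : ℝ) (a : Ω) : LipschitzWith 1 (tent r a) := by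
  have h := ((LipschitzWith.const r).sub (LipschitzWith.dist_left a)).const_max 0
  rwa [zero_add] at h

lemma linearIndependent_tent {ι : Type*} [Finite ι] {a : ι → Ω} {r : ℝ} (hr : 0 < r)
    (hsep : ∀ i j, i ≠ j → r ≤ dist (a i) (a j)) :
    LinearIndependent ℝ fun i => tent r (a i) := by
  classical
  have := Fintype.ofFinite ι
  have heval : ∀ i j, tent r (a j) (a i) = if i = j then r else 0 := by
    intro i j
    split_ifs with h
    · simp [tent, h, hr.le]
    · exact max_eq_left (by linarith [hsep i j h])
  rw [Fintype.linearIndependent_iff]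
  intro c hc i
  simpa [Finset.sum_apply, heval, hr.ne'] using congrFun hc (a i)

lemma exists_pos_le_dist_of_injective {ι : Type*} [Finite ι] {a : ι → Ω}
    (ha : Function.Injective a) : ∃ r > 0, ∀ i j, i ≠ j → r ≤ dist (a i) (a j) := by
  have hev : ∀ᶠ r in 𝓝[>] (0 : ℝ), ∀ i j, i ≠ j → r ≤ dist (a i) (a j) := by
    refine eventually_all.2 fun i => eventually_all.2 fun j => ?_
    by_cases hij : i = j
    · simp [hij]
    · filter_upwards [Ioo_mem_nhdsGT (dist_pos.2 (ha.ne hij))] with r hr _ using hr.2.le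
  exact (eventually_mem_nhdsWithin.and hev).exists

variable [MeasurableSpace Ω] [BorelSpace Ω]

lemma measurable_localLip (hf : LocallyLipschitz f) : Measurable (localLip f) := by
  refine measurable_of_Ioi fun c => ?_
  rcases lt_or_ge c 0 with hc | hc
  · convert MeasurableSet.univ
    exact Set.eq_univ_of_forall fun x => hc.trans_le (localLip_nonneg hf x)
  have hpre : localLip f ⁻¹' Set.Ioi c = ⋃ a : ℚ, ⋃ _ : c < a, ⋂ m : ℕ, ⋃ y,
      {x | 0 < dist y x ∧ dist y x < 1 / ((m : ℝ) + 1) ∧ a * dist y x < |f y - f x|} := by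
    ext x
    simp [lt_localLip_iff hf hc]
  have hfc := hf.continuous
  have hopen : ∀ (a r : ℝ) (y : Ω),
      IsOpen {x | 0 < dist y x ∧ dist y x < r ∧ a * dist y x < |f y - f x|} := by
    intro a r y
    simp only [Set.ofPred_and]
    exact (isOpen_lt (by fun_prop) (by fun_prop)).inter <|
      (isOpen_lt (by fun_prop) (by fun_prop)).inter (isOpen_lt (by fun_prop) (by fun_prop))
  rw [hpre]
  exact .iUnion fun a => .iUnion fun _ => .iInter fun m =>
    (isOpen_iUnion fun y => hopen a _ y).measurableSet

end LocalLip

section L2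

variable {α : Type*} [MeasurableSpace α] {μ : Measure α} {f : α → ℝ}

lemma memLp_two_iff_lintegral_sq_lt_top (hf : AEStronglyMeasurable f μ) :
    MemLp f 2 μ ↔ ∫⁻ x, ENNReal.ofReal (f x ^ 2) ∂μ < ⊤ := by
  rw [memLp_two_iff_integrable_sq hf, ← hasFiniteIntegral_iff_ofReal
    (Eventually.of_forall fun x => sq_nonneg (f x))]
  exact ⟨fun h => h.2, fun h => ⟨hf.pow 2, h⟩⟩

lemma sq_lpNorm_two (hf : AEStronglyMeasurable f μ) :
    lpNorm f 2 μ ^ 2 = ∫ x, f x ^ 2 ∂μ := by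
  have h₀ : 0 ≤ ∫ x, f x ^ 2 ∂μ := integral_nonneg fun x => sq_nonneg (f x)
  rw [lpNorm_eq_integral_norm_rpow_toReal two_ne_zero ENNReal.ofNat_ne_top hf]
  simp only [toReal_ofNat, Real.rpow_ofNat, Real.norm_eq_abs, sq_abs, ← one_div]
  rw [← Real.sqrt_eq_rpow, Real.sq_sqrt h₀]

end L2

lemma exists_seminorm_le_mul_of_finiteDimensional {V : Type*} [AddCommGroup V] [Module ℝ V]
    [FiniteDimensional ℝ V] (p q : Seminorm ℝ V) (hq : ∀ v, q v = 0 → v = 0) :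
    ∃ C, ∀ v, p v ≤ C * q v := by
  let qNorm : AddGroupNorm V := { q.toAddGroupSeminorm with eq_zero_of_map_eq_zero' := hq }
  let := qNorm.toNormedAddCommGroup
  let : NormedSpace ℝ V := ⟨fun a v => (map_smul_eq_mul q a v).le⟩
  have hp : Continuous p := continuousOn_univ.1 (p.convexOn.continuousOn isOpen_univ)
  obtain ⟨C, -, hC⟩ := p.bound_of_continuous_normedSpace hp
  exact ⟨C, hC⟩

/-! ### The metric Sobolev space and the contraction principle -/

section Sobolev

variable {Ω : Type*} [MetricSpace Ω] [MeasurableSpace Ω] {μ : Measure Ω} {f : Ω → ℝ}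

variable (μ) in
/-- The Rayleigh quotients of the functions in `F`, whose supremum enters `lambdaLip`. -/
def rayleighQuotients (F : Submodule ℝ (Ω → ℝ)) : Set ℝ :=
  {r | ∃ f ∈ F, (∫ x, f x ^ 2 ∂μ) ≠ 0 ∧ r = (∫ x, localLip f x ^ 2 ∂μ) / ∫ x, f x ^ 2 ∂μ}

lemma nonneg_of_mem_rayleighQuotients {F : Submodule ℝ (Ω → ℝ)} {r : ℝ}
    (hr : r ∈ rayleighQuotients μ F) : 0 ≤ r := by
  obtain ⟨f, -, -, rfl⟩ := hr
  exact div_nonneg (integral_nonneg fun x => sq_nonneg _) (integral_nonneg fun x => sq_nonneg _)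

lemma lpNorm_localLip_le {h : Ω → ℝ} (hf : LocallyLipschitz f) (hh : MemLp h 2 μ)
    (hle : ∀ x, localLip f x ≤ h x) : lpNorm (localLip f) 2 μ ≤ lpNorm h 2 μ :=
  lpNorm_mono_real hh fun x => (Real.norm_of_nonneg (localLip_nonneg hf x)).trans_le (hle x)

variable [BorelSpace Ω]

lemma memW12Lip_iff :
    memW12Lip μ f ↔ LocallyLipschitz f ∧ MemLp f 2 μ ∧ MemLp (localLip f) 2 μ := by
  refine and_congr_right fun hf => ?_
  rw [ENNReal.add_lt_top,
    memLp_two_iff_lintegral_sq_lt_top hf.continuous.measurable.aestronglyMeasurable,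
    memLp_two_iff_lintegral_sq_lt_top (measurable_localLip hf).aestronglyMeasurable]

lemma memW12Lip_of_lipschitzWith_of_bounded [IsFiniteMeasure μ] {K : NNReal} {C : ℝ}
    (hK : LipschitzWith K f) (hC : ∀ x, |f x| ≤ C) : memW12Lip μ f := by
  have hf := hK.locallyLipschitz
  refine memW12Lip_iff.2 ⟨hf, .of_bound hf.continuous.measurable.aestronglyMeasurable C
    (Eventually.of_forall hC), .of_bound (measurable_localLip hf).aestronglyMeasurable K
    (Eventually.of_forall fun x => ?_)⟩
  rw [Real.norm_of_nonneg (localLip_nonneg hf x)]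
  exact localLip_le_of_lipschitzWith hK x

lemma memLp_localLip_of_le {h : Ω → ℝ} (hf : LocallyLipschitz f) (hh : MemLp h 2 μ)
    (hle : ∀ x, localLip f x ≤ h x) : MemLp (localLip f) 2 μ :=
  hh.mono' (measurable_localLip hf).aestronglyMeasurable <| Eventually.of_forall fun x =>
    (Real.norm_of_nonneg (localLip_nonneg hf x)).trans_le (hle x)

variable (μ) in
/-- The metric Sobolev space `W^{1,2}_Lip(Ω, d, μ)` as a space of functions. -/
def sobolev : Submodule ℝ (Ω → ℝ) where
  carrier := {f | memW12Lip μ f}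
  zero_mem' := memW12Lip_iff.2 ⟨.const 0, .zero, memLp_localLip_of_le (.const 0) .zero
    (localLip_le_of_lipschitzWith (LipschitzWith.const 0))⟩
  add_mem' hf hg := by
    obtain ⟨hf, hf₂, hf'⟩ := memW12Lip_iff.1 hf
    obtain ⟨hg, hg₂, hg'⟩ := memW12Lip_iff.1 hg
    exact memW12Lip_iff.2 ⟨hf.add hg, hf₂.add hg₂,
      memLp_localLip_of_le (hf.add hg) (hf'.add hg') (localLip_add_le hf hg)⟩
  smul_mem' a f hf := by
    obtain ⟨hf, hf₂, hf'⟩ := memW12Lip_iff.1 hf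
    exact memW12Lip_iff.2 ⟨locallyLipschitz_smul a hf, hf₂.const_smul a,
      memLp_localLip_of_le (locallyLipschitz_smul a hf) (hf'.const_smul |a|)
        (localLip_smul_le hf a)⟩

lemma mem_sobolev : f ∈ sobolev μ ↔ LocallyLipschitz f ∧ MemLp f 2 μ ∧ MemLp (localLip f) 2 μ :=
  memW12Lip_iff

variable (μ) in
/-- The `L²(μ)` norm, as a seminorm on the metric Sobolev space. -/
noncomputable def l2Seminorm : Seminorm ℝ (sobolev μ) :=
  .of (fun f => lpNorm (f : Ω → ℝ) 2 μ)
    (fun f _ => lpNorm_add_le (mem_sobolev.1 f.2).2.1 one_le_two)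
    fun a f => lpNorm_const_smul a (f : Ω → ℝ) μ

variable (μ) in
/-- The square root of the energy `∫ |∇f|² dμ`, as a seminorm on the metric Sobolev space. -/
noncomputable def energySeminorm : Seminorm ℝ (sobolev μ) :=
  .ofSMulLE (fun f => lpNorm (localLip (f : Ω → ℝ)) 2 μ)
    (by
      rw [← lpNorm_zero (E := ℝ) 2 μ]
      exact le_antisymm (lpNorm_localLip_le (.const 0) .zero
        (localLip_le_of_lipschitzWith (LipschitzWith.const 0))) (by simp))
    (fun f g => by
      obtain ⟨hf, -, hf'⟩ := mem_sobolev.1 f.2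
      obtain ⟨hg, -, hg'⟩ := mem_sobolev.1 g.2
      exact (lpNorm_localLip_le (hf.add hg) (hf'.add hg') (localLip_add_le hf hg)).trans
        (lpNorm_add_le hf' one_le_two))
    fun a f => by
      obtain ⟨hf, -, hf'⟩ := mem_sobolev.1 f.2
      refine (lpNorm_localLip_le (locallyLipschitz_smul a hf) (hf'.const_smul |a|)
        (localLip_smul_le hf a)).trans_eq ?_
      simp [lpNorm_const_smul]

lemma sq_l2Seminorm (f : sobolev μ) : l2Seminorm μ f ^ 2 = ∫ x, (f : Ω → ℝ) x ^ 2 ∂μ :=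
  sq_lpNorm_two (mem_sobolev.1 f.2).2.1.1

lemma sq_energySeminorm (f : sobolev μ) :
    energySeminorm μ f ^ 2 = ∫ x, localLip (f : Ω → ℝ) x ^ 2 ∂μ :=
  sq_lpNorm_two (mem_sobolev.1 f.2).2.2.1

lemma eq_zero_of_l2Seminorm_eq_zero [μ.IsOpenPosMeasure] {f : sobolev μ}
    (h : l2Seminorm μ f = 0) : f = 0 := by
  obtain ⟨hf, hf₂, -⟩ := mem_sobolev.1 f.2
  exact Subtype.ext <| (Continuous.ae_eq_iff_eq μ hf.continuous continuous_const).1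
    ((lpNorm_eq_zero hf₂ two_ne_zero).1 h)

lemma bddAbove_rayleighQuotients [μ.IsOpenPosMeasure] {F : Submodule ℝ (Ω → ℝ)}
    [FiniteDimensional ℝ F] (hF : F ≤ sobolev μ) : BddAbove (rayleighQuotients μ F) := by
  let ι := Submodule.inclusion hF
  obtain ⟨C, hC⟩ := exists_seminorm_le_mul_of_finiteDimensional ((energySeminorm μ).comp ι)
    ((l2Seminorm μ).comp ι) fun v hv => Submodule.inclusion_injective hF <|
      (eq_zero_of_l2Seminorm_eq_zero hv).trans (map_zero ι).symm
  refine ⟨C ^ 2, ?_⟩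
  rintro _ ⟨f, hf, hne, rfl⟩
  have hle : energySeminorm μ ⟨f, hF hf⟩ ≤ C * l2Seminorm μ ⟨f, hF hf⟩ := hC ⟨f, hf⟩
  rw [div_le_iff₀ (hne.symm.lt_of_le (integral_nonneg fun x => sq_nonneg (f x))),
    ← sq_energySeminorm ⟨f, hF hf⟩, ← sq_l2Seminorm ⟨f, hF hf⟩, ← mul_pow]
  exact pow_le_pow_left₀ (apply_nonneg _ _) hle 2

section Contraction

variable {Ω' : Type*} [MeasurableSpace Ω'] {ν : Measure Ω'} {T : Ω' → Ω}

lemma integral_sq_comp (hTμ : MeasurePreserving T ν μ) (hf : f ∈ sobolev μ) :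
    ∫ x, (f ∘ T) x ^ 2 ∂ν = ∫ x, f x ^ 2 ∂μ := by
  rw [← hTμ.map_eq, integral_map hTμ.measurable.aemeasurable]
  · rfl
  · exact ((mem_sobolev.1 hf).1.continuous.pow 2).measurable.aestronglyMeasurable

lemma finrank_map_funLeft [μ.IsOpenPosMeasure] (hTμ : MeasurePreserving T ν μ)
    {F : Submodule ℝ (Ω → ℝ)} (hF : F ≤ sobolev μ) :
    Module.finrank ℝ (F.map (LinearMap.funLeft ℝ ℝ T)) = Module.finrank ℝ F := by
  rw [← LinearMap.range_domRestrict]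
  refine LinearMap.finrank_range_of_inj ?_
  rw [← LinearMap.ker_eq_bot, LinearMap.ker_eq_bot']
  rintro ⟨f, hf⟩ (hfT : f ∘ T = 0)
  have hzero : l2Seminorm μ ⟨f, hF hf⟩ ^ 2 = 0 := by
    rw [sq_l2Seminorm, ← integral_sq_comp hTμ (hF hf), hfT]
    simp
  have hf₀ := eq_zero_of_l2Seminorm_eq_zero (pow_eq_zero_iff two_ne_zero |>.1 hzero)
  exact Subtype.ext (congrArg (fun g : sobolev μ => (g : Ω → ℝ)) hf₀)

variable [MetricSpace Ω'] [BorelSpace Ω']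

lemma comp_mem_sobolev (hT : LipschitzWith 1 T) (hTμ : MeasurePreserving T ν μ)
    (hf : f ∈ sobolev μ) : f ∘ T ∈ sobolev ν := by
  obtain ⟨hf, hf₂, hf'⟩ := mem_sobolev.1 hf
  exact mem_sobolev.2 ⟨hf.comp hT.locallyLipschitz, hf₂.comp_measurePreserving hTμ,
    memLp_localLip_of_le (hf.comp hT.locallyLipschitz) (hf'.comp_measurePreserving hTμ)
      (localLip_comp_le hf hT)⟩

lemma integral_sq_localLip_comp_le (hT : LipschitzWith 1 T) (hTμ : MeasurePreserving T ν μ)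
    (hf : f ∈ sobolev μ) :
    ∫ x, localLip (f ∘ T) x ^ 2 ∂ν ≤ ∫ x, localLip f x ^ 2 ∂μ := by
  obtain ⟨hfL, -, hf'⟩ := mem_sobolev.1 hf
  have hfT := mem_sobolev.1 (comp_mem_sobolev hT hTμ hf)
  calc ∫ x, localLip (f ∘ T) x ^ 2 ∂ν ≤ ∫ x, localLip f (T x) ^ 2 ∂ν :=
        integral_mono hfT.2.2.integrable_sq (hf'.comp_measurePreserving hTμ).integrable_sq
          fun x => pow_le_pow_left₀ (localLip_nonneg hfT.1 x) (localLip_comp_le hfL hT x) 2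
    _ = ∫ x, localLip f x ^ 2 ∂μ := by
        rw [← hTμ.map_eq, integral_map hTμ.measurable.aemeasurable
          ((measurable_localLip hfL).pow_const 2).aestronglyMeasurable]

-- A `k`-dimensional space of test functions for `μ` pulls back under `T` to one for `ν`, and
-- Rayleigh quotients do not increase. Without any such space, `lambdaLip μ k` is `sInf ∅ = 0`.
theorem lambdaLip_le_of_contraction [μ.IsOpenPosMeasure] (hT : LipschitzWith 1 T)
    (hTμ : MeasurePreserving T ν μ) {k : ℕ} (hk : 1 ≤ k)
    (hne : ∃ F ≤ sobolev μ, Module.finrank ℝ F = k) : lambdaLip ν k ≤ lambdaLip μ k := by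
  obtain ⟨F₀, hF₀, hk₀⟩ := hne
  refine le_csInf ⟨_, F₀, hk₀, hF₀, rfl⟩ ?_
  rintro _ ⟨F, hFk, hF, rfl⟩
  have : FiniteDimensional ℝ F := Module.finite_of_finrank_pos (by lia)
  have hle : sSup (rayleighQuotients ν (F.map (LinearMap.funLeft ℝ ℝ T)))
      ≤ sSup (rayleighQuotients μ F) := by
    refine Real.sSup_le ?_ (Real.sSup_nonneg fun r => nonneg_of_mem_rayleighQuotients)
    rintro _ ⟨_, ⟨f, hf, rfl⟩, hf₀, rfl⟩
    have hsq : ∫ x, LinearMap.funLeft ℝ ℝ T f x ^ 2 ∂ν = ∫ x, f x ^ 2 ∂μ :=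
      integral_sq_comp hTμ (hF f hf)
    rw [hsq] at hf₀ ⊢
    exact (div_le_div_of_nonneg_right (integral_sq_localLip_comp_le hT hTμ (hF f hf))
      (integral_nonneg fun x => sq_nonneg _)).trans
      (le_csSup (bddAbove_rayleighQuotients hF) ⟨f, hf, hf₀, rfl⟩)
  refine csInf_le_of_le ⟨0, ?_⟩
    ⟨_, (finrank_map_funLeft hTμ hF).trans hFk, ?_, rfl⟩ hle
  · rintro _ ⟨G, -, -, rfl⟩
    exact Real.sSup_nonneg fun r => nonneg_of_mem_rayleighQuotients
  · rintro _ ⟨f, hf, rfl⟩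
    exact comp_mem_sobolev (f := f) hT hTμ (hF f hf)

end Contraction

lemma tent_mem_sobolev [IsFiniteMeasure μ] {r : ℝ} (hr : 0 ≤ r) (a : Ω) : tent r a ∈ sobolev μ :=
  memW12Lip_of_lipschitzWith_of_bounded (C := r) (lipschitzWith_tent r a) fun x => by
    rw [abs_of_nonneg (le_max_left _ _)]
    exact max_le hr (by linarith [dist_nonneg (x := x) (y := a)])

lemma exists_le_sobolev_finrank_eq [Infinite Ω] (μ : Measure Ω) [IsFiniteMeasure μ] (k : ℕ) :
    ∃ F ≤ sobolev μ, Module.finrank ℝ F = k := by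
  let a : Fin k → Ω := fun i => Infinite.natEmbedding Ω i
  have ha : Function.Injective a := (Infinite.natEmbedding Ω).injective.comp Fin.val_injective
  obtain ⟨r, hr, hsep⟩ := exists_pos_le_dist_of_injective ha
  refine ⟨Submodule.span ℝ (Set.range fun i => tent r (a i)), Submodule.span_le.2 ?_, ?_⟩
  · rintro _ ⟨i, rfl⟩
    exact tent_mem_sobolev hr.le (a i)
  · rw [finrank_span_eq_card (linearIndependent_tent hr hsep), Fintype.card_fin]

end Sobolev

/-! ### The Prékopa–Leindler inequality -/

section PrekopaLeindler

open ProbabilityTheory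

open scoped Pointwise in
lemma volume_image_add_mul {a : ℝ} (ha : 0 < a) (c : ℝ) (K : Set ℝ) :
    volume ((fun x => c + a * x) '' K) = ENNReal.ofReal a * volume K := by
  have hcomp : (fun x => c + a * x) '' K = (fun x => c + x) '' (a • K) := by
    rw [← Set.image_smul, Set.image_image]
    simp only [smul_eq_mul]
  rw [hcomp, Set.image_add_left, measure_preimage_add, Measure.addHaar_smul]
  simp [abs_of_pos ha]

section Real

variable {a b : ℝ}

-- The translates `a K + b min L` and `a max K + b L` lie in `C` and meet in a single point.
lemma add_mul_volume_le_of_isCompact {K L C : Set ℝ} (hK : IsCompact K) (hL : IsCompact L)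
    (hK₀ : K.Nonempty) (hL₀ : L.Nonempty) (ha : 0 < a) (hb : 0 < b)
    (hC : ∀ x ∈ K, ∀ y ∈ L, a * x + b * y ∈ C) :
    ENNReal.ofReal a * volume K + ENNReal.ofReal b * volume L ≤ volume C := by
  obtain ⟨M, hMK, hM⟩ := hK.exists_isGreatest hK₀
  obtain ⟨m, hmL, hm⟩ := hL.exists_isLeast hL₀
  rw [← volume_image_add_mul ha (b * m) K, ← volume_image_add_mul hb (a * M) L]
  have hmeas : MeasurableSet ((fun x => a * M + b * x) '' L) :=
    (hL.image (by fun_prop)).measurableSet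
  rw [← measure_union₀ hmeas.nullMeasurableSet]
  · refine measure_mono ?_
    rintro z (⟨x, hx, rfl⟩ | ⟨y, hy, rfl⟩)
    · simpa only [add_comm] using hC x hx m hmL
    · exact hC M hMK y hy
  · refine measure_mono_null (t := {a * M + b * m}) ?_ (by simp)
    rintro z ⟨⟨x, hx, rfl⟩, ⟨y, hy, h⟩⟩
    have hxM : x ≤ M := hM hx
    have hmy : m ≤ y := hm hy
    simp only [Set.mem_singleton_iff] at h ⊢
    nlinarith

lemma add_mul_volume_le_of_measurableSet {A B C : Set ℝ} (hA : MeasurableSet A)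
    (hB : MeasurableSet B) (hA₀ : A.Nonempty) (hB₀ : B.Nonempty) (ha : 0 < a) (hb : 0 < b)
    (hC : ∀ x ∈ A, ∀ y ∈ B, a * x + b * y ∈ C) :
    ENNReal.ofReal a * volume A + ENNReal.ofReal b * volume B ≤ volume C := by
  obtain ⟨x₀, hx₀⟩ := hA₀
  obtain ⟨y₀, hy₀⟩ := hB₀
  have volume_eq_iSup (S : Set ℝ) (hS : MeasurableSet S) :
      volume S = ⨆ K : {K : Set ℝ // K ⊆ S ∧ IsCompact K}, volume (K : Set ℝ) := by
    rw [hS.measure_eq_iSup_isCompact, iSup_subtype]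
    simp only [iSup_and]
  have : Nonempty {K : Set ℝ // K ⊆ A ∧ IsCompact K} := ⟨∅, by simp⟩
  have : Nonempty {K : Set ℝ // K ⊆ B ∧ IsCompact K} := ⟨∅, by simp⟩
  simp only [volume_eq_iSup A hA, volume_eq_iSup B hB, ENNReal.mul_iSup]
  refine ENNReal.iSup_add_iSup_le ?_
  rintro ⟨K, hKA, hK⟩ ⟨L, hLB, hL⟩
  refine le_trans ?_ (add_mul_volume_le_of_isCompact (hK.insert x₀) (hL.insert y₀)
    (Set.insert_nonempty _ _) (Set.insert_nonempty _ _) ha hb fun x hx y hy =>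
      hC x (Set.insert_subset hx₀ hKA hx) y (Set.insert_subset hy₀ hLB hy))
  gcongr <;> exact Set.subset_insert _ _

end Real

lemma lintegral_eq_lintegral_measure_ofReal_lt {X : Type*} [MeasurableSpace X] (κ : Measure X)
    {f : X → ℝ≥0∞} (hf : Measurable f) (hf_top : ∀ x, f x ≠ ⊤) :
    ∫⁻ x, f x ∂κ = ∫⁻ t in Set.Ioi 0, κ {x | ENNReal.ofReal t < f x} := by
  have layercake := lintegral_eq_lintegral_meas_lt κ
    (Eventually.of_forall fun x => ENNReal.toReal_nonneg (a := f x))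
    hf.ennreal_toReal.aemeasurable
  simp only [ENNReal.ofReal_toReal (hf_top _)] at layercake
  rw [layercake]
  refine setLIntegral_congr_fun measurableSet_Ioi fun t ht => ?_
  simp only [ENNReal.ofReal_lt_iff_lt_toReal (le_of_lt ht) (hf_top _)]

lemma measurable_measure_ofReal_lt {X : Type*} [MeasurableSpace X] (κ : Measure X)
    (f : X → ℝ≥0∞) : Measurable fun t : ℝ => κ {x | ENNReal.ofReal t < f x} :=
  Antitone.measurable fun _ _ hst => measure_mono fun _ hx =>
    (ENNReal.ofReal_le_ofReal hst).trans_lt hx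

section Real

variable {a b : ℝ} {f g h : ℝ → ℝ≥0∞}

lemma add_mul_volume_superlevel_le (hf : Measurable f) (hg : Measurable g)
    (hf₁ : ⨆ x, f x = 1) (hg₁ : ⨆ x, g x = 1) (ha : 0 < a) (hb : 0 < b) (hab : a + b = 1)
    (H : ∀ x y, f x ^ a * g y ^ b ≤ h (a * x + b * y)) {t : ℝ≥0∞} (ht₀ : t ≠ 0) :
    ENNReal.ofReal a * volume {x | t < f x} + ENNReal.ofReal b * volume {x | t < g x}
      ≤ volume {x | t < h x} := by
  rcases lt_or_ge t 1 with ht | ht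
  · refine add_mul_volume_le_of_measurableSet (measurableSet_lt measurable_const hf)
      (measurableSet_lt measurable_const hg) (lt_iSup_iff.1 (ht.trans_eq hf₁.symm))
      (lt_iSup_iff.1 (ht.trans_eq hg₁.symm)) ha hb fun x hx y hy => lt_of_lt_of_le ?_ (H x y)
    calc t = t ^ a * t ^ b := by rw [← ENNReal.rpow_add _ _ ht₀ ht.ne_top, hab, ENNReal.rpow_one]
      _ < f x ^ a * g y ^ b :=
        ENNReal.mul_lt_mul (ENNReal.rpow_lt_rpow hx ha) (ENNReal.rpow_lt_rpow hy hb)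
  · have superlevel_eq_empty (u : ℝ → ℝ≥0∞) (hu : ⨆ x, u x = 1) : {x | t < u x} = ∅ :=
      Set.eq_empty_of_forall_notMem fun x hx =>
        (hx.trans_le ((le_iSup u x).trans hu.le)).not_ge ht
    simp [superlevel_eq_empty f hf₁, superlevel_eq_empty g hg₁]

lemma add_mul_lintegral_le_of_iSup_eq_one (hf : Measurable f) (hg : Measurable g)
    (hh : Measurable h) (hf₁ : ⨆ x, f x = 1) (hg₁ : ⨆ x, g x = 1) (ha : 0 < a) (hb : 0 < b)
    (hab : a + b = 1) (H : ∀ x y, f x ^ a * g y ^ b ≤ h (a * x + b * y)) :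
    ENNReal.ofReal a * (∫⁻ x, f x) + ENNReal.ofReal b * (∫⁻ x, g x) ≤ ∫⁻ x, h x := by
  have hf_le (x) : f x ≤ 1 := (le_iSup f x).trans hf₁.le
  have hg_le (x) : g x ≤ 1 := (le_iSup g x).trans hg₁.le
  have hH : ∀ x y, f x ^ a * g y ^ b ≤ min (h (a * x + b * y)) 1 := fun x y =>
    le_min (H x y) (mul_le_one' (ENNReal.rpow_le_one (hf_le x) ha.le)
      (ENNReal.rpow_le_one (hg_le y) hb.le))
  refine le_trans ?_ (lintegral_mono fun x => min_le_left (h x) 1)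
  rw [lintegral_eq_lintegral_measure_ofReal_lt _ hf
      fun x => ne_top_of_le_ne_top one_ne_top (hf_le x),
    lintegral_eq_lintegral_measure_ofReal_lt _ hg
      fun x => ne_top_of_le_ne_top one_ne_top (hg_le x),
    lintegral_eq_lintegral_measure_ofReal_lt _ (hh.min measurable_const)
      fun x => ne_top_of_le_ne_top one_ne_top (min_le_right (h x) 1),
    ← lintegral_const_mul _ (measurable_measure_ofReal_lt _ _),
    ← lintegral_const_mul _ (measurable_measure_ofReal_lt _ _),
    ← lintegral_add_left ((measurable_measure_ofReal_lt _ _).const_mul _)]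
  refine setLIntegral_mono (measurable_measure_ofReal_lt _ _) fun t ht => ?_
  exact add_mul_volume_superlevel_le hf hg hf₁ hg₁ ha hb hab hH (ENNReal.ofReal_ne_zero_iff.2 ht)

end Real

lemma rpow_mul_rpow_le_add_mul {a b : ℝ} (ha : 0 < a) (hb : 0 < b) (hab : a + b = 1)
    (x y : ℝ≥0∞) : x ^ a * y ^ b ≤ ENNReal.ofReal a * x + ENNReal.ofReal b * y := by
  have ha₀ : ENNReal.ofReal a ≠ 0 := ENNReal.ofReal_ne_zero_iff.2 ha
  have hb₀ : ENNReal.ofReal b ≠ 0 := ENNReal.ofReal_ne_zero_iff.2 hb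
  induction x with
  | top => simp [ENNReal.mul_top ha₀]
  | coe x =>
  induction y with
  | top => simp [ENNReal.mul_top hb₀]
  | coe y =>
  have amgm := NNReal.geom_mean_le_arith_mean2_weighted a.toNNReal b.toNNReal x y
    (by rw [← Real.toNNReal_add ha.le hb.le, hab, Real.toNNReal_one])
  rw [Real.coe_toNNReal _ ha.le, Real.coe_toNNReal _ hb.le] at amgm
  rw [← ENNReal.coe_rpow_of_nonneg _ ha.le, ← ENNReal.coe_rpow_of_nonneg _ hb.le,
    ENNReal.ofReal, ENNReal.ofReal]
  exact_mod_cast amgm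

/-- The measure `κ` satisfies the Prékopa–Leindler inequality. Only bounded `f` and `g` are
considered, which is all that is needed to show that noise preserves log-concavity. -/
def PrekopaLeindler {X : Type*} [AddCommGroup X] [Module ℝ X] [MeasurableSpace X]
    (κ : Measure X) : Prop :=
  ∀ (a b : ℝ), 0 < a → 0 < b → a + b = 1 → ∀ f g h : X → ℝ≥0∞, Measurable f → Measurable g →
    Measurable h → (∃ M : NNReal, ∀ x, f x ≤ M ∧ g x ≤ M) →
    (∀ x y, f x ^ a * g y ^ b ≤ h (a • x + b • y)) →
    (∫⁻ x, f x ∂κ) ^ a * (∫⁻ x, g x ∂κ) ^ b ≤ ∫⁻ x, h x ∂κ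

lemma prekopaLeindler_volume_real : PrekopaLeindler (volume : Measure ℝ) := by
  rintro a b ha hb hab f g h hf hg hh ⟨M, hM⟩ H
  let F := ⨆ x, f x
  let G := ⨆ x, g x
  have hF_top : F ≠ ⊤ := ne_top_of_le_ne_top coe_ne_top (iSup_le fun x => (hM x).1)
  have hG_top : G ≠ ⊤ := ne_top_of_le_ne_top coe_ne_top (iSup_le fun x => (hM x).2)
  rcases eq_or_ne F 0 with hF | hF
  · simp [ENNReal.iSup_eq_zero.1 hF, ha]
  rcases eq_or_ne G 0 with hG | hG
  · simp [ENNReal.iSup_eq_zero.1 hG, hb]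
  have hFa : F ^ a ≠ 0 := (ENNReal.rpow_pos hF.bot_lt hF_top).ne'
  have hGb : G ^ b ≠ 0 := (ENNReal.rpow_pos hG.bot_lt hG_top).ne'
  have hFa_top : F ^ a ≠ ⊤ := ENNReal.rpow_ne_top_of_nonneg ha.le hF_top
  have hGb_top : G ^ b ≠ ⊤ := ENNReal.rpow_ne_top_of_nonneg hb.le hG_top
  have div_rpow_mul (u v : ℝ≥0∞) :
      (u / F) ^ a * (v / G) ^ b = u ^ a * v ^ b / (F ^ a * G ^ b) := by
    rw [ENNReal.div_rpow_of_nonneg _ _ ha.le, ENNReal.div_rpow_of_nonneg _ _ hb.le,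
      ← ENNReal.mul_div_mul_comm (Or.inl hFa) (Or.inl hFa_top)]
  have lintegral_div (u : ℝ → ℝ≥0∞) (hu : Measurable u) (c : ℝ≥0∞) :
      ∫⁻ x, u x / c = (∫⁻ x, u x) / c := by
    simp only [div_eq_mul_inv, lintegral_mul_const _ hu]
  have hnormalized : (∫⁻ x, f x / F) ^ a * (∫⁻ x, g x / G) ^ b
      ≤ ∫⁻ x, h x / (F ^ a * G ^ b) :=
    (rpow_mul_rpow_le_add_mul ha hb hab _ _).trans <|
      add_mul_lintegral_le_of_iSup_eq_one (hf.div_const F) (hg.div_const G) (hh.div_const _)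
        (by rw [← ENNReal.iSup_div, ENNReal.div_self hF hF_top])
        (by rw [← ENNReal.iSup_div, ENNReal.div_self hG hG_top]) ha hb hab fun x y => by
          rw [div_rpow_mul]
          exact ENNReal.div_le_div_right (H x y) _
  rwa [lintegral_div f hf, lintegral_div g hg, lintegral_div h hh, div_rpow_mul,
    ENNReal.div_le_iff (mul_ne_zero hFa hGb) (ENNReal.mul_ne_top hFa_top hGb_top),
    ENNReal.div_mul_cancel (mul_ne_zero hFa hGb) (ENNReal.mul_ne_top hFa_top hGb_top)]
    at hnormalized

variable {X Y : Type*} [AddCommGroup X] [Module ℝ X] [MeasurableSpace X] [AddCommGroup Y]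
  [Module ℝ Y] [MeasurableSpace Y] {κ : Measure X}

lemma PrekopaLeindler.withDensity (hκ : PrekopaLeindler κ) {ρ : X → ℝ≥0∞} (hρ : Measurable ρ)
    {R : NNReal} (hR : ∀ x, ρ x ≤ R)
    (hlc : ∀ a b : ℝ, 0 < a → 0 < b → a + b = 1 → ∀ x y,
      ρ x ^ a * ρ y ^ b ≤ ρ (a • x + b • y)) :
    PrekopaLeindler (κ.withDensity ρ) := by
  rintro a b ha hb hab f g h hf hg hh ⟨M, hM⟩ H
  simp only [lintegral_withDensity_eq_lintegral_mul _ hρ, hf, hg, hh]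
  refine hκ a b ha hb hab _ _ _ (hρ.mul hf) (hρ.mul hg) (hρ.mul hh) ⟨R * M, fun x => ?_⟩
    fun x y => ?_
  · simp only [Pi.mul_apply, ENNReal.coe_mul]
    exact ⟨mul_le_mul' (hR x) (hM x).1, mul_le_mul' (hR x) (hM x).2⟩
  · simp only [Pi.mul_apply]
    rw [ENNReal.mul_rpow_of_nonneg _ _ ha.le, ENNReal.mul_rpow_of_nonneg _ _ hb.le,
      mul_mul_mul_comm]
    exact mul_le_mul' (hlc a b ha hb hab x y) (H x y)

lemma PrekopaLeindler.prod {η : Measure Y} [IsProbabilityMeasure η]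
    (hκ : PrekopaLeindler κ) (hη : PrekopaLeindler η) : PrekopaLeindler (κ.prod η) := by
  rintro a b ha hb hab f g h hf hg hh ⟨M, hM⟩ H
  rw [lintegral_prod _ hf.aemeasurable, lintegral_prod _ hg.aemeasurable,
    lintegral_prod _ hh.aemeasurable]
  refine hκ a b ha hb hab _ _ _ hf.lintegral_prod_right' hg.lintegral_prod_right'
    hh.lintegral_prod_right' ⟨M, fun x => ⟨?_, ?_⟩⟩ fun x y => ?_
  · exact (lintegral_mono fun y => (hM (x, y)).1).trans (by simp)
  · exact (lintegral_mono fun y => (hM (x, y)).2).trans (by simp)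
  · exact hη a b ha hb hab _ _ _ (hf.comp measurable_prodMk_left)
      (hg.comp measurable_prodMk_left) (hh.comp measurable_prodMk_left)
      ⟨M, fun z => ⟨(hM _).1, (hM _).2⟩⟩ fun z w => H (x, z) (y, w)

lemma PrekopaLeindler.map (hκ : PrekopaLeindler κ) (T : X →ₗ[ℝ] Y) (hT : Measurable T) :
    PrekopaLeindler (κ.map T) := by
  rintro a b ha hb hab f g h hf hg hh ⟨M, hM⟩ H
  rw [lintegral_map hf hT, lintegral_map hg hT, lintegral_map hh hT]
  refine hκ a b ha hb hab _ _ _ (hf.comp hT) (hg.comp hT) (hh.comp hT)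
    ⟨M, fun x => hM (T x)⟩ fun x y => ?_
  rw [map_add, map_smul, map_smul]
  exact H _ _

lemma gaussianPDF_std_rpow_mul_le {a b : ℝ} (ha : 0 < a) (hb : 0 < b) (hab : a + b = 1)
    (x y : ℝ) :
    gaussianPDF 0 1 x ^ a * gaussianPDF 0 1 y ^ b ≤ gaussianPDF 0 1 (a * x + b * y) := by
  have hc : 0 < (√(2 * Real.pi))⁻¹ := by positivity
  simp only [gaussianPDF, gaussianPDFReal, sub_zero, NNReal.coe_one, mul_one]
  rw [ENNReal.ofReal_rpow_of_pos (by positivity), ENNReal.ofReal_rpow_of_pos (by positivity),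
    ← ENNReal.ofReal_mul (by positivity)]
  refine ENNReal.ofReal_le_ofReal ?_
  rw [Real.mul_rpow hc.le (Real.exp_pos _).le, Real.mul_rpow hc.le (Real.exp_pos _).le,
    mul_mul_mul_comm, ← Real.rpow_add hc, hab, Real.rpow_one, ← Real.exp_mul, ← Real.exp_mul,
    ← Real.exp_add]
  gcongr
  obtain rfl : b = 1 - a := by linarith
  nlinarith [mul_nonneg (mul_nonneg ha.le hb.le) (sq_nonneg (x - y))]

lemma prekopaLeindler_gaussianReal : PrekopaLeindler (gaussianReal 0 1) := by
  rw [gaussianReal_of_var_ne_zero _ one_ne_zero]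
  refine prekopaLeindler_volume_real.withDensity (measurable_gaussianPDF 0 1)
    (R := (√(2 * Real.pi))⁻¹.toNNReal) (fun x => ENNReal.ofReal_le_ofReal ?_)
    fun a b ha hb hab x y => gaussianPDF_std_rpow_mul_le ha hb hab x y
  simp only [gaussianPDFReal, sub_zero, NNReal.coe_one, mul_one]
  exact mul_le_of_le_one_right (by positivity) (Real.exp_le_one_iff.2 (by nlinarith [sq_nonneg x]))

lemma prekopaLeindler_pi_gaussianReal (n : ℕ) :
    PrekopaLeindler (Measure.pi fun _ : Fin n => gaussianReal 0 1) := by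
  induction n with
  | zero =>
    rintro a b - - - f g h - - - - H
    rw [Measure.pi_of_empty _ (fun i : Fin 0 => i.elim0), lintegral_dirac, lintegral_dirac,
      lintegral_dirac]
    convert H _ _
  | succ n ih =>
    have hcons := (measurePreserving_piFinSuccAbove
      (fun _ : Fin (n + 1) => gaussianReal 0 1) 0).symm
    rw [← hcons.map_eq]
    have hlin : ⇑(MeasurableEquiv.piFinSuccAbove (fun _ : Fin (n + 1) => ℝ) 0).symm
        = (Fin.consLinearEquiv ℝ fun _ : Fin (n + 1) => ℝ).toLinearMap := by
      ext x i
      refine Fin.cases ?_ (fun j => ?_) i <;> simp [MeasurableEquiv.piFinSuccAbove]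
    rw [hlin]
    exact (prekopaLeindler_gaussianReal.prod ih).map _ (hlin ▸ hcons.measurable)

theorem prekopaLeindler_stdGaussian (n : ℕ) :
    PrekopaLeindler (stdGaussian (EuclideanSpace ℝ (Fin n))) := by
  rw [← map_pi_eq_stdGaussian]
  exact (prekopaLeindler_pi_gaussianReal n).map
    (WithLp.linearEquiv 2 ℝ (Fin n → ℝ)).symm.toLinearMap (by fun_prop)

end PrekopaLeindler

/-! ### Relative bounds for the first three derivatives -/

section RelDerivBound

variable {X Y W : Type*} [NormedAddCommGroup X] [NormedSpace ℝ X] [NormedAddCommGroup Y]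
  [NormedSpace ℝ Y] [NormedAddCommGroup W] [NormedSpace ℝ W]

/-- The derivatives of `f` of orders `1`, `2` and `3` are bounded by `A * f`. For positive `f`
this is, up to the value of `A`, a bound on the first three derivatives of `log f`. -/
def RelDerivBound (A : ℝ) (f : X → ℝ) : Prop :=
  ∀ i : ℕ, 1 ≤ i → i ≤ 3 → ∀ x, ‖iteratedFDeriv ℝ i f x‖ ≤ A * f x

lemma RelDerivBound.mono {A B : ℝ} {f : X → ℝ} (hf : RelDerivBound A f) (hAB : A ≤ B)
    (hf₀ : ∀ x, 0 ≤ f x) : RelDerivBound B f := fun i h1 h3 x =>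
  (hf i h1 h3 x).trans (mul_le_mul_of_nonneg_right hAB (hf₀ x))

/-- A constant bounding the first three derivatives of `log f` in terms of `RelDerivBound`;
the factor `6 = 3!` comes from the Faà di Bruno formula. -/
noncomputable def logDerivConst : ℝ :=
  6 * ∑ i ∈ Finset.range 4, ‖iteratedFDerivWithin ℝ i Real.log (Set.Ioi 0) 1‖

/-- A constant turning bounds on the first three derivatives of `w` into a `RelDerivBound` for
`exp w`; the factor `6 = 3!` comes from the Faà di Bruno formula. -/
noncomputable def expDerivConst : ℝ := 6 * ∑ i ∈ Finset.range 4, ‖iteratedFDeriv ℝ i Real.exp 0‖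

lemma logDerivConst_nonneg : 0 ≤ logDerivConst := by
  unfold logDerivConst
  positivity

lemma factorial_le_six {i : ℕ} (hi : i ≤ 3) : (i.factorial : ℝ) ≤ 6 := by
  exact_mod_cast Nat.factorial_le hi

lemma cast_le_three {i : ℕ} (hi : i ≤ 3) : (i : WithTop ℕ∞) ≤ 3 := by exact_mod_cast hi

lemma iteratedFDeriv_add_const_of_ne_zero {f : X → W} {x : X} {i : ℕ} (hf : ContDiffAt ℝ i f x)
    (c : W) (hi : i ≠ 0) :
    iteratedFDeriv ℝ i (fun y => f y + c) x = iteratedFDeriv ℝ i f x := by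
  have hadd := iteratedFDeriv_add_apply (g := fun _ : X => c) hf contDiffAt_const
  rw [iteratedFDeriv_const_of_ne hi] at hadd
  exact hadd.trans (add_zero _)

lemma norm_iteratedFDeriv_const_mul {f : X → ℝ} {x : X} {i : ℕ} (hf : ContDiffAt ℝ i f x)
    (c : ℝ) : ‖iteratedFDeriv ℝ i (fun y => c * f y) x‖ = |c| * ‖iteratedFDeriv ℝ i f x‖ := by
  rw [← Real.norm_eq_abs, ← norm_smul, ← iteratedFDeriv_const_smul_apply hf]
  rfl

-- Dividing `f` by `f x` moves the point at which `log` is differentiated to `1`.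
lemma norm_iteratedFDeriv_log_le {A : ℝ} (hA : 1 ≤ A) {f : X → ℝ} (hf : ContDiff ℝ 3 f)
    (hf₀ : ∀ x, 0 < f x) (hrel : RelDerivBound A f) {i : ℕ} (h1 : 1 ≤ i) (h3 : i ≤ 3) (x : X) :
    ‖iteratedFDeriv ℝ i (fun y => Real.log (f y)) x‖ ≤ logDerivConst * A ^ 3 := by
  let c := f x
  have hc : 0 < c := hf₀ x
  let g : X → ℝ := fun y => c⁻¹ * f y
  have hg : ContDiff ℝ 3 g := contDiff_const.mul hf
  have hg₀ (y) : 0 < g y := mul_pos (inv_pos.2 hc) (hf₀ y)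
  have hgx : g x = 1 := inv_mul_cancel₀ hc.ne'
  have hlog_g : ContDiff ℝ 3 fun y => Real.log (g y) := hg.log fun y => (hg₀ y).ne'
  have hlog_f : (fun y => Real.log (f y)) = fun y => Real.log (g y) + Real.log c := by
    funext y
    rw [Real.log_mul (inv_pos.2 hc).ne' (hf₀ y).ne', Real.log_inv]
    ring
  have hlog : ContDiffOn ℝ 3 Real.log (Set.Ioi 0) := fun y hy =>
    (Real.contDiffAt_log.2 (ne_of_gt hy)).contDiffWithinAt
  rw [hlog_f, iteratedFDeriv_add_const_of_ne_zero
    (hlog_g.of_le (cast_le_three h3)).contDiffAt _ (by lia)]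
  refine (norm_iteratedFDeriv_comp_le' (D := A) (Set.range_subset_iff.2 hg₀)
    isOpen_Ioi.uniqueDiffOn hlog hg (cast_le_three h3) x (fun j hj => ?_)
    fun j hj1 hj => ?_).trans (?_ : _ * (∑ i ∈ Finset.range 4,
      ‖iteratedFDerivWithin ℝ i Real.log (Set.Ioi 0) 1‖) * _ ≤ _)
  · rw [hgx]
    exact Finset.single_le_sum (f := fun i => ‖iteratedFDerivWithin ℝ i Real.log (Set.Ioi 0) 1‖)
      (fun _ _ => norm_nonneg _) (Finset.mem_range.2 (by lia))
  · rw [norm_iteratedFDeriv_const_mul (hf.of_le (cast_le_three (hj.trans h3))).contDiffAt,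
      abs_of_pos (inv_pos.2 hc), inv_mul_le_iff₀ hc, mul_comm]
    exact (hrel j hj1 (hj.trans h3) x).trans
      (mul_le_mul_of_nonneg_right (le_self_pow₀ hA (by lia)) hc.le)
  · have := factorial_le_six h3
    unfold logDerivConst
    gcongr

lemma relDerivBound_exp {B : ℝ} (hB : 1 ≤ B) {w : X → ℝ} (hw : ContDiff ℝ 3 w)
    (hwB : ∀ i : ℕ, 1 ≤ i → i ≤ 3 → ∀ x, ‖iteratedFDeriv ℝ i w x‖ ≤ B) :
    RelDerivBound (expDerivConst * B ^ 3) (fun x => Real.exp (w x)) := by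
  intro i _ h3 x
  let g : X → ℝ := fun y => w y + -w x
  have hg : ContDiff ℝ 3 g := hw.add contDiff_const
  have hgx : g x = 0 := add_neg_cancel _
  have hexp : (fun y => Real.exp (w y)) = fun y => Real.exp (w x) * Real.exp (g y) := by
    funext y
    rw [← Real.exp_add, add_comm (w x), neg_add_cancel_right]
  rw [hexp, norm_iteratedFDeriv_const_mul (hg.exp.of_le (cast_le_three h3)).contDiffAt,
    abs_of_pos (Real.exp_pos _)]
  have hcomp : ‖iteratedFDeriv ℝ i (fun y => Real.exp (g y)) x‖ ≤ expDerivConst * B ^ 3 := by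
    refine (norm_iteratedFDeriv_comp_le (D := B) Real.contDiff_exp hg (cast_le_three h3) x
      (fun j hj => ?_) fun j hj1 hj => ?_).trans (?_ : _ * (∑ i ∈ Finset.range 4,
        ‖iteratedFDeriv ℝ i Real.exp 0‖) * _ ≤ _)
    · rw [hgx]
      exact Finset.single_le_sum (f := fun i => ‖iteratedFDeriv ℝ i Real.exp 0‖)
        (fun _ _ => norm_nonneg _) (Finset.mem_range.2 (by lia))
    · rw [iteratedFDeriv_add_const_of_ne_zero
        (hw.of_le (cast_le_three (hj.trans h3))).contDiffAt _ (by lia)]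
      exact (hwB j hj1 (hj.trans h3) x).trans (le_self_pow₀ hB (by lia))
    · have := factorial_le_six h3
      unfold expDerivConst
      gcongr
  simp only [hgx, Real.exp_zero, mul_one]
  rw [mul_comm (expDerivConst * B ^ 3)]
  gcongr

section Comp

variable {D : Y → X} {η : ℝ}

lemma fderiv_comp_eq_compL {G : X → W} {N : WithTop ℕ∞} (hN : N ≠ 0) (hG : ContDiff ℝ N G)
    (hD : ContDiff ℝ N D) : fderiv ℝ (fun x => G (D x)) =
      fun x => ContinuousLinearMap.compL ℝ Y X W (fderiv ℝ G (D x)) (fderiv ℝ D x) :=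
  funext fun x => fderiv_comp x (hG.differentiable hN (D x)) (hD.differentiable hN x)

lemma norm_iteratedFDeriv_one_comp_le {G : X → W} (hG : ContDiff ℝ 1 G) (hD : ContDiff ℝ 1 D)
    {q : ℝ} (hD1 : ∀ x, ‖fderiv ℝ D x‖ ≤ q) (x : Y) :
    ‖iteratedFDeriv ℝ 1 (fun x => G (D x)) x‖ ≤ ‖iteratedFDeriv ℝ 1 G (D x)‖ * q := by
  rw [norm_iteratedFDeriv_one, norm_iteratedFDeriv_one, fderiv_comp_eq_compL one_ne_zero hG hD]
  exact (ContinuousLinearMap.opNorm_comp_le _ _).trans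
    (mul_le_mul_of_nonneg_left (hD1 x) (norm_nonneg _))

lemma norm_iteratedFDeriv_two_comp_le {G : X → W} (hG : ContDiff ℝ 2 G) (hD : ContDiff ℝ 2 D)
    (hD1 : ∀ x, ‖fderiv ℝ D x‖ ≤ 1) (hD2 : ∀ x, ‖iteratedFDeriv ℝ 2 D x‖ ≤ η) (x : Y) :
    ‖iteratedFDeriv ℝ 2 (fun x => G (D x)) x‖ ≤
      ‖iteratedFDeriv ℝ 2 G (D x)‖ + η * ‖iteratedFDeriv ℝ 1 G (D x)‖ := by
  have hG' : ContDiff ℝ 1 (fderiv ℝ G) := hG.fderiv_right (by norm_num)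
  have hD' : ContDiff ℝ 1 (fderiv ℝ D) := hD.fderiv_right (by norm_num)
  have leibniz := (ContinuousLinearMap.compL ℝ Y X W).norm_iteratedFDeriv_le_of_bilinear_of_le_one
    (f := fun x => fderiv ℝ G (D x)) (hG'.comp (hD.of_le (by norm_num))) hD' x (n := 1) le_rfl
    (ContinuousLinearMap.norm_compL_le ℝ Y X W)
  have inner_one := norm_iteratedFDeriv_one_comp_le hG' (hD.of_le (by norm_num)) hD1 x
  rw [← norm_iteratedFDeriv_fderiv, fderiv_comp_eq_compL two_ne_zero hG hD]
  refine leibniz.trans ?_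
  simp only [Finset.sum_range_succ, Finset.sum_range_zero, norm_iteratedFDeriv_zero,
    norm_iteratedFDeriv_fderiv, norm_iteratedFDeriv_one, Nat.choose_zero_right, Nat.choose_self,
    Nat.sub_zero, Nat.reduceSub, Nat.cast_one, one_mul, mul_one, zero_add, Nat.reduceAdd]
    at inner_one ⊢
  linarith [mul_le_mul_of_nonneg_left (hD2 x) (norm_nonneg (fderiv ℝ G (D x))),
    mul_le_mul inner_one (hD1 x) (norm_nonneg _) (norm_nonneg _)]

lemma norm_iteratedFDeriv_three_comp_le {G : X → W} (hG : ContDiff ℝ 3 G) (hD : ContDiff ℝ 3 D)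
    (hD1 : ∀ x, ‖fderiv ℝ D x‖ ≤ 1) (hD2 : ∀ x, ‖iteratedFDeriv ℝ 2 D x‖ ≤ η)
    (hD3 : ∀ x, ‖iteratedFDeriv ℝ 3 D x‖ ≤ η) (x : Y) :
    ‖iteratedFDeriv ℝ 3 (fun x => G (D x)) x‖ ≤ ‖iteratedFDeriv ℝ 3 G (D x)‖
      + 3 * η * ‖iteratedFDeriv ℝ 2 G (D x)‖ + η * ‖iteratedFDeriv ℝ 1 G (D x)‖ := by
  have hG' : ContDiff ℝ 2 (fderiv ℝ G) := hG.fderiv_right (by norm_num)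
  have hD' : ContDiff ℝ 2 (fderiv ℝ D) := hD.fderiv_right (by norm_num)
  have hD₂ : ContDiff ℝ 2 D := hD.of_le (by norm_num)
  have leibniz := (ContinuousLinearMap.compL ℝ Y X W).norm_iteratedFDeriv_le_of_bilinear_of_le_one
    (f := fun x => fderiv ℝ G (D x)) (hG'.comp hD₂) hD' x (n := 2) le_rfl
    (ContinuousLinearMap.norm_compL_le ℝ Y X W)
  have inner_one := norm_iteratedFDeriv_one_comp_le (hG'.of_le (by norm_num))
    (hD.of_le (by norm_num)) hD1 x
  have inner_two := norm_iteratedFDeriv_two_comp_le hG' hD₂ hD1 hD2 x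
  rw [← norm_iteratedFDeriv_fderiv, fderiv_comp_eq_compL three_ne_zero hG hD]
  refine leibniz.trans ?_
  simp only [norm_iteratedFDeriv_fderiv, Nat.reduceAdd, mul_one] at inner_one inner_two
  simp only [Finset.sum_range_succ, Finset.sum_range_zero, norm_iteratedFDeriv_zero,
    norm_iteratedFDeriv_fderiv, Nat.choose_zero_right, Nat.choose_self, Nat.choose_one_right,
    Nat.sub_zero, Nat.cast_one, Nat.cast_ofNat, one_mul, zero_add, Nat.reduceAdd,
    Nat.reduceSub, norm_iteratedFDeriv_one D, ← norm_iteratedFDeriv_one G]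
  linarith [mul_le_mul_of_nonneg_left (hD3 x) (norm_nonneg (iteratedFDeriv ℝ 1 G (D x))),
    mul_le_mul inner_one (hD2 x) (norm_nonneg _) (norm_nonneg _),
    mul_le_mul inner_two (hD1 x) (norm_nonneg _) ((norm_nonneg _).trans inner_two)]

lemma RelDerivBound.comp {A : ℝ} {f : X → ℝ} (hrel : RelDerivBound A f) (hf : ContDiff ℝ 3 f)
    (hD : ContDiff ℝ 3 D) (hD1 : ∀ x, ‖fderiv ℝ D x‖ ≤ 1)
    (hD2 : ∀ x, ‖iteratedFDeriv ℝ 2 D x‖ ≤ η) (hD3 : ∀ x, ‖iteratedFDeriv ℝ 3 D x‖ ≤ η) :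
    RelDerivBound (A * (1 + 4 * η)) (fun x => f (D x)) := by
  intro i h1 h3 x
  have bound₁ := hrel 1 le_rfl (by norm_num) (D x)
  have bound₂ := hrel 2 (by norm_num) (by norm_num) (D x)
  have bound₃ := hrel 3 (by norm_num) le_rfl (D x)
  have hη : 0 ≤ η := (norm_nonneg _).trans (hD2 x)
  have hηAf : 0 ≤ η * (A * f (D x)) := mul_nonneg hη ((norm_nonneg _).trans bound₁)
  have hη₁ := mul_le_mul_of_nonneg_left bound₁ hη
  have hη₂ := mul_le_mul_of_nonneg_left bound₂ hη
  interval_cases i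
  · linarith [norm_iteratedFDeriv_one_comp_le (hf.of_le (by norm_num)) (hD.of_le (by norm_num))
      hD1 x]
  · linarith [norm_iteratedFDeriv_two_comp_le (hf.of_le (by norm_num)) (hD.of_le (by norm_num))
      hD1 hD2 x]
  · linarith [norm_iteratedFDeriv_three_comp_le hf hD hD1 hD2 hD3 x]

end Comp

end RelDerivBound

/-! ### Averaging over noise -/

/-- The function `f ≥ 0` is log-concave. -/
def LogConcave {X : Type*} [AddCommGroup X] [Module ℝ X] (f : X → ℝ) : Prop :=
  ∀ a b : ℝ, 0 < a → 0 < b → a + b = 1 → ∀ x y, f x ^ a * f y ^ b ≤ f (a • x + b • y)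

/-- The average of `G` over the points `x + c z`, where `z` is distributed according to `κ`. -/
noncomputable def noise {X W : Type*} [AddCommGroup X] [Module ℝ X] [MeasurableSpace X]
    [NormedAddCommGroup W] [NormedSpace ℝ W] (κ : Measure X) (c : ℝ) (G : X → W) (x : X) : W :=
  ∫ z, G (x + c • z) ∂κ

section Noise

variable {X : Type*} [NormedAddCommGroup X] [NormedSpace ℝ X] [MeasurableSpace X]
  {κ : Measure X} {c : ℝ} {W : Type*} [NormedAddCommGroup W]

lemma norm_noise_le_noise_norm [NormedSpace ℝ W] (G : X → W) (x : X) :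
    ‖noise κ c G x‖ ≤ noise κ c (fun y => ‖G y‖) x :=
  norm_integral_le_integral_norm _

lemma norm_noise_le [NormedSpace ℝ W] [IsProbabilityMeasure κ] {G : X → W} {K : ℝ}
    (hK : ∀ x, ‖G x‖ ≤ K) (x : X) : ‖noise κ c G x‖ ≤ K :=
  (norm_integral_le_of_norm_le_const (Eventually.of_forall fun z => hK (x + c • z))).trans_eq
    (by simp)

variable [BorelSpace X] [SecondCountableTopology X]

lemma aestronglyMeasurable_noise {G : X → W} (hG : Continuous G) (x : X) :
    AEStronglyMeasurable (fun z => G (x + c • z)) κ :=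
  (by fun_prop : Continuous fun z => G (x + c • z)).aestronglyMeasurable

variable [IsProbabilityMeasure κ]

lemma integrable_noise {G : X → W} (hG : Continuous G) {K : ℝ} (hK : ∀ x, ‖G x‖ ≤ K) (x : X) :
    Integrable (fun z => G (x + c • z)) κ :=
  .of_bound (aestronglyMeasurable_noise hG x) K (Eventually.of_forall fun _ => hK _)

variable [NormedSpace ℝ W]

lemma noise_mono {f g : X → ℝ} (hf : Continuous f) (hg : Continuous g) {K K' : ℝ}
    (hK : ∀ x, ‖f x‖ ≤ K) (hK' : ∀ x, ‖g x‖ ≤ K') (h : ∀ x, f x ≤ g x) (x : X) :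
    noise κ c f x ≤ noise κ c g x :=
  integral_mono (integrable_noise hf hK x) (integrable_noise hg hK' x) fun _ => h _

lemma noise_pos {f : X → ℝ} (hf : Continuous f) (hf₀ : ∀ x, 0 < f x) {K : ℝ}
    (hK : ∀ x, ‖f x‖ ≤ K) (x : X) : 0 < noise κ c f x := by
  refine (integral_pos_iff_support_of_nonneg (fun z => (hf₀ _).le)
    (integrable_noise hf hK x)).2 ?_
  have hsupp : Function.support (fun z => f (x + c • z)) = Set.univ :=
    Set.eq_univ_of_forall fun z => (hf₀ _).ne'
  simp [hsupp]

lemma continuous_noise {G : X → W} (hG : Continuous G) {K : ℝ} (hK : ∀ x, ‖G x‖ ≤ K) :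
    Continuous (noise κ c G) :=
  continuous_of_dominated (bound := fun _ => K) (aestronglyMeasurable_noise hG)
    (fun x => Eventually.of_forall fun z => hK _) (integrable_const _)
    (Eventually.of_forall fun z => by fun_prop)

lemma hasFDerivAt_noise {G : X → W} (hG : ContDiff ℝ 1 G) {K K' : ℝ} (hK : ∀ x, ‖G x‖ ≤ K)
    (hK' : ∀ x, ‖fderiv ℝ G x‖ ≤ K') (x : X) :
    HasFDerivAt (noise κ c G) (noise κ c (fderiv ℝ G) x) x := by
  have hG' : Continuous (fderiv ℝ G) := hG.continuous_fderiv one_ne_zero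
  refine hasFDerivAt_integral_of_dominated_of_fderiv_le (s := Set.univ) (bound := fun _ => K')
    (F := fun x z => G (x + c • z)) (F' := fun x z => fderiv ℝ G (x + c • z)) univ_mem
    (Eventually.of_forall fun y => aestronglyMeasurable_noise hG.continuous y)
    (integrable_noise hG.continuous hK x) (aestronglyMeasurable_noise hG' x)
    (Eventually.of_forall fun z y _ => hK' _) (integrable_const _)
    (Eventually.of_forall fun z y _ => ?_)
  exact (hG.differentiable one_ne_zero _).hasFDerivAt.comp y ((hasFDerivAt_id y).add_const _)

lemma norm_fderiv_noise_le {G : X → W} (hG : ContDiff ℝ 1 G) {K K' : ℝ} (hK : ∀ x, ‖G x‖ ≤ K)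
    (hK' : ∀ x, ‖fderiv ℝ G x‖ ≤ K') (x : X) : ‖fderiv ℝ (noise κ c G) x‖ ≤ K' := by
  rw [(hasFDerivAt_noise hG hK hK' x).fderiv]
  exact norm_noise_le hK' x

lemma LogConcave.noise (hκ : PrekopaLeindler κ) {f : X → ℝ} (hlc : LogConcave f)
    (hf : Continuous f) (hf₀ : ∀ x, 0 ≤ f x) {K : ℝ} (hK : ∀ x, ‖f x‖ ≤ K) :
    LogConcave (noise κ c f) := by
  have hmeas (x) : Measurable fun z => ENNReal.ofReal (f (x + c • z)) :=
    (by fun_prop : Continuous fun z => f (x + c • z)).measurable.ennreal_ofReal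
  have hle (x) : ENNReal.ofReal (f x) ≤ K.toNNReal :=
    ENNReal.ofReal_le_ofReal ((Real.le_norm_self _).trans (hK x))
  have hnoise₀ (x) : 0 ≤ SpectralComparison.noise κ c f x := integral_nonneg fun z => hf₀ _
  have hlintegral (x) : ENNReal.ofReal (SpectralComparison.noise κ c f x)
      = ∫⁻ z, ENNReal.ofReal (f (x + c • z)) ∂κ :=
    ofReal_integral_eq_lintegral_ofReal (integrable_noise hf hK x)
      (Eventually.of_forall fun z => hf₀ _)
  intro a b ha hb hab x y
  rw [← ENNReal.ofReal_le_ofReal_iff (hnoise₀ _),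
    ENNReal.ofReal_mul (Real.rpow_nonneg (hnoise₀ _) _),
    ← ENNReal.ofReal_rpow_of_nonneg (hnoise₀ _) ha.le,
    ← ENNReal.ofReal_rpow_of_nonneg (hnoise₀ _) hb.le, hlintegral, hlintegral, hlintegral]
  refine hκ a b ha hb hab _ _ _ (hmeas x) (hmeas y) (hmeas _)
    ⟨K.toNNReal, fun z => ⟨hle _, hle _⟩⟩ fun z w => ?_
  rw [ENNReal.ofReal_rpow_of_nonneg (hf₀ _) ha.le, ENNReal.ofReal_rpow_of_nonneg (hf₀ _) hb.le,
    ← ENNReal.ofReal_mul (Real.rpow_nonneg (hf₀ _) _)]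
  refine ENNReal.ofReal_le_ofReal ((hlc a b ha hb hab _ _).trans_eq (congrArg f ?_))
  module

end Noise

section NoiseDeriv

universe u

lemma contDiff_noise_and_norm_iteratedFDeriv_noise_le {X : Type u} [NormedAddCommGroup X]
    [NormedSpace ℝ X] [MeasurableSpace X] [BorelSpace X] [SecondCountableTopology X]
    {κ : Measure X} [IsProbabilityMeasure κ] {c : ℝ} (k : ℕ) :
    ∀ {W : Type u} [NormedAddCommGroup W] [NormedSpace ℝ W] {G : X → W}, ContDiff ℝ k G →
      (∃ K, ∀ i ≤ k, ∀ x, ‖iteratedFDeriv ℝ i G x‖ ≤ K) →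
      ContDiff ℝ k (noise κ c G) ∧ ∀ i ≤ k, ∀ x, ‖iteratedFDeriv ℝ i (noise κ c G) x‖ ≤
        noise κ c (fun y => ‖iteratedFDeriv ℝ i G y‖) x := by
  induction k with
  | zero =>
    intro W _ _ G hG ⟨K, hK⟩
    have hGK (x) : ‖G x‖ ≤ K := norm_iteratedFDeriv_zero (𝕜 := ℝ) (f := G) ▸ hK 0 le_rfl x
    refine ⟨contDiff_zero.2 (continuous_noise hG.continuous hGK), fun i hi x => ?_⟩
    obtain rfl : i = 0 := by lia
    simp only [norm_iteratedFDeriv_zero]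
    exact norm_noise_le_noise_norm G x
  | succ k ih =>
    intro W _ _ G hG ⟨K, hK⟩
    have hGK (x) : ‖G x‖ ≤ K := norm_iteratedFDeriv_zero (𝕜 := ℝ) (f := G) ▸ hK 0 (by lia) x
    have hGK' (x) : ‖fderiv ℝ G x‖ ≤ K := norm_iteratedFDeriv_one (𝕜 := ℝ) G ▸ hK 1 (by lia) x
    have hderiv := hasFDerivAt_noise (κ := κ) (c := c)
      (hG.of_le (by push_cast; exact le_add_self)) hGK hGK'
    have hfderiv : fderiv ℝ (noise κ c G) = noise κ c (fderiv ℝ G) :=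
      funext fun x => (hderiv x).fderiv
    obtain ⟨ihContDiff, ihBound⟩ := ih (hG.fderiv_right (m := k) (by push_cast; exact le_rfl))
      ⟨K, fun i hi x => by rw [norm_iteratedFDeriv_fderiv]; exact hK (i + 1) (by lia) x⟩
    refine ⟨?_, fun i hi x => ?_⟩
    · push_cast
      refine contDiff_succ_iff_fderiv.2 ⟨fun x => (hderiv x).differentiableAt,
        fun h => absurd h (by simp), hfderiv ▸ ihContDiff⟩
    · rcases i with _ | i
      · simp only [norm_iteratedFDeriv_zero]
        exact norm_noise_le_noise_norm G x
      · simpa only [← hfderiv, norm_iteratedFDeriv_fderiv] using ihBound i (by lia) x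

lemma RelDerivBound.contDiff_noise_and_noise {X : Type} [NormedAddCommGroup X]
    [NormedSpace ℝ X] [MeasurableSpace X] [BorelSpace X] [SecondCountableTopology X]
    {κ : Measure X} [IsProbabilityMeasure κ] {c : ℝ} {f : X → ℝ} {A K : ℝ}
    (hrel : RelDerivBound A f) (hf : ContDiff ℝ 3 f) (hK : ∀ x, ‖f x‖ ≤ K) (hA : 0 ≤ A) :
    ContDiff ℝ 3 (noise κ c f) ∧ RelDerivBound A (noise κ c f) := by
  have hAf (x) : A * f x ≤ A * K :=
    mul_le_mul_of_nonneg_left ((Real.le_norm_self _).trans (hK x)) hA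
  have hK₀ : 0 ≤ K := (norm_nonneg _).trans (hK 0)
  obtain ⟨hcont, hbound⟩ := contDiff_noise_and_norm_iteratedFDeriv_noise_le (κ := κ) (c := c) 3
    hf ⟨K + A * K, fun i hi x => by
      rcases Nat.eq_zero_or_pos i with rfl | hi₀
      · rw [norm_iteratedFDeriv_zero]
        linarith [hK x, mul_nonneg hA hK₀]
      · linarith [hrel i hi₀ hi x, hAf x]⟩
  refine ⟨hcont, fun i h1 h3 x => (hbound i h3 x).trans ?_⟩
  have hmul : A * noise κ c f x = noise κ c (fun y => A * f y) x := (integral_const_mul _ _).symm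
  rw [hmul]
  refine noise_mono (hf.continuous_iteratedFDeriv (cast_le_three h3)).norm
    (by fun_prop) (K := A * K) (K' := A * K)
    (fun y => ?_) (fun y => ?_) (hrel i h1 h3) x
  · rw [norm_norm]
    exact (hrel i h1 h3 y).trans (hAf y)
  · rw [norm_mul, Real.norm_of_nonneg hA]
    exact mul_le_mul_of_nonneg_left (hK y) hA

end NoiseDeriv

/-! ### The drift step and unconditional log-concave functions -/

/-- Euclidean `n`-space. -/
abbrev E (n : ℕ) : Type := EuclideanSpace ℝ (Fin n)

/-- The standard Gaussian measure on `E n`. -/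
noncomputable abbrev γ (n : ℕ) : Measure (E n) := ProbabilityTheory.stdGaussian (E n)

/-- The properties required of the one-dimensional drift `b` of the Langevin diffusion
`dX = -b(X) dt + √2 dB` (acting coordinatewise): it is odd, increasing with slope between `δ`
and `β`, has bounded derivatives, and is concave on the positive half-line. Concavity is where
`p ≤ 2` enters: in the application `b` is a regularization of `x ↦ sign x * |x| ^ (p - 1)`. -/
structure IsDrift (b : ℝ → ℝ) (δ β : ℝ) : Prop where
  contDiff : ContDiff ℝ 3 b
  odd : ∀ x, b (-x) = -b x
  pos : 0 < δ
  le_deriv : ∀ x, δ ≤ deriv b x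
  deriv_le : ∀ x, deriv b x ≤ β
  norm_iteratedFDeriv_two_le : ∀ x, ‖iteratedFDeriv ℝ 2 b x‖ ≤ β
  norm_iteratedFDeriv_three_le : ∀ x, ‖iteratedFDeriv ℝ 3 b x‖ ≤ β
  concaveOn : ConcaveOn ℝ (Set.Ici 0) b

/-- The vector field on `E n` acting by `b` in each coordinate. -/
noncomputable def driftField {n : ℕ} (b : ℝ → ℝ) (x : E n) : E n :=
  WithLp.toLp 2 fun i => b (x i)

/-- The Euler step of size `h` along the vector field `-driftField b`. -/
noncomputable def driftStep {n : ℕ} (b : ℝ → ℝ) (h : ℝ) (x : E n) : E n := x + (-h) • driftField b x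

/-- The function `f` is invariant under all changes of signs of the coordinates. -/
def Unconditional {n : ℕ} {α : Type*} (f : E n → α) : Prop :=
  ∀ (x : E n) (ε : Fin n → ℝ), (∀ i, ε i = 1 ∨ ε i = -1) →
    f (WithLp.toLp 2 fun i => ε i * x i) = f x

lemma norm_proj_le_one {n : ℕ} (i : Fin n) : ‖(EuclideanSpace.proj i : E n →L[ℝ] ℝ)‖ ≤ 1 :=
  ContinuousLinearMap.opNorm_le_bound _ zero_le_one fun v => by
    rw [one_mul]
    exact PiLp.norm_apply_le v i

lemma norm_le_mul_norm_of_forall_apply {n : ℕ} {x y : E n} {C : ℝ} (hC : 0 ≤ C)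
    (h : ∀ i, ‖x i‖ ≤ C * ‖y i‖) : ‖x‖ ≤ C * ‖y‖ := by
  rw [EuclideanSpace.norm_eq, EuclideanSpace.norm_eq, ← Real.sqrt_sq hC,
    ← Real.sqrt_mul (sq_nonneg C), Finset.mul_sum]
  gcongr with i
  rw [← mul_pow]
  gcongr
  exact h i

lemma norm_iteratedFDeriv_comp_smul_le {X W : Type*} [NormedAddCommGroup X] [NormedSpace ℝ X]
    [NormedAddCommGroup W] [NormedSpace ℝ W] {g : ℝ → ℝ} {N : WithTop ℕ∞} (hg : ContDiff ℝ N g)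
    {L : X →L[ℝ] ℝ} (hL : ‖L‖ ≤ 1) {w : W} (hw : ‖w‖ ≤ 1) {k : ℕ} (hk : k ≤ N) {C : ℝ}
    (hC : ∀ t, ‖iteratedFDeriv ℝ k g t‖ ≤ C) (x : X) :
    ‖iteratedFDeriv ℝ k (fun y => g (L y) • w) x‖ ≤ C := by
  have hC₀ : 0 ≤ C := (norm_nonneg _).trans (hC 0)
  have hLk : ∏ _j : Fin k, ‖L‖ ≤ 1 := Finset.prod_le_one (fun _ _ => norm_nonneg _) fun _ _ => hL
  have hgL : ‖iteratedFDeriv ℝ k (g ∘ L) x‖ ≤ C * 1 := by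
    rw [L.iteratedFDeriv_comp_right hg _ hk]
    exact (ContinuousMultilinearMap.norm_compContinuousLinearMap_le _ _).trans
      (mul_le_mul (hC _) hLk (by positivity) hC₀)
  have hspan : ‖ContinuousLinearMap.toSpanSingleton ℝ w‖ ≤ 1 := by
    rwa [ContinuousLinearMap.norm_toSpanSingleton]
  have hcomp := (ContinuousLinearMap.toSpanSingleton ℝ w).norm_iteratedFDeriv_comp_left
    (hg.comp L.contDiff).contDiffAt hk (x := x)
  exact hcomp.trans ((mul_le_mul hspan hgL (norm_nonneg _) zero_le_one).trans_eq (by ring))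

section Drift

variable {n : ℕ} {b : ℝ → ℝ} {δ β : ℝ}

lemma driftField_apply (x : E n) (i : Fin n) : driftField b x i = b (x i) := rfl

lemma driftStep_apply (h : ℝ) (x : E n) (i : Fin n) : driftStep b h x i = x i - h * b (x i) := by
  simp [driftStep, driftField, sub_eq_add_neg]

namespace IsDrift

lemma map_zero (hb : IsDrift b δ β) : b 0 = 0 := by
  have := hb.odd 0
  rw [neg_zero] at this
  linarith

lemma differentiable (hb : IsDrift b δ β) : Differentiable ℝ b :=
  hb.contDiff.differentiable three_ne_zero

lemma upper_pos (hb : IsDrift b δ β) : 0 < β :=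
  hb.pos.trans_le ((hb.le_deriv 0).trans (hb.deriv_le 0))

lemma abs_le (hb : IsDrift b δ β) (x : ℝ) : |b x| ≤ β * |x| := by
  have := Convex.norm_image_sub_le_of_norm_deriv_le (f := b) (C := β) (s := Set.univ) (x := 0)
    (y := x) (fun x _ => hb.differentiable x) (fun x _ => by
      rw [Real.norm_of_nonneg (hb.pos.le.trans (hb.le_deriv x))]
      exact hb.deriv_le x) convex_univ trivial trivial
  simpa [hb.map_zero] using this

lemma contDiff_driftField (hb : IsDrift b δ β) : ContDiff ℝ 3 (driftField b : E n → E n) :=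
  contDiff_euclidean.2 fun _ => hb.contDiff.comp (contDiff_piLp_apply (p := 2))

lemma contDiff_driftStep (hb : IsDrift b δ β) (h : ℝ) : ContDiff ℝ 3 (driftStep b h : E n → E n) :=
  contDiff_id.add (hb.contDiff_driftField.const_smul _)

lemma fderiv_driftField_apply (hb : IsDrift b δ β) (x v : E n) (i : Fin n) :
    fderiv ℝ (driftField b) x v i = deriv b (x i) * v i := by
  have hcoord : HasFDerivAt (fun y : E n => driftField b y i)
      ((EuclideanSpace.proj i : E n →L[ℝ] ℝ) ∘L fderiv ℝ (driftField b) x) x :=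
    (EuclideanSpace.proj i : E n →L[ℝ] ℝ).hasFDerivAt.comp x
      (hb.contDiff_driftField.differentiable three_ne_zero x).hasFDerivAt
  have hb_coord : HasFDerivAt (fun y : E n => b (y i))
      (deriv b (x i) • (EuclideanSpace.proj i : E n →L[ℝ] ℝ)) x :=
    (hb.differentiable (x i)).hasDerivAt.comp_hasFDerivAt x
      (EuclideanSpace.proj i : E n →L[ℝ] ℝ).hasFDerivAt
  simpa using DFunLike.congr_fun (hcoord.unique hb_coord) v

lemma fderiv_driftStep_apply (hb : IsDrift b δ β) (h : ℝ) (x v : E n) :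
    fderiv ℝ (driftStep b h) x v = v + (-h) • fderiv ℝ (driftField b) x v := by
  have hfield := (hb.contDiff_driftField.differentiable three_ne_zero x).hasFDerivAt
  have hstep : HasFDerivAt (driftStep b h : E n → E n) _ x :=
    (hasFDerivAt_id x).add (hfield.const_smul (-h))
  rw [hstep.fderiv]
  rfl

lemma norm_driftField_le (hb : IsDrift b δ β) (x : E n) : ‖driftField b x‖ ≤ β * ‖x‖ :=
  norm_le_mul_norm_of_forall_apply hb.upper_pos.le fun i => hb.abs_le (x i)

lemma norm_fderiv_driftStep_le (hb : IsDrift b δ β) {h : ℝ} (hh : 0 ≤ h) (hβ : h * β ≤ 1)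
    (x : E n) : ‖fderiv ℝ (driftStep b h) x‖ ≤ 1 - h * δ := by
  have lower (t) := mul_le_mul_of_nonneg_left (hb.le_deriv t) hh
  have upper (t) := mul_le_mul_of_nonneg_left (hb.deriv_le t) hh
  have hδ : 0 ≤ 1 - h * δ := by linarith [lower 0, upper 0]
  refine ContinuousLinearMap.opNorm_le_bound _ hδ fun v =>
    norm_le_mul_norm_of_forall_apply hδ fun i => ?_
  have hcoord : fderiv ℝ (driftStep b h) x v i = (1 - h * deriv b (x i)) * v i := by
    simp only [hb.fderiv_driftStep_apply, PiLp.add_apply, PiLp.smul_apply,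
      hb.fderiv_driftField_apply, smul_eq_mul]
    ring
  rw [hcoord, norm_mul, Real.norm_of_nonneg (by linarith [upper (x i)])]
  gcongr
  exact hb.le_deriv _

lemma norm_iteratedFDeriv_driftField_le (hb : IsDrift b δ β) {k : ℕ} (hk : k = 2 ∨ k = 3)
    (x : E n) : ‖iteratedFDeriv ℝ k (driftField b) x‖ ≤ n * β := by
  have hk3 : (k : WithTop ℕ∞) ≤ 3 := cast_le_three (by lia)
  have hfield : (driftField b : E n → E n) = fun x => ∑ i : Fin n,
      b ((EuclideanSpace.proj i : E n →L[ℝ] ℝ) x) • (EuclideanSpace.single i (1 : ℝ) : E n) := by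
    funext x
    ext j
    simp [driftField_apply, Pi.single_apply]
  have hb_coord (i : Fin n) : ContDiff ℝ k fun x => b ((EuclideanSpace.proj i : E n →L[ℝ] ℝ) x) •
      (EuclideanSpace.single i (1 : ℝ) : E n) :=
    ((hb.contDiff.of_le hk3).comp (ContinuousLinearMap.contDiff _)).smul contDiff_const
  have hbound (t) : ‖iteratedFDeriv ℝ k b t‖ ≤ β := by
    rcases hk with rfl | rfl
    exacts [hb.norm_iteratedFDeriv_two_le t, hb.norm_iteratedFDeriv_three_le t]
  rw [hfield, iteratedFDeriv_fun_sum_apply fun i _ => (hb_coord i).contDiffAt]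
  refine (norm_sum_le_of_le _ fun i _ => norm_iteratedFDeriv_comp_smul_le hb.contDiff
    (norm_proj_le_one i) (by simp) hk3 hbound x).trans_eq ?_
  simp

lemma norm_iteratedFDeriv_driftStep_le (hb : IsDrift b δ β) {h : ℝ} (hh : 0 ≤ h)
    {k : ℕ} (hk : k = 2 ∨ k = 3) (x : E n) :
    ‖iteratedFDeriv ℝ k (driftStep b h) x‖ ≤ h * (n * β) := by
  have hfield : ContDiffAt ℝ k (driftField b : E n → E n) x :=
    (hb.contDiff_driftField.of_le (cast_le_three (by lia))).contDiffAt
  have hid : iteratedFDeriv ℝ k (id : E n → E n) x = 0 := by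
    obtain ⟨m, rfl⟩ : ∃ m, k = m + 2 := ⟨k - 2, by lia⟩
    have hfderiv : fderiv ℝ (id : E n → E n) = fun _ => .id ℝ _ := funext fun _ => fderiv_id
    rw [← norm_eq_zero, ← norm_iteratedFDeriv_fderiv, hfderiv,
      iteratedFDeriv_const_of_ne (by lia), Pi.zero_apply, norm_zero]
  have hstep : (driftStep b h : E n → E n) = id + (-h) • driftField b := rfl
  rw [hstep, iteratedFDeriv_add_apply (g := (-h) • driftField b) contDiffAt_id
      (hfield.const_smul (-h)), hid, zero_add,
    iteratedFDeriv_const_smul_apply hfield, norm_smul, norm_neg, Real.norm_of_nonneg hh]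
  exact mul_le_mul_of_nonneg_left (hb.norm_iteratedFDeriv_driftField_le hk x) hh

-- `x ↦ |x - h * b x|` is convex: it is the convex increasing function `s - h * b s` of `s = |x|`.
lemma abs_sub_mul_le (hb : IsDrift b δ β) {h : ℝ} (hh : 0 ≤ h) (hβ : h * β ≤ 1) {a c : ℝ}
    (ha : 0 ≤ a) (hc : 0 ≤ c) (hac : a + c = 1) (s t : ℝ) :
    |(a * s + c * t) - h * b (a * s + c * t)| ≤ a * |s - h * b s| + c * |t - h * b t| := by
  let d : ℝ → ℝ := fun x => x - h * b x
  have hderiv (x) : HasDerivAt d (1 - h * deriv b x) x :=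
    (hasDerivAt_id x).sub ((hb.differentiable x).hasDerivAt.const_mul h)
  have hmono : Monotone d := monotone_of_deriv_nonneg
    (fun x => (hderiv x).differentiableAt) fun x => by
      rw [(hderiv x).deriv]
      linarith [mul_le_mul_of_nonneg_left (hb.deriv_le x) hh]
  have hzero : d 0 = 0 := by simp [d, hb.map_zero]
  have hodd (x) : d (-x) = -d x := by
    simp only [d, hb.odd]
    ring
  have habs (x) : |d x| = d |x| := by
    rcases le_total 0 x with hx | hx
    · rw [abs_of_nonneg hx, abs_of_nonneg (hzero ▸ hmono hx)]
    · rw [abs_of_nonpos hx, hodd, abs_of_nonpos (hzero ▸ hmono hx)]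
  have hconv : |a * s + c * t| ≤ a * |s| + c * |t| := (abs_add_le _ _).trans_eq (by
    rw [abs_mul, abs_mul, abs_of_nonneg ha, abs_of_nonneg hc])
  have hconc := hb.concaveOn.2 (x := |s|) (abs_nonneg s) (y := |t|) (abs_nonneg t) ha hc hac
  simp only [smul_eq_mul] at hconc
  calc |d (a * s + c * t)| = d |a * s + c * t| := habs _
    _ ≤ d (a * |s| + c * |t|) := hmono hconv
    _ ≤ a * d |s| + c * d |t| := by
        simp only [d]
        linarith [mul_le_mul_of_nonneg_left hconc hh]
    _ = a * |d s| + c * |d t| := by rw [habs, habs]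

end IsDrift

lemma Unconditional.comp_driftStep {α : Type*} {f : E n → α} (hf : Unconditional f)
    (hb : IsDrift b δ β) (h : ℝ) : Unconditional fun x => f (driftStep b h x) := by
  intro x ε hε
  change f (driftStep b h _) = f (driftStep b h x)
  rw [← hf (driftStep b h x) ε hε]
  congr 1
  ext i
  simp only [driftStep_apply]
  rcases hε i with hi | hi <;> rw [hi]
  · simp
  · simp only [neg_one_mul, hb.odd]
    ring

/-- The isometry multiplying the `i`-th coordinate by `ε i`, for signs `ε i = 1` or `ε i = -1`. -/
noncomputable def signIso (ε : Fin n → ℝ) : E n ≃ₗᵢ[ℝ] E n :=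
  LinearIsometryEquiv.piLpCongrRight 2 fun i =>
    if ε i = 1 then LinearIsometryEquiv.refl ℝ ℝ else LinearIsometryEquiv.neg ℝ

lemma signIso_apply {ε : Fin n → ℝ} (hε : ∀ i, ε i = 1 ∨ ε i = -1) (x : E n) :
    signIso ε x = WithLp.toLp 2 fun i => ε i * x i := by
  ext i
  rcases hε i with hi | hi
  · simp [signIso, hi]
  · simp [signIso, hi, (by norm_num : (-1 : ℝ) ≠ 1)]

lemma Unconditional.noise {f : E n → ℝ} (hf : Unconditional f) (hcont : Continuous f) (c : ℝ) :
    Unconditional (noise (γ n) c f) := by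
  intro x ε hε
  have hcont' : Continuous fun z => f (signIso ε x + c • z) := by fun_prop
  calc SpectralComparison.noise (γ n) c f (WithLp.toLp 2 fun i => ε i * x i)
      = ∫ z, f (signIso ε x + c • z) ∂(γ n).map (signIso ε) := by
        rw [ProbabilityTheory.stdGaussian_map (signIso ε), signIso_apply hε]
        rfl
    _ = ∫ z, f (signIso ε (x + c • z)) ∂γ n := by
        rw [integral_map (signIso ε).continuous.aemeasurable hcont'.aestronglyMeasurable]
        simp only [map_add, map_smul]
    _ = SpectralComparison.noise (γ n) c f x := by
        simp only [signIso_apply hε, hf _ ε hε]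
        rfl

end Drift

section LogConcave

variable {n : ℕ} {f : E n → ℝ}

lemma LogConcave.le_of_eq {X : Type*} [AddCommGroup X] [Module ℝ X] {f : X → ℝ}
    (hlc : LogConcave f) (hf₀ : ∀ x, 0 < f x) {x y : X} (hxy : f x = f y) {a b : ℝ}
    (ha : 0 ≤ a) (hb : 0 ≤ b) (hab : a + b = 1) : f x ≤ f (a • x + b • y) := by
  rcases ha.eq_or_lt with rfl | ha
  · obtain rfl : b = 1 := by linarith
    simp [hxy]
  rcases hb.eq_or_lt with rfl | hb
  · obtain rfl : a = 1 := by linarith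
    simp
  have := hlc a b ha hb hab x y
  rwa [← hxy, ← Real.rpow_add (hf₀ x), hab, Real.rpow_one] at this

lemma exists_convexCombination_neg_of_abs_le {s t : ℝ} (h : |s| ≤ |t|) :
    ∃ a b : ℝ, 0 ≤ a ∧ 0 ≤ b ∧ a + b = 1 ∧ s = a * t + b * -t := by
  rcases eq_or_ne t 0 with rfl | ht
  · refine ⟨1, 0, by norm_num, le_rfl, by norm_num, ?_⟩
    simpa using h
  · have hratio : |s / t| ≤ 1 := by
      rw [abs_div]
      exact div_le_one_of_le₀ h (abs_nonneg _)
    obtain ⟨hl, hu⟩ := abs_le.1 hratio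
    refine ⟨(1 + s / t) / 2, (1 - s / t) / 2, by linarith, by linarith, by ring, ?_⟩
    field_simp
    ring

lemma LogConcave.le_of_abs_apply_le (hlc : LogConcave f) (hf₀ : ∀ x, 0 < f x)
    (hu : Unconditional f) {y z : E n} (i : Fin n) (hi : |y i| ≤ |z i|)
    (hne : ∀ j, j ≠ i → y j = z j) : f z ≤ f y := by
  obtain ⟨a, b, ha, hb, hab, hyi⟩ := exists_convexCombination_neg_of_abs_le hi
  have hflip := hu z (fun j => if j = i then -1 else 1) fun j => by by_cases h : j = i <;> simp [h]
  refine (hlc.le_of_eq hf₀ hflip.symm ha hb hab).trans_eq (congrArg f ?_)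
  ext j
  rcases eq_or_ne j i with rfl | hj
  · simp [hyi]
  · simp [hj, hne j hj, ← add_mul, hab]

lemma LogConcave.le_of_forall_abs_le (hlc : LogConcave f) (hf₀ : ∀ x, 0 < f x)
    (hu : Unconditional f) {y z : E n} (h : ∀ i, |y i| ≤ |z i|) : f z ≤ f y := by
  classical
  have hmix (s : Finset (Fin n)) :
      f z ≤ f (WithLp.toLp 2 fun i => if i ∈ s then y i else z i) := by
    induction s using Finset.induction_on with
    | empty => simp
    | insert i s his ih =>
      refine ih.trans (hlc.le_of_abs_apply_le hf₀ hu i ?_ fun j hj => ?_)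
      · simpa [his] using h i
      · simp [hj]
  simpa using hmix Finset.univ

lemma LogConcave.comp_driftStep {b : ℝ → ℝ} {δ β : ℝ} (hlc : LogConcave f) (hf₀ : ∀ x, 0 < f x)
    (hu : Unconditional f) (hb : IsDrift b δ β) {h : ℝ} (hh : 0 ≤ h) (hβ : h * β ≤ 1) :
    LogConcave fun x => f (driftStep b h x) := by
  have habs (x : E n) : f x = f (WithLp.toLp 2 fun i => |x i|) :=
    le_antisymm (hlc.le_of_forall_abs_le hf₀ hu fun i => by simp)
      (hlc.le_of_forall_abs_le hf₀ hu fun i => by simp)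
  intro a c ha hc hac x y
  simp only
  rw [habs (driftStep b h x), habs (driftStep b h y)]
  refine (hlc a c ha hc hac _ _).trans (hlc.le_of_forall_abs_le hf₀ hu fun i => ?_)
  have hcoord := hb.abs_sub_mul_le hh hβ ha.le hc.le hac (x i) (y i)
  simp only [driftStep_apply, PiLp.add_apply, PiLp.smul_apply, smul_eq_mul]
  exact hcoord.trans (le_abs_self _)

end LogConcave

/-! ### Contractivity of the transport step -/

set_option maxSynthPendingDepth 3

section Calculus

variable {X : Type*} [NormedAddCommGroup X] [NormedSpace ℝ X]

lemma norm_fderiv_fderiv {W : Type*} [NormedAddCommGroup W] [NormedSpace ℝ W] (f : X → W)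
    (x : X) : ‖fderiv ℝ (fderiv ℝ f) x‖ = ‖iteratedFDeriv ℝ 2 f x‖ := by
  rw [← norm_iteratedFDeriv_one, norm_iteratedFDeriv_fderiv]

lemma norm_fderiv_fderiv_fderiv {W : Type*} [NormedAddCommGroup W] [NormedSpace ℝ W] (f : X → W)
    (x : X) : ‖fderiv ℝ (fderiv ℝ (fderiv ℝ f)) x‖ = ‖iteratedFDeriv ℝ 3 f x‖ := by
  rw [norm_fderiv_fderiv, norm_iteratedFDeriv_fderiv]

lemma norm_fderiv_fderiv_sub_le {W : Type*} [NormedAddCommGroup W] [NormedSpace ℝ W] {f : X → W}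
    (hf : ContDiff ℝ 3 f) {D : ℝ} (hD : ∀ x, ‖iteratedFDeriv ℝ 3 f x‖ ≤ D) (x y : X) :
    ‖fderiv ℝ (fderiv ℝ f) x - fderiv ℝ (fderiv ℝ f) y‖ ≤ D * ‖x - y‖ := by
  have hf' : ContDiff ℝ 2 (fderiv ℝ f) := hf.fderiv_right (by norm_num)
  have hf'' : ContDiff ℝ 1 (fderiv ℝ (fderiv ℝ f)) := hf'.fderiv_right (by norm_num)
  exact convex_univ.norm_image_sub_le_of_norm_fderiv_le
    (fun z _ => hf''.differentiable one_ne_zero z)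
    (fun z _ => (norm_fderiv_fderiv_fderiv f z).trans_le (hD z)) trivial trivial

lemma hasDerivAt_add_smul (x v : X) (t : ℝ) : HasDerivAt (fun s : ℝ => x + s • v) v t := by
  simpa using ((hasDerivAt_id t).smul_const v).const_add x

lemma fderiv_fderiv_apply_self_nonpos_of_concaveOn {g : X → ℝ} (hg : ContDiff ℝ 2 g)
    (hconc : ConcaveOn ℝ Set.univ g) (x v : X) : fderiv ℝ (fderiv ℝ g) x v v ≤ 0 := by
  have hg' : ContDiff ℝ 1 (fderiv ℝ g) := hg.fderiv_right (by norm_num)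
  have hline := hasDerivAt_add_smul x v
  have hφ (t : ℝ) : HasDerivAt (fun s : ℝ => g (x + s • v)) (fderiv ℝ g (x + t • v) v) t :=
    (hg.differentiable two_ne_zero _).hasFDerivAt.comp_hasDerivAt t (hline t)
  have hφ' : HasDerivAt (fun t : ℝ => fderiv ℝ g (x + t • v) v)
      (fderiv ℝ (fderiv ℝ g) x v v) 0 := by
    have hcomp := (hg'.differentiable one_ne_zero (x + (0 : ℝ) • v)).hasFDerivAt.comp_hasDerivAt
      (0 : ℝ) (hline 0)
    have happly := hcomp.clm_apply (hasDerivAt_const (0 : ℝ) v)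
    simpa using happly
  have hφ_conc : ConcaveOn ℝ Set.univ fun s : ℝ => g (x + s • v) := by
    simpa [Function.comp_def, AffineMap.lineMap_apply_module', add_comm] using
      hconc.comp_affineMap (AffineMap.lineMap x (x + v) : ℝ →ᵃ[ℝ] X)
  have hanti := antitoneOn_univ.1 (hφ_conc.antitoneOn_deriv fun t _ => (hφ t).differentiableAt)
  rw [← hφ'.deriv, ← funext fun t => (hφ t).deriv]
  exact hanti.deriv_nonpos

lemma LogConcave.concaveOn_log {f : X → ℝ} (hlc : LogConcave f) (hf₀ : ∀ x, 0 < f x) :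
    ConcaveOn ℝ Set.univ fun x => Real.log (f x) := by
  refine ⟨convex_univ, fun x _ y _ a b ha hb hab => ?_⟩
  rcases ha.eq_or_lt with rfl | ha
  · obtain rfl : b = 1 := by linarith
    simp
  rcases hb.eq_or_lt with rfl | hb
  · obtain rfl : a = 1 := by linarith
    simp
  have hx := Real.rpow_pos_of_pos (hf₀ x) a
  have hy := Real.rpow_pos_of_pos (hf₀ y) b
  have hlog := Real.log_le_log (mul_pos hx hy) (hlc a b ha hb hab x y)
  rwa [Real.log_mul hx.ne' hy.ne', Real.log_rpow (hf₀ x), Real.log_rpow (hf₀ y)] at hlog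

lemma fderiv_zero_eq_zero_of_even {f : X → ℝ} (hf : Differentiable ℝ f)
    (heven : ∀ x, f (-x) = f x) : fderiv ℝ f 0 = 0 := by
  have hneg := (hf (-0)).hasFDerivAt.comp (0 : X) (hasFDerivAt_id (𝕜 := ℝ) (0 : X)).neg
  rw [show f ∘ Neg.neg = f from funext heven] at hneg
  ext v
  have hv := DFunLike.congr_fun hneg.fderiv v
  simp only [neg_zero, ContinuousLinearMap.comp_neg, ContinuousLinearMap.comp_id,
    neg_apply] at hv
  simp only [zero_apply]
  linarith

end Calculus

section Riesz

variable (H : Type*) [NormedAddCommGroup H] [InnerProductSpace ℝ H] [CompleteSpace H]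

/-- The Riesz isomorphism from the dual of a real Hilbert space, as a linear (rather than
conjugate-linear) map. -/
noncomputable def riesz : (H →L[ℝ] ℝ) →L[ℝ] H :=
  LinearMap.mkContinuous
    { toFun := fun l => (InnerProductSpace.toDual ℝ H).symm l
      map_add' := fun l₁ l₂ => map_add _ l₁ l₂
      map_smul' := fun c l => by simp } 1 fun l => by
        rw [one_mul]
        exact (LinearIsometryEquiv.norm_map _ _).le

lemma norm_riesz_le_one : ‖riesz H‖ ≤ 1 := LinearMap.mkContinuous_norm_le _ zero_le_one _

variable {H}

lemma inner_riesz_left (l : H →L[ℝ] ℝ) (v : H) : inner ℝ (riesz H l) v = l v :=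
  InnerProductSpace.toDual_symm_apply

-- `id + h • P` contracts for symmetric `P ≤ 0` with `h ‖P‖ ≤ 1`.
lemma norm_add_smul_riesz_le {D : H →L[ℝ] H →L[ℝ] ℝ} (hsymm : ∀ v w, D v w = D w v)
    (hneg : ∀ v, D v v ≤ 0) {K h : ℝ} (hD : ‖D‖ ≤ K) (hh : 0 ≤ h) (hK : h * K ≤ 1) (v : H) :
    ‖v + h • riesz H (D v)‖ ≤ ‖v‖ := by
  set Pv := riesz H (D v)
  have hexpand : D (v + h • Pv) (v + h • Pv) = D v v + 2 * h * ‖Pv‖ ^ 2 + h ^ 2 * D Pv Pv := by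
    simp only [map_add, map_smul, add_apply, smul_apply, smul_eq_mul]
    rw [hsymm Pv v, ← inner_riesz_left (D v) Pv, real_inner_self_eq_norm_sq]
    ring
  have hlower : -(K * ‖Pv‖ ^ 2) ≤ D Pv Pv := by
    refine (abs_le.1 ((D.le_opNorm₂ Pv Pv).trans ?_)).1
    rw [mul_assoc, ← sq]
    gcongr
  have hvv : D v v ≤ -(h * ‖Pv‖ ^ 2) := by
    have hnonpos := hneg (v + h • Pv)
    rw [hexpand] at hnonpos
    have := mul_le_mul_of_nonneg_left hlower (sq_nonneg h)
    have := mul_le_mul_of_nonneg_right hK (mul_nonneg hh (sq_nonneg ‖Pv‖))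
    linarith
  have hsq : ‖v + h • Pv‖ ^ 2 ≤ ‖v‖ ^ 2 := by
    rw [norm_add_sq_real, norm_smul, inner_smul_right, real_inner_comm, inner_riesz_left, mul_pow,
      Real.norm_eq_abs, sq_abs]
    linarith [mul_le_mul_of_nonneg_left hvv hh, mul_nonneg (sq_nonneg h) (sq_nonneg ‖Pv‖)]
  exact (sq_le_sq₀ (norm_nonneg _) (norm_nonneg _)).1 hsq

end Riesz

section Admissible

variable {n : ℕ} {b : ℝ → ℝ} {δ β A F G h : ℝ} {f : E n → ℝ}

/-- The class of relative densities propagated by the Euler scheme: smooth positive unconditional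
log-concave functions, with quantitative bounds `A` on the first three logarithmic derivatives, `F`
on the function and `G` on its gradient. -/
structure IsAdmissible (A F G : ℝ) (f : E n → ℝ) : Prop where
  contDiff : ContDiff ℝ 3 f
  pos : ∀ x, 0 < f x
  le : ∀ x, f x ≤ F
  relDerivBound : RelDerivBound A f
  norm_fderiv_le : ∀ x, ‖fderiv ℝ f x‖ ≤ G
  unconditional : Unconditional f
  logConcave : LogConcave f

/-- One step, of size `h`, of the Euler scheme for the semigroup of `dX = -b(X) dt + √2 dB`. -/
noncomputable def eulerStep (b : ℝ → ℝ) (h : ℝ) (f : E n → ℝ) (x : E n) : ℝ :=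
  noise (γ n) (√(2 * h)) f (driftStep b h x)

lemma IsAdmissible.norm_le (hf : IsAdmissible A F G f) (x : E n) : ‖f x‖ ≤ F := by
  rw [Real.norm_of_nonneg (hf.pos x).le]
  exact hf.le x

lemma IsAdmissible.eulerStep (hf : IsAdmissible A F G f) (hb : IsDrift b δ β) (hh : 0 ≤ h)
    (hβ : h * β ≤ 1) (hA : 0 ≤ A) :
    IsAdmissible (A * (1 + 4 * (h * (n * β)))) F (G * (1 - h * δ)) (eulerStep b h f) := by
  have hcont := hf.contDiff.continuous
  obtain ⟨hcont_noise, hrel_noise⟩ := hf.relDerivBound.contDiff_noise_and_noise (κ := γ n)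
    (c := √(2 * h)) hf.contDiff hf.norm_le hA
  have hpos_noise := noise_pos (κ := γ n) (c := √(2 * h)) hcont hf.pos hf.norm_le
  have huncond_noise := hf.unconditional.noise hcont √(2 * h)
  have hlc_noise := hf.logConcave.noise (c := √(2 * h)) (prekopaLeindler_stdGaussian n) hcont
    (fun x => (hf.pos x).le) hf.norm_le
  have hstep := hb.contDiff_driftStep (n := n) h
  have hstep_fderiv := hb.norm_fderiv_driftStep_le (n := n) hh hβ
  refine ⟨hcont_noise.comp hstep, fun x => hpos_noise _,
    fun x => (Real.le_norm_self _).trans (norm_noise_le hf.norm_le _), ?_, fun x => ?_,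
    huncond_noise.comp_driftStep hb h, hlc_noise.comp_driftStep hpos_noise huncond_noise hb hh hβ⟩
  · exact hrel_noise.comp hcont_noise hstep
      (fun x => (hstep_fderiv x).trans (sub_le_self _ (mul_nonneg hh hb.pos.le)))
      (hb.norm_iteratedFDeriv_driftStep_le hh (.inl rfl))
      (hb.norm_iteratedFDeriv_driftStep_le hh (.inr rfl))
  · have hcomp := norm_iteratedFDeriv_one_comp_le (hcont_noise.of_le (by norm_num))
      (hstep.of_le (by norm_num)) hstep_fderiv x
    rw [norm_iteratedFDeriv_one, norm_iteratedFDeriv_one] at hcomp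
    exact hcomp.trans (mul_le_mul_of_nonneg_right (norm_fderiv_noise_le
      (hf.contDiff.of_le (by norm_num)) hf.norm_le hf.norm_fderiv_le _)
      ((norm_nonneg _).trans (hstep_fderiv x)))

/-- The logarithm of a density. -/
noncomputable def logDensity (f : E n → ℝ) (x : E n) : ℝ := Real.log (f x)

/-- The Euler step of size `h` along the gradient of `log f`. -/
noncomputable def transportStep (h : ℝ) (f : E n → ℝ) (x : E n) : E n :=
  x + h • riesz (E n) (fderiv ℝ (logDensity f) x)

namespace IsAdmissible

lemma contDiff_logDensity (hf : IsAdmissible A F G f) : ContDiff ℝ 3 (logDensity f) :=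
  hf.contDiff.log fun x => (hf.pos x).ne'

lemma contDiff_fderiv_logDensity (hf : IsAdmissible A F G f) :
    ContDiff ℝ 2 (fderiv ℝ (logDensity f)) :=
  hf.contDiff_logDensity.fderiv_right (by norm_num)

lemma norm_iteratedFDeriv_logDensity_le (hf : IsAdmissible A F G f) (hA : 1 ≤ A) {i : ℕ}
    (h1 : 1 ≤ i) (h3 : i ≤ 3) (x : E n) :
    ‖iteratedFDeriv ℝ i (logDensity f) x‖ ≤ logDerivConst * A ^ 3 :=
  norm_iteratedFDeriv_log_le hA hf.contDiff hf.pos hf.relDerivBound h1 h3 x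

lemma norm_fderiv_fderiv_logDensity_le (hf : IsAdmissible A F G f) (hA : 1 ≤ A) (x : E n) :
    ‖fderiv ℝ (fderiv ℝ (logDensity f)) x‖ ≤ logDerivConst * A ^ 3 := by
  rw [norm_fderiv_fderiv]
  exact hf.norm_iteratedFDeriv_logDensity_le hA (by norm_num) (by norm_num) x

lemma norm_fderiv_fderiv_logDensity_sub_le (hf : IsAdmissible A F G f) (hA : 1 ≤ A) (x y : E n) :
    ‖fderiv ℝ (fderiv ℝ (logDensity f)) x - fderiv ℝ (fderiv ℝ (logDensity f)) y‖ ≤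
      logDerivConst * A ^ 3 * ‖x - y‖ :=
  norm_fderiv_fderiv_sub_le hf.contDiff_logDensity
    (hf.norm_iteratedFDeriv_logDensity_le hA (by norm_num) le_rfl) x y

lemma contDiff_transportStep (hf : IsAdmissible A F G f) (h : ℝ) :
    ContDiff ℝ 2 (transportStep h f) :=
  contDiff_id.add (((riesz (E n)).contDiff.comp hf.contDiff_fderiv_logDensity).const_smul h)

lemma fderiv_transportStep (hf : IsAdmissible A F G f) (h : ℝ) (x : E n) :
    fderiv ℝ (transportStep h f) x = ContinuousLinearMap.id ℝ (E n) +
      h • (riesz (E n)).comp (fderiv ℝ (fderiv ℝ (logDensity f)) x) := by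
  have hgrad := (riesz (E n)).hasFDerivAt.comp x
    (hf.contDiff_fderiv_logDensity.differentiable two_ne_zero x).hasFDerivAt
  exact ((hasFDerivAt_id x).add (hgrad.const_smul h)).fderiv

lemma norm_fderiv_transportStep_le_one (hf : IsAdmissible A F G f) (hA : 1 ≤ A) (hh : 0 ≤ h)
    (hsmall : h * (logDerivConst * A ^ 3) ≤ 1) (x : E n) :
    ‖fderiv ℝ (transportStep h f) x‖ ≤ 1 := by
  refine ContinuousLinearMap.opNorm_le_bound _ zero_le_one fun v => ?_
  have hsymm := (hf.contDiff_logDensity.contDiffAt (x := x)).isSymmSndFDerivAt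
    (by simp; norm_num)
  rw [one_mul, hf.fderiv_transportStep]
  exact norm_add_smul_riesz_le (fun v w => hsymm.eq v w)
    (fderiv_fderiv_apply_self_nonpos_of_concaveOn (hf.contDiff_logDensity.of_le (by norm_num))
      (hf.logConcave.concaveOn_log hf.pos) x)
    (hf.norm_fderiv_fderiv_logDensity_le hA x) hh hsmall v

lemma lipschitzWith_one_transportStep (hf : IsAdmissible A F G f) (hA : 1 ≤ A) (hh : 0 ≤ h)
    (hsmall : h * (logDerivConst * A ^ 3) ≤ 1) : LipschitzWith 1 (transportStep h f) :=
  lipschitzWith_of_nnnorm_fderiv_le ((hf.contDiff_transportStep h).differentiable two_ne_zero)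
    fun x => by exact_mod_cast hf.norm_fderiv_transportStep_le_one hA hh hsmall x

lemma norm_fderiv_transportStep_sub_le (hf : IsAdmissible A F G f) (hA : 1 ≤ A) (hh : 0 ≤ h)
    (x y : E n) : ‖fderiv ℝ (transportStep h f) x - fderiv ℝ (transportStep h f) y‖ ≤
      h * (logDerivConst * A ^ 3) * ‖x - y‖ := by
  rw [hf.fderiv_transportStep, hf.fderiv_transportStep, add_sub_add_left_eq_sub, ← smul_sub,
    ← ContinuousLinearMap.comp_sub, norm_smul, Real.norm_of_nonneg hh, mul_assoc]
  refine mul_le_mul_of_nonneg_left ((ContinuousLinearMap.opNorm_comp_le _ _).trans ?_) hh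
  exact (mul_le_mul (norm_riesz_le_one _) (hf.norm_fderiv_fderiv_logDensity_sub_le hA x y)
    (norm_nonneg _) zero_le_one).trans_eq (one_mul _)

lemma transportStep_zero (hf : IsAdmissible A F G f) (h : ℝ) : transportStep h f 0 = 0 := by
  have heven (x : E n) : logDensity f (-x) = logDensity f x := by
    have hneg : (WithLp.toLp 2 fun i => (-1 : ℝ) * x i : E n) = -x := by
      ext i
      simp
    rw [logDensity, ← hneg, hf.unconditional x (fun _ => -1) fun _ => .inr rfl, logDensity]
  simp [transportStep, fderiv_zero_eq_zero_of_even
    (hf.contDiff_logDensity.differentiable three_ne_zero) heven]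

end IsAdmissible

/-- Test functions: `C¹` functions bounded by `1` whose gradient is bounded by `L` and
`M`-Lipschitz. -/
structure IsTestFunction (L M : ℝ) (φ : E n → ℝ) : Prop where
  contDiff : ContDiff ℝ 1 φ
  abs_le_one : ∀ x, |φ x| ≤ 1
  norm_fderiv_le : ∀ x, ‖fderiv ℝ φ x‖ ≤ L
  norm_fderiv_sub_le : ∀ x y, ‖fderiv ℝ φ x - fderiv ℝ φ y‖ ≤ M * ‖x - y‖

lemma IsTestFunction.comp_transportStep {L M : ℝ} {φ : E n → ℝ} (hφ : IsTestFunction L M φ)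
    (hM : 0 ≤ M) (hf : IsAdmissible A F G f) (hA : 1 ≤ A) (hh : 0 ≤ h)
    (hsmall : h * (logDerivConst * A ^ 3) ≤ 1) :
    IsTestFunction L (M + h * (logDerivConst * A ^ 3) * L) fun x => φ (transportStep h f x) := by
  have hL : 0 ≤ L := (norm_nonneg _).trans (hφ.norm_fderiv_le 0)
  have hT := hf.norm_fderiv_transportStep_le_one hA hh hsmall
  have hfderiv (x) : fderiv ℝ (fun x => φ (transportStep h f x)) x =
      (fderiv ℝ φ (transportStep h f x)).comp (fderiv ℝ (transportStep h f) x) :=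
    fderiv_comp x (hφ.contDiff.differentiable one_ne_zero _)
      ((hf.contDiff_transportStep h).differentiable two_ne_zero x)
  refine ⟨hφ.contDiff.comp ((hf.contDiff_transportStep h).of_le (by norm_num)),
    fun x => hφ.abs_le_one _, fun x => ?_, fun x y => ?_⟩
  · rw [hfderiv]
    exact (ContinuousLinearMap.opNorm_comp_le _ _).trans
      ((mul_le_mul (hφ.norm_fderiv_le _) (hT x) (norm_nonneg _) hL).trans_eq (mul_one L))
  set a := transportStep h f x
  set c := transportStep h f y
  have hac : ‖a - c‖ ≤ ‖x - y‖ := by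
    simpa [dist_eq_norm] using
      (hf.lipschitzWith_one_transportStep hA hh hsmall).dist_le_mul x y
  have hsplit : fderiv ℝ (fun x => φ (transportStep h f x)) x
      - fderiv ℝ (fun x => φ (transportStep h f x)) y
      = (fderiv ℝ φ a).comp (fderiv ℝ (transportStep h f) x - fderiv ℝ (transportStep h f) y)
        + (fderiv ℝ φ a - fderiv ℝ φ c).comp (fderiv ℝ (transportStep h f) y) := by
    rw [hfderiv, hfderiv, ContinuousLinearMap.comp_sub, ContinuousLinearMap.sub_comp,
      sub_add_sub_cancel]
  rw [hsplit]
  have bound₁ := (ContinuousLinearMap.opNorm_comp_le (fderiv ℝ φ a) _).trans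
    (mul_le_mul (hφ.norm_fderiv_le a) (hf.norm_fderiv_transportStep_sub_le hA hh x y)
      (norm_nonneg _) hL)
  have bound₂ := (ContinuousLinearMap.opNorm_comp_le (fderiv ℝ φ a - fderiv ℝ φ c) _).trans
    (mul_le_mul ((hφ.norm_fderiv_sub_le a c).trans (mul_le_mul_of_nonneg_left hac hM)) (hT y)
      (norm_nonneg _) (by positivity))
  linarith [norm_add_le ((fderiv ℝ φ a).comp (fderiv ℝ (transportStep h f) x
    - fderiv ℝ (transportStep h f) y)) ((fderiv ℝ φ a - fderiv ℝ φ c).comp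
    (fderiv ℝ (transportStep h f) y))]

end Admissible

/-! ### Taylor expansion of the Gaussian noise operator -/

section Taylor

variable {X W : Type*} [NormedAddCommGroup X] [NormedSpace ℝ X] [NormedAddCommGroup W]
  [NormedSpace ℝ W]

lemma norm_sub_sub_fderiv_le {f : X → W} (hf : Differentiable ℝ f) {M : ℝ} (hM : 0 ≤ M)
    (hlip : ∀ x y, ‖fderiv ℝ f x - fderiv ℝ f y‖ ≤ M * ‖x - y‖) (x v : X) :
    ‖f (x + v) - f x - fderiv ℝ f x v‖ ≤ M * ‖v‖ ^ 2 := by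
  have hball (y : X) (hy : y ∈ Metric.closedBall x ‖v‖) :
      ‖fderiv ℝ f y - fderiv ℝ f x‖ ≤ M * ‖v‖ :=
    (hlip y x).trans (mul_le_mul_of_nonneg_left (by simpa [dist_eq_norm] using hy) hM)
  have hmean := (convex_closedBall x ‖v‖).norm_image_sub_le_of_norm_fderiv_le'
    (x := x) (y := x + v)
    (fun y _ => hf y) hball (by simp) (by simp)
  rwa [add_sub_cancel_left, mul_assoc, ← sq] at hmean

lemma abs_sub_sub_fderiv_sub_fderiv_fderiv_le {f : X → ℝ} (hf : ContDiff ℝ 3 f) {D : ℝ}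
    (hD : ∀ x, ‖iteratedFDeriv ℝ 3 f x‖ ≤ D) (x v : X) :
    |f (x + v) - f x - fderiv ℝ f x v - fderiv ℝ (fderiv ℝ f) x v v / 2| ≤ D * ‖v‖ ^ 3 := by
  have hD₀ : 0 ≤ D := (norm_nonneg _).trans (hD 0)
  have hf' : ContDiff ℝ 2 (fderiv ℝ f) := hf.fderiv_right (by norm_num)
  let ψ : ℝ → ℝ := fun t =>
    f (x + t • v) - t * fderiv ℝ f x v - t ^ 2 / 2 * fderiv ℝ (fderiv ℝ f) x v v
  let ψ' : ℝ → ℝ := fun t =>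
    (fderiv ℝ f (x + t • v) - fderiv ℝ f x - fderiv ℝ (fderiv ℝ f) x (t • v)) v
  have hψ (t : ℝ) : HasDerivAt ψ (ψ' t) t := by
    have hline := (hf.differentiable three_ne_zero (x + t • v)).hasFDerivAt.comp_hasDerivAt t
      (hasDerivAt_add_smul x v t)
    have hlin := (hasDerivAt_id t).mul_const (fderiv ℝ f x v)
    have hquad := (((hasDerivAt_id t).pow 2).div_const 2).mul_const
      (fderiv ℝ (fderiv ℝ f) x v v)
    convert! (hline.sub hlin).sub hquad using 1
    simp [ψ']
  have hψ' (t : ℝ) (ht : t ∈ Set.Icc (0 : ℝ) 1) : ‖ψ' t‖ ≤ D * ‖v‖ ^ 3 := by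
    have hle := norm_sub_sub_fderiv_le (hf'.differentiable two_ne_zero) hD₀
      (norm_fderiv_fderiv_sub_le hf hD) x (t • v)
    calc ‖ψ' t‖ ≤ D * ‖t • v‖ ^ 2 * ‖v‖ := ContinuousLinearMap.le_of_opNorm_le _ hle v
      _ = t ^ 2 * (D * ‖v‖ ^ 3) := by
        rw [norm_smul, Real.norm_of_nonneg ht.1]
        ring
      _ ≤ D * ‖v‖ ^ 3 := mul_le_of_le_one_left (by positivity) (pow_le_one₀ ht.1 ht.2)
  have hmean := (convex_Icc (0 : ℝ) 1).norm_image_sub_le_of_norm_hasDerivWithin_le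
    (x := 0) (y := 1)
    (fun t _ => (hψ t).hasDerivWithinAt) hψ' (by simp) (by simp)
  simp only [ψ, one_smul, zero_smul, add_zero, sub_zero, norm_one, mul_one, one_mul, zero_mul,
    one_pow, ne_eq, OfNat.ofNat_ne_zero, not_false_eq_true, zero_pow, zero_div,
    Real.norm_eq_abs] at hmean
  convert! hmean using 2
  ring

end Taylor

section GaussianMoments

variable {n : ℕ}

/-- The third absolute moment of the standard Gaussian on `E n`, which controls the remainder in
the second order expansion of the noise operator. -/
noncomputable def thirdMoment (n : ℕ) : ℝ := ∫ z, ‖z‖ ^ 3 ∂γ n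

lemma thirdMoment_nonneg : 0 ≤ thirdMoment n := integral_nonneg fun z => by positivity

lemma integrable_norm_pow_stdGaussian {k : ℕ} (hk : k ≠ 0) :
    Integrable (fun z : E n => ‖z‖ ^ k) (γ n) :=
  (ProbabilityTheory.IsGaussian.memLp_id (γ n) k (by simp)).integrable_norm_pow hk

lemma integrable_apply_apply_stdGaussian (B : E n →L[ℝ] E n →L[ℝ] ℝ) :
    Integrable (fun z => B z z) (γ n) := by
  have hcont : Continuous fun z => B z z := by fun_prop
  refine ((integrable_norm_pow_stdGaussian two_ne_zero).const_mul ‖B‖).mono'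
    hcont.aestronglyMeasurable (.of_forall fun z => ?_)
  rw [sq, ← mul_assoc]
  exact B.le_opNorm₂ z z

/-- The trace of a bilinear form with respect to the Euclidean inner product; the trace of the
second derivative is the Laplacian. -/
noncomputable def bilinTrace (B : E n →L[ℝ] E n →L[ℝ] ℝ) : ℝ :=
  ∑ i, B (EuclideanSpace.single i 1) (EuclideanSpace.single i 1)

lemma abs_bilinTrace_le (B : E n →L[ℝ] E n →L[ℝ] ℝ) : |bilinTrace B| ≤ n * ‖B‖ := by
  have hterm (i : Fin n) : |B (EuclideanSpace.single i 1) (EuclideanSpace.single i 1)| ≤ ‖B‖ := by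
    simpa using B.le_opNorm₂ (EuclideanSpace.single i 1) (EuclideanSpace.single i 1)
  calc |bilinTrace B| ≤ ∑ i, |B (EuclideanSpace.single i 1) (EuclideanSpace.single i 1)| :=
        Finset.abs_sum_le_sum_abs _ _
    _ ≤ ∑ _ : Fin n, ‖B‖ := Finset.sum_le_sum fun i _ => hterm i
    _ = n * ‖B‖ := by simp

lemma bilinTrace_sub (B C : E n →L[ℝ] E n →L[ℝ] ℝ) :
    bilinTrace (B - C) = bilinTrace B - bilinTrace C := by
  simp [bilinTrace]

lemma integral_apply_mul_apply_stdGaussian (i j : Fin n) :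
    ∫ z : E n, z i * z j ∂γ n = if i = j then 1 else 0 := by
  have hcov := ProbabilityTheory.covarianceBilin_apply
    (ProbabilityTheory.IsGaussian.memLp_two_id (μ := γ n))
    (EuclideanSpace.single i (1 : ℝ)) (EuclideanSpace.single j (1 : ℝ))
  rw [ProbabilityTheory.covarianceBilin_stdGaussian] at hcov
  change inner ℝ (EuclideanSpace.single i (1 : ℝ) : E n) (EuclideanSpace.single j 1) = _ at hcov
  simpa [EuclideanSpace.inner_single_left, Pi.single_apply] using hcov.symm

lemma sum_apply_smul_single (x : E n) : ∑ i, x i • (EuclideanSpace.single i 1 : E n) = x := by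
  simpa using (EuclideanSpace.basisFun (Fin n) ℝ).sum_repr x

lemma integral_apply_apply_stdGaussian (B : E n →L[ℝ] E n →L[ℝ] ℝ) :
    ∫ z, B z z ∂γ n = bilinTrace B := by
  have hexpand (z : E n) : B z z = ∑ i, ∑ j, z i * z j *
      B (EuclideanSpace.single i 1) (EuclideanSpace.single j 1) := by
    conv_lhs => rw [← sum_apply_smul_single z]
    simp only [map_sum, map_smul, sum_apply, smul_apply, smul_eq_mul, Finset.mul_sum]
    rw [Finset.sum_comm]
    exact Finset.sum_congr rfl fun i _ => Finset.sum_congr rfl fun j _ => by ring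
  have hint (i j : Fin n) : Integrable (fun z : E n => z i * z j) (γ n) := by
    have hcont : Continuous fun z : E n => z i * z j := by fun_prop
    refine (integrable_norm_pow_stdGaussian two_ne_zero).mono' hcont.aestronglyMeasurable
      (.of_forall fun z => ?_)
    rw [norm_mul, sq]
    gcongr <;> exact PiLp.norm_apply_le z _
  simp_rw [hexpand]
  rw [integral_finsetSum _ fun i _ => integrable_finsetSum _ fun j _ => (hint i j).mul_const _]
  simp_rw [integral_finsetSum _ fun j _ => (hint _ j).mul_const _, integral_mul_const,
    integral_apply_mul_apply_stdGaussian]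
  simp [bilinTrace]

lemma abs_noise_sub_sub_bilinTrace_le {f : E n → ℝ} (hf : ContDiff ℝ 3 f) {D F : ℝ}
    (hF : ∀ x, ‖f x‖ ≤ F) (hD : ∀ x, ‖iteratedFDeriv ℝ 3 f x‖ ≤ D) {s : ℝ} (hs : 0 ≤ s)
    (x : E n) :
    |noise (γ n) s f x - f x - s ^ 2 / 2 * bilinTrace (fderiv ℝ (fderiv ℝ f) x)| ≤
      D * s ^ 3 * thirdMoment n := by
  have hnoise := integrable_noise (κ := γ n) (c := s) hf.continuous hF x
  have hlin : Integrable (fderiv ℝ f x) (γ n) :=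
    (fderiv ℝ f x).integrable_comp ProbabilityTheory.IsGaussian.integrable_id
  have hquad := integrable_apply_apply_stdGaussian (fderiv ℝ (fderiv ℝ f) x)
  have hremainder : noise (γ n) s f x - f x - s ^ 2 / 2 * bilinTrace (fderiv ℝ (fderiv ℝ f) x) =
      ∫ z, (f (x + s • z) - f x - s * fderiv ℝ f x z -
        s ^ 2 / 2 * fderiv ℝ (fderiv ℝ f) x z z) ∂γ n := by
    have hconst := integrable_const (μ := γ n) (f x)
    rw [integral_sub (by exact (hnoise.sub hconst).sub (hlin.const_mul s)) (hquad.const_mul _),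
      integral_sub (by exact hnoise.sub hconst) (hlin.const_mul s), integral_sub hnoise hconst,
      integral_const_mul, integral_const_mul, ProbabilityTheory.integral_strongDual_stdGaussian,
      integral_apply_apply_stdGaussian]
    simp [noise]
  rw [hremainder, thirdMoment, ← integral_const_mul, ← Real.norm_eq_abs]
  refine norm_integral_le_of_norm_le ((integrable_norm_pow_stdGaussian three_ne_zero).const_mul _)
    (.of_forall fun z => ?_)
  have htaylor := abs_sub_sub_fderiv_sub_fderiv_fderiv_le hf hD x (s • z)
  rw [norm_smul, Real.norm_of_nonneg hs] at htaylor
  simp only [map_smul, smul_apply, smul_eq_mul] at htaylor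
  convert! htaylor using 1
  · rw [Real.norm_eq_abs]
    ring_nf
  · ring

end GaussianMoments

/-! ### The invariant density of the drift and integration by parts -/

section Potential

variable {n : ℕ} {b v : ℝ → ℝ} {δ β : ℝ}

/-- `v` is a primitive of the drift `b` with quadratic growth. -/
structure IsPotential (v b : ℝ → ℝ) (δ : ℝ) : Prop where
  hasDerivAt : ∀ x, HasDerivAt v (b x) x
  quadratic_le : ∀ x, δ / 2 * x ^ 2 ≤ v x

/-- The unnormalized product density `exp (-∑ v(xᵢ))`. -/
noncomputable def productDensity (v : ℝ → ℝ) (x : E n) : ℝ := Real.exp (-∑ i, v (x i))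

lemma productDensity_pos (x : E n) : 0 < productDensity v x := Real.exp_pos _

lemma integrable_exp_neg_mul_norm_sq {a : ℝ} (ha : 0 < a) :
    Integrable fun x : E n => Real.exp (-a * ‖x‖ ^ 2) := by
  have hcexp := (GaussianFourier.integrable_cexp_neg_mul_sq_norm_add (V := E n) (b := (a : ℂ))
    (by simpa using ha) 0 0).norm
  refine hcexp.congr (.of_forall fun x => ?_)
  simp only [Complex.norm_exp]
  congr 1
  simp only [inner_zero_left, Complex.ofReal_zero, mul_zero, add_zero]
  norm_cast

lemma one_add_cube_le_exp {a t : ℝ} (ha : 0 < a) (ht : 0 ≤ t) :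
    (1 + t) ^ 3 ≤ 6 * Real.exp (1 + 1 / a) * Real.exp (a * t ^ 2) := by
  have hcube : (1 + t) ^ 3 ≤ 6 * Real.exp (1 + t) := by
    have := Real.pow_div_factorial_le_exp (1 + t) (by linarith) 3
    rw [div_le_iff₀ (by positivity)] at this
    simpa [Nat.factorial, mul_comm] using this
  have hyoung : t ≤ 1 / a + a * t ^ 2 := by
    rw [← sub_nonneg, show 1 / a + a * t ^ 2 - t = ((a * t - 1) ^ 2 + a * t) / a by
      field_simp; ring]
    positivity
  calc (1 + t) ^ 3 ≤ 6 * Real.exp (1 + t) := hcube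
    _ ≤ 6 * Real.exp (1 + 1 / a + a * t ^ 2) := by
      have : 1 + t ≤ 1 + 1 / a + a * t ^ 2 := by linarith
      gcongr
    _ = 6 * Real.exp (1 + 1 / a) * Real.exp (a * t ^ 2) := by rw [Real.exp_add, mul_assoc]

lemma one_le_one_add_norm_cube (x : E n) : 1 ≤ (1 + ‖x‖) ^ 3 := one_le_pow₀ (by simp)

lemma norm_le_one_add_norm_cube (x : E n) : ‖x‖ ≤ (1 + ‖x‖) ^ 3 := by
  linarith [le_self_pow₀ (by simp : 1 ≤ 1 + ‖x‖) three_ne_zero]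

namespace IsPotential

lemma continuous_productDensity (hv : IsPotential v b δ) :
    Continuous (productDensity v : E n → ℝ) := by
  have : Continuous v := continuous_iff_continuousAt.2 fun x => (hv.hasDerivAt x).continuousAt
  unfold productDensity
  fun_prop

lemma productDensity_le (hv : IsPotential v b δ) (x : E n) :
    productDensity v x ≤ Real.exp (-(δ / 2) * ‖x‖ ^ 2) := by
  refine Real.exp_le_exp.2 ?_
  rw [EuclideanSpace.real_norm_sq_eq, neg_mul, Finset.mul_sum]
  exact neg_le_neg (Finset.sum_le_sum fun i _ => hv.quadratic_le _)

lemma integrable_one_add_norm_cube_mul (hv : IsPotential v b δ) (hδ : 0 < δ) :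
    Integrable fun x : E n => (1 + ‖x‖) ^ 3 * productDensity v x := by
  have hcont := hv.continuous_productDensity (n := n)
  refine ((integrable_exp_neg_mul_norm_sq (n := n) (a := δ / 4) (by positivity)).const_mul
    (6 * Real.exp (1 + 1 / (δ / 4)))).mono' (by fun_prop) (.of_forall fun x => ?_)
  rw [Real.norm_of_nonneg (mul_nonneg (by positivity) (productDensity_pos x).le)]
  calc (1 + ‖x‖) ^ 3 * productDensity v x
      ≤ 6 * Real.exp (1 + 1 / (δ / 4)) * Real.exp (δ / 4 * ‖x‖ ^ 2) *
          Real.exp (-(δ / 2) * ‖x‖ ^ 2) :=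
        mul_le_mul (one_add_cube_le_exp (by positivity) (norm_nonneg x)) (hv.productDensity_le x)
          (productDensity_pos x).le (by positivity)
    _ = 6 * Real.exp (1 + 1 / (δ / 4)) * Real.exp (-(δ / 4) * ‖x‖ ^ 2) := by
        rw [mul_assoc, ← Real.exp_add]
        ring_nf

lemma integrable_mul_of_abs_le (hv : IsPotential v b δ) (hδ : 0 < δ) {g : E n → ℝ}
    (hg : Continuous g) {C : ℝ} (hC : ∀ x, |g x| ≤ C * (1 + ‖x‖) ^ 3) :
    Integrable fun x => g x * productDensity v x := by
  refine ((hv.integrable_one_add_norm_cube_mul hδ).const_mul C).mono'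
    (hg.mul hv.continuous_productDensity).aestronglyMeasurable (.of_forall fun x => ?_)
  rw [norm_mul, Real.norm_eq_abs, Real.norm_of_nonneg (productDensity_pos x).le, ← mul_assoc]
  exact mul_le_mul_of_nonneg_right (hC x) (productDensity_pos x).le

lemma integrable_mul_of_abs_le_const (hv : IsPotential v b δ) (hδ : 0 < δ) {g : E n → ℝ}
    (hg : Continuous g) {C : ℝ} (hC : ∀ x, |g x| ≤ C) :
    Integrable fun x => g x * productDensity v x :=
  hv.integrable_mul_of_abs_le hδ hg fun x => (hC x).trans <|
    le_mul_of_one_le_right ((abs_nonneg _).trans (hC x)) (one_le_one_add_norm_cube x)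

lemma hasFDerivAt_productDensity (hv : IsPotential v b δ) (x : E n) :
    HasFDerivAt (productDensity v)
      (-(productDensity v x) • ∑ i, b (x i) • (EuclideanSpace.proj i : E n →L[ℝ] ℝ)) x := by
  have hcoord (i : Fin n) : HasFDerivAt (fun y : E n => v (y i))
      (b (x i) • (EuclideanSpace.proj i : E n →L[ℝ] ℝ)) x :=
    (hv.hasDerivAt (x i)).comp_hasFDerivAt x
      ((EuclideanSpace.proj i : E n →L[ℝ] ℝ).hasFDerivAt (x := x))
  have hexp := (HasFDerivAt.fun_sum fun i (_ : i ∈ Finset.univ) => hcoord i).neg.exp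
  convert! hexp using 1
  simp [productDensity]

end IsPotential

/-- The weighted partial derivative `∂ᵢg - b(xᵢ) g`: up to sign, the adjoint of `∂ᵢ` in the `L²`
space of the density whose potential has derivative `b`. -/
noncomputable def weightedPartial (b : ℝ → ℝ) (i : Fin n) (g : E n → ℝ) (x : E n) : ℝ :=
  fderiv ℝ g x (EuclideanSpace.single i 1) - b (x i) * g x

variable {g : E n → ℝ} {C : ℝ}

lemma IsPotential.integrable_weightedPartial_mul (hv : IsPotential v b δ) (hb : IsDrift b δ β)
    (hg : ContDiff ℝ 1 g) (hC : ∀ x, |g x| ≤ C) {C' : ℝ} {i : Fin n}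
    (hC' : ∀ x, |fderiv ℝ g x (EuclideanSpace.single i 1)| ≤ C') :
    Integrable fun x => weightedPartial b i g x * productDensity v x := by
  have hβ := hb.upper_pos
  have hcont : Continuous (weightedPartial b i g) := by
    have := hg.continuous
    have := hg.continuous_fderiv one_ne_zero
    have := hb.contDiff.continuous
    unfold weightedPartial
    fun_prop
  refine hv.integrable_mul_of_abs_le hb.pos hcont (C := C' + β * C) fun x => ?_
  have hC'₀ : 0 ≤ C' := (abs_nonneg _).trans (hC' 0)
  have hbx : |b (x i)| ≤ β * (1 + ‖x‖) ^ 3 := (hb.abs_le _).trans <|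
    mul_le_mul_of_nonneg_left ((PiLp.norm_apply_le x i).trans (norm_le_one_add_norm_cube x)) hβ.le
  calc |weightedPartial b i g x|
      ≤ |fderiv ℝ g x (EuclideanSpace.single i 1)| + |b (x i) * g x| := abs_sub _ _
    _ ≤ C' * (1 + ‖x‖) ^ 3 + β * (1 + ‖x‖) ^ 3 * C := by
        rw [abs_mul]
        gcongr
        · exact (hC' x).trans (le_mul_of_one_le_right hC'₀ (one_le_one_add_norm_cube x))
        · exact hC x
    _ = (C' + β * C) * (1 + ‖x‖) ^ 3 := by ring

lemma IsPotential.integral_weightedPartial_mul_eq_zero (hv : IsPotential v b δ)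
    (hb : IsDrift b δ β) (hg : ContDiff ℝ 1 g) (hC : ∀ x, |g x| ≤ C) {C' : ℝ} {i : Fin n}
    (hC' : ∀ x, |fderiv ℝ g x (EuclideanSpace.single i 1)| ≤ C') :
    ∫ x, weightedPartial b i g x * productDensity v x = 0 := by
  have hρ (x : E n) : fderiv ℝ (productDensity v) x (EuclideanSpace.single i 1) =
      -(b (x i) * productDensity v x) := by
    simp [(hv.hasFDerivAt_productDensity x).fderiv, sum_apply, mul_comm]
  have hint : Integrable fun x =>
      fderiv ℝ g x (EuclideanSpace.single i 1) * productDensity v x := by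
    have := hg.continuous_fderiv one_ne_zero
    exact hv.integrable_mul_of_abs_le_const hb.pos (by fun_prop) hC'
  have hint' : Integrable fun x =>
      g x * fderiv ℝ (productDensity v) x (EuclideanSpace.single i 1) := by
    refine ((hv.integrable_weightedPartial_mul hb hg hC hC').sub hint).congr
      (.of_forall fun x => ?_)
    simp only [Pi.sub_apply, weightedPartial, hρ]
    ring
  have hparts := integral_mul_fderiv_eq_neg_fderiv_mul_of_integrable hint hint'
    (hv.integrable_mul_of_abs_le_const hb.pos hg.continuous hC)
    (fun x _ => hg.differentiable one_ne_zero x)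
    (fun x _ => (hv.hasFDerivAt_productDensity x).differentiableAt)
  calc ∫ x, weightedPartial b i g x * productDensity v x
      = ∫ x, (fderiv ℝ g x (EuclideanSpace.single i 1) * productDensity v x +
          g x * fderiv ℝ (productDensity v) x (EuclideanSpace.single i 1)) := by
        refine integral_congr_ae (.of_forall fun x => ?_)
        simp only [weightedPartial, hρ]
        ring
    _ = 0 := by rw [integral_add hint hint', hparts, add_neg_cancel]

end Potential

section Generator

variable {n : ℕ} {b v : ℝ → ℝ} {δ β : ℝ} {φ f : E n → ℝ}

lemma apply_riesz_eq_sum (l m : E n →L[ℝ] ℝ) :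
    l (riesz (E n) m) = ∑ i, l (EuclideanSpace.single i 1) * m (EuclideanSpace.single i 1) := by
  conv_lhs => rw [← sum_apply_smul_single (riesz (E n) m), map_sum]
  refine Finset.sum_congr rfl fun i _ => ?_
  rw [map_smul, smul_eq_mul, mul_comm, ← inner_riesz_left m]
  simp [EuclideanSpace.inner_single_right]

lemma apply_driftField_eq_sum (l : E n →L[ℝ] ℝ) (x : E n) :
    l (driftField b x) = ∑ i, b (x i) * l (EuclideanSpace.single i 1) := by
  conv_lhs => rw [← sum_apply_smul_single (driftField b x), map_sum]
  exact Finset.sum_congr rfl fun i _ => by rw [map_smul, smul_eq_mul, driftField_apply]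

/-- The generator `Δf - ⟨b, ∇f⟩` of the diffusion `dX = -b(X) dt + √2 dB`. -/
noncomputable def generator (b : ℝ → ℝ) (f : E n → ℝ) (x : E n) : ℝ :=
  bilinTrace (fderiv ℝ (fderiv ℝ f) x) - fderiv ℝ f x (driftField b x)

/-- The derivative of `φ(T_h) · P_h f` at `h = 0`, where `T_h` moves along `∇ log f` and `P_h` is
the diffusion semigroup. -/
noncomputable def fluxDensity (b : ℝ → ℝ) (φ f : E n → ℝ) (x : E n) : ℝ :=
  fderiv ℝ φ x (riesz (E n) (fderiv ℝ f x)) + φ x * generator b f x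

lemma fderiv_mul_partial_apply (hφ : Differentiable ℝ φ) (hf : ContDiff ℝ 2 f) (e x : E n) :
    fderiv ℝ (fun y => φ y * fderiv ℝ f y e) x e =
      fderiv ℝ φ x e * fderiv ℝ f x e + φ x * fderiv ℝ (fderiv ℝ f) x e e := by
  have hf' : ContDiff ℝ 1 (fderiv ℝ f) := hf.fderiv_right (by norm_num)
  have hpartial := (hf'.differentiable one_ne_zero x).hasFDerivAt.clm_apply
    (hasFDerivAt_const e x)
  rw [((hφ x).hasFDerivAt.fun_mul hpartial).fderiv]
  simp [add_comm, mul_comm]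

lemma fluxDensity_eq_sum_weightedPartial (hφ : Differentiable ℝ φ) (hf : ContDiff ℝ 2 f)
    (x : E n) : fluxDensity b φ f x =
      ∑ i, weightedPartial b i (fun y => φ y * fderiv ℝ f y (EuclideanSpace.single i 1)) x := by
  simp only [weightedPartial, fderiv_mul_partial_apply hφ hf]
  rw [fluxDensity, generator, apply_riesz_eq_sum, apply_driftField_eq_sum, bilinTrace, mul_sub,
    Finset.mul_sum, Finset.mul_sum, ← add_sub_assoc, ← Finset.sum_add_distrib,
    ← Finset.sum_sub_distrib]
  exact Finset.sum_congr rfl fun i _ => by ring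

lemma IsPotential.integrable_and_integral_fluxDensity_eq_zero (hv : IsPotential v b δ)
    (hb : IsDrift b δ β) {L D : ℝ} (hφ : ContDiff ℝ 1 φ) (hφ₁ : ∀ x, |φ x| ≤ 1)
    (hφL : ∀ x, ‖fderiv ℝ φ x‖ ≤ L) (hf : ContDiff ℝ 2 f)
    (hf' : ∀ x, ‖fderiv ℝ f x‖ ≤ D) (hf'' : ∀ x, ‖fderiv ℝ (fderiv ℝ f) x‖ ≤ D) :
    Integrable (fun x => fluxDensity b φ f x * productDensity v x) ∧
      ∫ x, fluxDensity b φ f x * productDensity v x = 0 := by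
  have hdiff := hφ.differentiable one_ne_zero
  have hL₀ : 0 ≤ L := (norm_nonneg _).trans (hφL 0)
  let e (i : Fin n) : E n := EuclideanSpace.single i 1
  let g (i : Fin n) (x : E n) : ℝ := φ x * fderiv ℝ f x (e i)
  have he (i : Fin n) : ‖e i‖ = 1 := by simp [e]
  have hfe (i : Fin n) (x : E n) : |fderiv ℝ f x (e i)| ≤ D := by
    simpa [he] using (fderiv ℝ f x).le_of_opNorm_le (hf' x) (e i)
  have hg (i : Fin n) : ContDiff ℝ 1 (g i) :=
    hφ.mul ((hf.fderiv_right (by norm_num)).clm_apply contDiff_const)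
  have hgD (i : Fin n) (x : E n) : |g i x| ≤ D := by
    rw [abs_mul]
    exact (mul_le_of_le_one_left (abs_nonneg _) (hφ₁ x)).trans (hfe i x)
  have hg' (i : Fin n) (x : E n) : |fderiv ℝ (g i) x (e i)| ≤ L * D + D := by
    rw [fderiv_mul_partial_apply hdiff hf]
    refine (abs_add_le _ _).trans (add_le_add ?_ ?_) <;> rw [abs_mul]
    · refine mul_le_mul ?_ (hfe i x) (abs_nonneg _) hL₀
      simpa [he] using (fderiv ℝ φ x).le_of_opNorm_le (hφL x) (e i)
    · refine (mul_le_of_le_one_left (abs_nonneg _) (hφ₁ x)).trans (LE.le.trans ?_ (hf'' x))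
      simpa [he] using (fderiv ℝ (fderiv ℝ f) x).le_opNorm₂ (e i) (e i)
  have hint (i : Fin n) := hv.integrable_weightedPartial_mul hb (hg i) (hgD i) (hg' i)
  simp only [fluxDensity_eq_sum_weightedPartial hdiff hf, Finset.sum_mul]
  refine ⟨integrable_finsetSum _ fun i _ => hint i, ?_⟩
  rw [integral_finsetSum _ fun i _ => hint i]
  exact Finset.sum_eq_zero fun i _ =>
    hv.integral_weightedPartial_mul_eq_zero hb (hg i) (hgD i) (hg' i)

lemma IsDrift.abs_generator_le (hb : IsDrift b δ β) {D : ℝ} (hf' : ∀ x, ‖fderiv ℝ f x‖ ≤ D)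
    (hf'' : ∀ x, ‖fderiv ℝ (fderiv ℝ f) x‖ ≤ D) (x : E n) :
    |generator b f x| ≤ (n + β) * D * (1 + ‖x‖) ^ 3 := by
  have hβ := hb.upper_pos
  have hD : 0 ≤ D := (norm_nonneg _).trans (hf' 0)
  have htrace : |bilinTrace (fderiv ℝ (fderiv ℝ f) x)| ≤ n * D :=
    (abs_bilinTrace_le _).trans (mul_le_mul_of_nonneg_left (hf'' x) n.cast_nonneg)
  have hdrift : |fderiv ℝ f x (driftField b x)| ≤ D * (β * ‖x‖) :=
    ((fderiv ℝ f x).le_opNorm _).trans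
      (mul_le_mul (hf' x) (hb.norm_driftField_le x) (norm_nonneg _) hD)
  calc |generator b f x| ≤ n * D + D * (β * ‖x‖) := (abs_sub _ _).trans (add_le_add htrace hdrift)
    _ ≤ n * D * (1 + ‖x‖) ^ 3 + D * (β * (1 + ‖x‖) ^ 3) := by
        have := le_mul_of_one_le_right (by positivity : 0 ≤ n * D) (one_le_one_add_norm_cube x)
        have := norm_le_one_add_norm_cube x
        gcongr
    _ = (n + β) * D * (1 + ‖x‖) ^ 3 := by ring

end Generator

/-! ### Local error of the Euler scheme -/

section EulerError

variable {n : ℕ} {b : ℝ → ℝ} {δ β D r : ℝ} {f : E n → ℝ}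

/-- The constant in the local error bound for `eulerStep`, for a density whose derivatives of
order two and three are bounded by `D`. -/
noncomputable def eulerErrorConst (n : ℕ) (β D : ℝ) : ℝ :=
  3 * D * thirdMoment n + D * β ^ 2 + n * D * β

lemma eulerErrorConst_nonneg (hβ : 0 ≤ β) (hD : 0 ≤ D) : 0 ≤ eulerErrorConst n β D := by
  have := thirdMoment_nonneg (n := n)
  unfold eulerErrorConst
  positivity

lemma sqrt_two_mul_sq_pow_three_le (hr : 0 ≤ r) : √(2 * r ^ 2) ^ 3 ≤ 3 * r ^ 3 := by
  have hsqrt : √(2 * r ^ 2) ≤ 3 / 2 * r :=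
    Real.sqrt_le_iff.2 ⟨by positivity, by nlinarith [sq_nonneg r]⟩
  calc √(2 * r ^ 2) ^ 3 = 2 * r ^ 2 * √(2 * r ^ 2) := by
        rw [pow_succ, Real.sq_sqrt (by positivity)]
    _ ≤ 2 * r ^ 2 * (3 / 2 * r) := by gcongr
    _ = 3 * r ^ 3 := by ring

lemma abs_eulerStep_sub_driftStep_le (hf : ContDiff ℝ 3 f) {F : ℝ} (hF : ∀ x, ‖f x‖ ≤ F)
    (hD : ∀ x, ‖iteratedFDeriv ℝ 3 f x‖ ≤ D) (hr : 0 ≤ r) (x : E n) :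
    |eulerStep b (r ^ 2) f x - f (driftStep b (r ^ 2) x) -
        r ^ 2 * bilinTrace (fderiv ℝ (fderiv ℝ f) (driftStep b (r ^ 2) x))| ≤
      3 * D * thirdMoment n * r ^ 3 := by
  have hD₀ : 0 ≤ D := (norm_nonneg _).trans (hD 0)
  have htaylor := abs_noise_sub_sub_bilinTrace_le hf hF hD (Real.sqrt_nonneg (2 * r ^ 2))
    (driftStep b (r ^ 2) x)
  rw [Real.sq_sqrt (by positivity), mul_div_cancel_left₀ _ two_ne_zero] at htaylor
  calc _ ≤ D * √(2 * r ^ 2) ^ 3 * thirdMoment n := htaylor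
    _ ≤ D * (3 * r ^ 3) * thirdMoment n := by
        have := thirdMoment_nonneg (n := n)
        have := sqrt_two_mul_sq_pow_three_le hr
        gcongr
    _ = 3 * D * thirdMoment n * r ^ 3 := by ring

lemma abs_comp_driftStep_sub_add_fderiv_le (hf : ContDiff ℝ 2 f)
    (hD : ∀ x, ‖iteratedFDeriv ℝ 2 f x‖ ≤ D) (h : ℝ) (x : E n) :
    |f (driftStep b h x) - f x + h * fderiv ℝ f x (driftField b x)| ≤
      D * (h ^ 2 * ‖driftField b x‖ ^ 2) := by
  have hf' : ContDiff ℝ 1 (fderiv ℝ f) := hf.fderiv_right (by norm_num)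
  have hlip (y z : E n) : ‖fderiv ℝ f y - fderiv ℝ f z‖ ≤ D * ‖y - z‖ :=
    convex_univ.norm_image_sub_le_of_norm_fderiv_le
      (fun w _ => hf'.differentiable one_ne_zero w)
      (fun w _ => (norm_fderiv_fderiv f w).trans_le (hD w)) trivial trivial
  have htaylor := norm_sub_sub_fderiv_le (hf.differentiable two_ne_zero)
    ((norm_nonneg _).trans (hD 0)) hlip x (-h • driftField b x)
  rw [norm_smul, mul_pow, norm_neg, Real.norm_eq_abs h, sq_abs, map_smul, smul_eq_mul, neg_mul,
    sub_neg_eq_add] at htaylor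
  exact htaylor

lemma abs_bilinTrace_driftStep_sub_le (hf : ContDiff ℝ 3 f)
    (hD : ∀ x, ‖iteratedFDeriv ℝ 3 f x‖ ≤ D) {h : ℝ} (hh : 0 ≤ h) (x : E n) :
    |bilinTrace (fderiv ℝ (fderiv ℝ f) (driftStep b h x)) -
        bilinTrace (fderiv ℝ (fderiv ℝ f) x)| ≤ n * (D * (h * ‖driftField b x‖)) := by
  have hstep : driftStep b h x - x = -h • driftField b x := by
    rw [driftStep]
    abel
  rw [← bilinTrace_sub]
  refine (abs_bilinTrace_le _).trans (mul_le_mul_of_nonneg_left ?_ n.cast_nonneg)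
  refine (norm_fderiv_fderiv_sub_le hf hD _ _).trans_eq ?_
  rw [hstep, norm_smul, norm_neg, Real.norm_of_nonneg hh]

lemma IsDrift.norm_driftField_sq_le (hb : IsDrift b δ β) (x : E n) :
    ‖driftField b x‖ ^ 2 ≤ β ^ 2 * (1 + ‖x‖) ^ 3 := by
  have hsq : ‖x‖ ^ 2 ≤ (1 + ‖x‖) ^ 3 := by
    nlinarith [norm_nonneg x, pow_nonneg (norm_nonneg x) 3, sq_nonneg ‖x‖]
  calc ‖driftField b x‖ ^ 2 ≤ (β * ‖x‖) ^ 2 := by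
        gcongr
        exact hb.norm_driftField_le x
    _ = β ^ 2 * ‖x‖ ^ 2 := mul_pow _ _ _
    _ ≤ β ^ 2 * (1 + ‖x‖) ^ 3 := by gcongr

lemma IsDrift.abs_eulerStep_sub_sub_generator_le (hb : IsDrift b δ β) {F : ℝ}
    (hF : ∀ x, ‖f x‖ ≤ F) (hf : ContDiff ℝ 3 f) (hD₂ : ∀ x, ‖iteratedFDeriv ℝ 2 f x‖ ≤ D)
    (hD₃ : ∀ x, ‖iteratedFDeriv ℝ 3 f x‖ ≤ D) (hr₀ : 0 ≤ r) (hr₁ : r ≤ 1) (x : E n) :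
    |eulerStep b (r ^ 2) f x - f x - r ^ 2 * generator b f x| ≤
      eulerErrorConst n β D * (r ^ 3 * (1 + ‖x‖) ^ 3) := by
  have hD : 0 ≤ D := (norm_nonneg _).trans (hD₂ 0)
  have hβ := hb.upper_pos
  have hmoment := thirdMoment_nonneg (n := n)
  have hr₄ : r ^ 4 ≤ r ^ 3 := pow_le_pow_of_le_one hr₀ hr₁ (by norm_num)
  have hfield₁ : ‖driftField b x‖ ≤ β * (1 + ‖x‖) ^ 3 :=
    (hb.norm_driftField_le x).trans (mul_le_mul_of_nonneg_left (norm_le_one_add_norm_cube x) hβ.le)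
  have hfield₂ := hb.norm_driftField_sq_le x
  set x' := driftStep b (r ^ 2) x
  have hnoise := abs_eulerStep_sub_driftStep_le (b := b) hf hF hD₃ hr₀ x
  have hdrift := abs_comp_driftStep_sub_add_fderiv_le (b := b) (hf.of_le (by norm_num)) hD₂
    (r ^ 2) x
  have htrace := abs_bilinTrace_driftStep_sub_le (b := b) hf hD₃ (sq_nonneg r) x
  calc |eulerStep b (r ^ 2) f x - f x - r ^ 2 * generator b f x|
      = |(eulerStep b (r ^ 2) f x - f x' - r ^ 2 * bilinTrace (fderiv ℝ (fderiv ℝ f) x')) +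
          (f x' - f x + r ^ 2 * fderiv ℝ f x (driftField b x)) +
          r ^ 2 * (bilinTrace (fderiv ℝ (fderiv ℝ f) x') -
            bilinTrace (fderiv ℝ (fderiv ℝ f) x))| := by
        rw [generator]
        ring_nf
    _ ≤ 3 * D * thirdMoment n * r ^ 3 + D * ((r ^ 2) ^ 2 * ‖driftField b x‖ ^ 2) +
          r ^ 2 * (n * (D * (r ^ 2 * ‖driftField b x‖))) := by
        refine (abs_add_three _ _ _).trans (add_le_add_three hnoise hdrift ?_)
        rw [abs_mul, abs_of_nonneg (sq_nonneg r)]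
        gcongr
    _ = 3 * D * thirdMoment n * r ^ 3 * 1 + D * (r ^ 4 * ‖driftField b x‖ ^ 2) +
          n * D * (r ^ 4 * ‖driftField b x‖) := by ring
    _ ≤ 3 * D * thirdMoment n * r ^ 3 * (1 + ‖x‖) ^ 3 +
          D * (r ^ 3 * (β ^ 2 * (1 + ‖x‖) ^ 3)) + n * D * (r ^ 3 * (β * (1 + ‖x‖) ^ 3)) := by
        have := one_le_one_add_norm_cube x
        gcongr
    _ = eulerErrorConst n β D * (r ^ 3 * (1 + ‖x‖) ^ 3) := by
        rw [eulerErrorConst]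
        ring

end EulerError

section StepError

variable {n : ℕ} {b v : ℝ → ℝ} {δ β A F G L M r : ℝ} {f φ : E n → ℝ}

namespace IsAdmissible

lemma bound_pos (hf : IsAdmissible A F G f) : 0 < F := (hf.pos 0).trans_le (hf.le 0)

lemma norm_iteratedFDeriv_le (hf : IsAdmissible A F G f) (hA : 0 ≤ A) {i : ℕ} (h1 : 1 ≤ i)
    (h3 : i ≤ 3) (x : E n) : ‖iteratedFDeriv ℝ i f x‖ ≤ A * F :=
  (hf.relDerivBound i h1 h3 x).trans (mul_le_mul_of_nonneg_left (hf.le x) hA)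

lemma norm_fderiv_le_mul (hf : IsAdmissible A F G f) (hA : 0 ≤ A) (x : E n) :
    ‖fderiv ℝ f x‖ ≤ A * F := by
  rw [← norm_iteratedFDeriv_one]
  exact hf.norm_iteratedFDeriv_le hA le_rfl (by norm_num) x

lemma norm_fderiv_fderiv_le_mul (hf : IsAdmissible A F G f) (hA : 0 ≤ A) (x : E n) :
    ‖fderiv ℝ (fderiv ℝ f) x‖ ≤ A * F :=
  (norm_fderiv_fderiv f x).trans_le
    (hf.norm_iteratedFDeriv_le hA (by norm_num) (by norm_num) x)

lemma fderiv_eq_smul_fderiv_logDensity (hf : IsAdmissible A F G f) (x : E n) :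
    fderiv ℝ f x = f x • fderiv ℝ (logDensity f) x := by
  have hlog : fderiv ℝ (logDensity f) x = (f x)⁻¹ • fderiv ℝ f x :=
    ((hf.contDiff.differentiable three_ne_zero x).hasFDerivAt.log (hf.pos x).ne').fderiv
  rw [hlog, smul_smul, mul_inv_cancel₀ (hf.pos x).ne', one_smul]

lemma norm_riesz_fderiv_logDensity_le (hf : IsAdmissible A F G f) (hA : 1 ≤ A) (x : E n) :
    ‖riesz (E n) (fderiv ℝ (logDensity f) x)‖ ≤ logDerivConst * A ^ 3 := by
  refine ((riesz (E n)).le_of_opNorm_le (norm_riesz_le_one _) _).trans ?_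
  rw [one_mul, ← norm_iteratedFDeriv_one]
  exact hf.norm_iteratedFDeriv_logDensity_le hA le_rfl (by norm_num) x

end IsAdmissible

lemma IsDrift.abs_eulerStep_sub_le (hb : IsDrift b δ β) (hf : IsAdmissible A F G f) (hA : 1 ≤ A)
    (hr₀ : 0 ≤ r) (hr₁ : r ≤ 1) (x : E n) :
    |eulerStep b (r ^ 2) f x - f x| ≤
      ((n + β) * (A * F) + eulerErrorConst n β (A * F)) * (r ^ 2 * (1 + ‖x‖) ^ 3) := by
  have hA₀ : 0 ≤ A := zero_le_one.trans hA
  have hr₃ : r ^ 3 ≤ r ^ 2 := pow_le_pow_of_le_one hr₀ hr₁ (by norm_num)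
  have hconst := eulerErrorConst_nonneg (n := n) hb.upper_pos.le
    (mul_nonneg hA₀ hf.bound_pos.le)
  have heuler := hb.abs_eulerStep_sub_sub_generator_le hf.norm_le hf.contDiff
    (hf.norm_iteratedFDeriv_le hA₀ (by norm_num) (by norm_num))
    (hf.norm_iteratedFDeriv_le hA₀ (by norm_num) (by norm_num)) hr₀ hr₁ x
  have hgen := hb.abs_generator_le (hf.norm_fderiv_le_mul hA₀) (hf.norm_fderiv_fderiv_le_mul hA₀) x
  calc |eulerStep b (r ^ 2) f x - f x|
      = |(eulerStep b (r ^ 2) f x - f x - r ^ 2 * generator b f x) + r ^ 2 * generator b f x| := by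
        ring_nf
    _ ≤ eulerErrorConst n β (A * F) * (r ^ 3 * (1 + ‖x‖) ^ 3) +
          r ^ 2 * ((n + β) * (A * F) * (1 + ‖x‖) ^ 3) := by
        refine (abs_add_le _ _).trans (add_le_add heuler ?_)
        rw [abs_mul, abs_of_nonneg (sq_nonneg r)]
        gcongr
    _ ≤ eulerErrorConst n β (A * F) * (r ^ 2 * (1 + ‖x‖) ^ 3) +
          r ^ 2 * ((n + β) * (A * F) * (1 + ‖x‖) ^ 3) := by gcongr
    _ = ((n + β) * (A * F) + eulerErrorConst n β (A * F)) * (r ^ 2 * (1 + ‖x‖) ^ 3) := by ring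

namespace IsTestFunction

lemma abs_comp_transportStep_sub_le (hφ : IsTestFunction L M φ) (hf : IsAdmissible A F G f)
    (hA : 1 ≤ A) {h : ℝ} (hh : 0 ≤ h) (x : E n) :
    |φ (transportStep h f x) - φ x| ≤ L * (logDerivConst * A ^ 3) * h := by
  have hmean := convex_univ.norm_image_sub_le_of_norm_fderiv_le
    (fun y _ => hφ.contDiff.differentiable one_ne_zero y) (fun y _ => hφ.norm_fderiv_le y)
    (Set.mem_univ x) (Set.mem_univ (transportStep h f x))
  have hL : 0 ≤ L := (norm_nonneg _).trans (hφ.norm_fderiv_le 0)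
  rw [transportStep, add_sub_cancel_left, norm_smul, Real.norm_of_nonneg hh] at hmean
  calc _ ≤ L * (h * ‖riesz (E n) (fderiv ℝ (logDensity f) x)‖) := hmean
    _ ≤ L * (h * (logDerivConst * A ^ 3)) := by
        have := hf.norm_riesz_fderiv_logDensity_le hA x
        gcongr
    _ = L * (logDerivConst * A ^ 3) * h := by ring

lemma abs_comp_transportStep_sub_sub_fderiv_le (hφ : IsTestFunction L M φ) (hM : 0 ≤ M)
    (hf : IsAdmissible A F G f) (hA : 1 ≤ A) (h : ℝ) (x : E n) :
    |φ (transportStep h f x) - φ x -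
        h * fderiv ℝ φ x (riesz (E n) (fderiv ℝ (logDensity f) x))| ≤
      M * (logDerivConst * A ^ 3) ^ 2 * h ^ 2 := by
  have htaylor := norm_sub_sub_fderiv_le (hφ.contDiff.differentiable one_ne_zero) hM
    hφ.norm_fderiv_sub_le x (h • riesz (E n) (fderiv ℝ (logDensity f) x))
  rw [norm_smul, map_smul, smul_eq_mul, mul_pow, Real.norm_eq_abs h, sq_abs] at htaylor
  calc _ ≤ M * (h ^ 2 * ‖riesz (E n) (fderiv ℝ (logDensity f) x)‖ ^ 2) := htaylor
    _ ≤ M * (h ^ 2 * (logDerivConst * A ^ 3) ^ 2) := by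
        have := hf.norm_riesz_fderiv_logDensity_le hA x
        gcongr
    _ = M * (logDerivConst * A ^ 3) ^ 2 * h ^ 2 := by ring

end IsTestFunction

/-- The constant in the local error bound for the weak evolution of an admissible density against
a test function: `D` bounds the derivatives of the density, `K` those of its logarithm, `F` the
density itself, `L` and `M` are the constants of the test function. -/
noncomputable def stepErrorConst (n : ℕ) (β D K F L M : ℝ) : ℝ :=
  M * K ^ 2 * F + L * K * ((n + β) * D + eulerErrorConst n β D) + eulerErrorConst n β D

lemma IsAdmissible.mul_sub_sub_fluxDensity (hf : IsAdmissible A F G f) (h T Q : ℝ) (x : E n) :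
    T * Q - φ x * f x - h * fluxDensity b φ f x =
      (T - φ x - h * fderiv ℝ φ x (riesz (E n) (fderiv ℝ (logDensity f) x))) * f x +
        (T - φ x) * (Q - f x) + φ x * (Q - f x - h * generator b f x) := by
  rw [fluxDensity, hf.fderiv_eq_smul_fderiv_logDensity x, map_smul, map_smul, smul_eq_mul]
  ring

lemma abs_comp_transportStep_mul_eulerStep_sub_le (hb : IsDrift b δ β) (hA : 1 ≤ A) (hM : 0 ≤ M)
    (hf : IsAdmissible A F G f) (hφ : IsTestFunction L M φ) (hr₀ : 0 ≤ r) (hr₁ : r ≤ 1)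
    (x : E n) :
    |φ (transportStep (r ^ 2) f x) * eulerStep b (r ^ 2) f x - φ x * f x -
        r ^ 2 * fluxDensity b φ f x| ≤
      stepErrorConst n β (A * F) (logDerivConst * A ^ 3) F L M * (r ^ 3 * (1 + ‖x‖) ^ 3) := by
  have hA₀ : 0 ≤ A := zero_le_one.trans hA
  have hβ := hb.upper_pos
  have hF := hf.bound_pos
  have hL : 0 ≤ L := (norm_nonneg _).trans (hφ.norm_fderiv_le 0)
  have hr₄ : r ^ 4 ≤ r ^ 3 := pow_le_pow_of_le_one hr₀ hr₁ (by norm_num)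
  have heuler := hb.abs_eulerStep_sub_sub_generator_le hf.norm_le hf.contDiff
    (hf.norm_iteratedFDeriv_le hA₀ (by norm_num) (by norm_num))
    (hf.norm_iteratedFDeriv_le hA₀ (by norm_num) (by norm_num)) hr₀ hr₁ x
  have hconst := eulerErrorConst_nonneg (n := n) hβ.le (mul_nonneg hA₀ hF.le)
  have heuler₁ := hb.abs_eulerStep_sub_le hf hA hr₀ hr₁ x
  have htaylor := hφ.abs_comp_transportStep_sub_sub_fderiv_le hM hf hA (r ^ 2) x
  have htaylor₁ := hφ.abs_comp_transportStep_sub_le hf hA (sq_nonneg r) x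
  set K := logDerivConst * A ^ 3
  set C := eulerErrorConst n β (A * F)
  have hK : 0 ≤ K := mul_nonneg logDerivConst_nonneg (by positivity)
  set T := transportStep (r ^ 2) f x
  set Q := eulerStep b (r ^ 2) f x
  calc |φ T * Q - φ x * f x - r ^ 2 * fluxDensity b φ f x|
      ≤ M * K ^ 2 * (r ^ 2) ^ 2 * F +
          L * K * r ^ 2 * (((n + β) * (A * F) + C) * (r ^ 2 * (1 + ‖x‖) ^ 3)) +
          1 * (C * (r ^ 3 * (1 + ‖x‖) ^ 3)) := by
        rw [hf.mul_sub_sub_fluxDensity]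
        refine (abs_add_three _ _ _).trans ?_
        rw [abs_mul, abs_mul, abs_mul]
        have hfx : |f x| ≤ F := hf.norm_le x
        have hφx := hφ.abs_le_one x
        gcongr
    _ = M * K ^ 2 * F * (r ^ 4 * 1) + L * K * ((n + β) * (A * F) + C) * (r ^ 4 * (1 + ‖x‖) ^ 3) +
          C * (r ^ 3 * (1 + ‖x‖) ^ 3) := by ring
    _ ≤ M * K ^ 2 * F * (r ^ 3 * (1 + ‖x‖) ^ 3) +
          L * K * ((n + β) * (A * F) + C) * (r ^ 3 * (1 + ‖x‖) ^ 3) +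
          C * (r ^ 3 * (1 + ‖x‖) ^ 3) := by
        have := one_le_one_add_norm_cube x
        gcongr
    _ = stepErrorConst n β (A * F) K F L M * (r ^ 3 * (1 + ‖x‖) ^ 3) := by
        rw [stepErrorConst]
        ring

lemma IsTestFunction.integrable_mul_mul_productDensity (hφ : IsTestFunction L M φ)
    (hf : IsAdmissible A F G f) (hv : IsPotential v b δ) (hδ : 0 < δ) :
    Integrable fun x => φ x * f x * productDensity v x := by
  refine hv.integrable_mul_of_abs_le_const hδ (C := F)
    (hφ.contDiff.continuous.mul hf.contDiff.continuous) fun x => ?_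
  rw [abs_mul]
  exact (mul_le_of_le_one_left (abs_nonneg _) (hφ.abs_le_one x)).trans (hf.norm_le x)

lemma abs_integral_transportStep_eulerStep_sub_le (hb : IsDrift b δ β) (hv : IsPotential v b δ)
    (hA : 1 ≤ A) (hM : 0 ≤ M) (hf : IsAdmissible A F G f) (hφ : IsTestFunction L M φ)
    (hr₀ : 0 ≤ r) (hr₁ : r ≤ 1) (hβ : r ^ 2 * β ≤ 1)
    (hsmall : r ^ 2 * (logDerivConst * A ^ 3) ≤ 1) :
    |(∫ x, φ (transportStep (r ^ 2) f x) * eulerStep b (r ^ 2) f x * productDensity v x) -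
        ∫ x, φ x * f x * productDensity v x| ≤
      stepErrorConst n β (A * F) (logDerivConst * A ^ 3) F L M *
        (∫ x : E n, (1 + ‖x‖) ^ 3 * productDensity v x) * r ^ 3 := by
  have hA₀ : 0 ≤ A := zero_le_one.trans hA
  have hint := hφ.integrable_mul_mul_productDensity hf hv hb.pos
  have hint' := (hφ.comp_transportStep hM hf hA (sq_nonneg r) hsmall)
    |>.integrable_mul_mul_productDensity (hf.eulerStep hb (sq_nonneg r) hβ hA₀) hv hb.pos
  obtain ⟨hflux, hflux_zero⟩ := hv.integrable_and_integral_fluxDensity_eq_zero hb hφ.contDiff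
    hφ.abs_le_one hφ.norm_fderiv_le (hf.contDiff.of_le (by norm_num)) (hf.norm_fderiv_le_mul hA₀)
    (hf.norm_fderiv_fderiv_le_mul hA₀)
  have herror : (∫ x, φ (transportStep (r ^ 2) f x) * eulerStep b (r ^ 2) f x *
        productDensity v x) - (∫ x, φ x * f x * productDensity v x) =
      ∫ x, (φ (transportStep (r ^ 2) f x) * eulerStep b (r ^ 2) f x - φ x * f x -
        r ^ 2 * fluxDensity b φ f x) * productDensity v x := by
    simp_rw [sub_mul, mul_assoc (r ^ 2)]
    rw [integral_sub (by exact hint'.sub hint) (hflux.const_mul _), integral_sub hint' hint,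
      integral_const_mul, hflux_zero, mul_zero, sub_zero]
  rw [herror, mul_right_comm, ← integral_const_mul, ← Real.norm_eq_abs]
  refine norm_integral_le_of_norm_le ((hv.integrable_one_add_norm_cube_mul hb.pos).const_mul _)
    (.of_forall fun x => ?_)
  rw [norm_mul, Real.norm_of_nonneg (productDensity_pos x).le]
  refine (mul_le_mul_of_nonneg_right (abs_comp_transportStep_mul_eulerStep_sub_le hb hA hM hf hφ
    hr₀ hr₁ x) (productDensity_pos x).le).trans_eq ?_
  ring

end StepError

/-! ### Approximate transport of a product measure to an admissible perturbation -/

section WeightedMean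

variable {n : ℕ}

/-- The mean of `g` under the probability measure with density proportional to `ρ`. -/
noncomputable def weightedMean (ρ g : E n → ℝ) : ℝ := (∫ x, g x * ρ x) / ∫ x, ρ x

/-- `T` is a contraction fixing the origin which, up to an error `ε` in the mean of each test
function with constants `L` and `M`, pushes the probability measure with density proportional to
`ρ` to the one with density proportional to `σ`. -/
structure IsApproxTransport (L M ε : ℝ) (ρ σ : E n → ℝ) (T : E n → E n) : Prop where
  lipschitzWith : LipschitzWith 1 T
  map_zero : T 0 = 0
  abs_weightedMean_sub_le : ∀ φ, IsTestFunction L M φ →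
    |weightedMean ρ (φ ∘ T) - weightedMean σ φ| ≤ ε

end WeightedMean

section Flow

variable {n : ℕ} {b v : ℝ → ℝ} {δ β r A A' F G L M M' : ℝ} {f φ : E n → ℝ}

lemma IsAdmissible.mono (hf : IsAdmissible A F G f) (hA : A ≤ A') : IsAdmissible A' F G f where
  __ := hf
  relDerivBound := hf.relDerivBound.mono hA fun x => (hf.pos x).le

lemma IsTestFunction.mono {L' : ℝ} (hφ : IsTestFunction L M φ) (hL : L ≤ L') (hM : M ≤ M') :
    IsTestFunction L' M' φ where
  __ := hφ
  norm_fderiv_le x := (hφ.norm_fderiv_le x).trans hL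
  norm_fderiv_sub_le x y := (hφ.norm_fderiv_sub_le x y).trans (by gcongr)

lemma isTestFunction_one (hL : 0 ≤ L) (hM : 0 ≤ M) :
    IsTestFunction L M (fun _ : E n => (1 : ℝ)) where
  contDiff := contDiff_const
  abs_le_one _ := by simp
  norm_fderiv_le _ := by simpa using hL
  norm_fderiv_sub_le _ _ := by simpa using mul_nonneg hM (norm_nonneg _)

/-- The density obtained from `f` by `m` steps of size `h` of the Euler scheme. -/
noncomputable def eulerIterate (b : ℝ → ℝ) (h : ℝ) (f : E n → ℝ) (m : ℕ) : E n → ℝ :=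
  (eulerStep b h)^[m] f

/-- The composition of the first `m` transport steps along the Euler scheme started at `f`, the
last one being applied first. -/
noncomputable def transportIterate (b : ℝ → ℝ) (h : ℝ) (f : E n → ℝ) : ℕ → E n → E n
  | 0 => id
  | m + 1 => transportIterate b h f m ∘ transportStep h (eulerIterate b h f m)

lemma eulerIterate_succ (b : ℝ → ℝ) (h : ℝ) (f : E n → ℝ) (m : ℕ) :
    eulerIterate b h f (m + 1) = eulerStep b h (eulerIterate b h f m) :=
  Function.iterate_succ_apply' _ _ _

lemma isAdmissible_eulerIterate (hb : IsDrift b δ β) (hβ : r ^ 2 * β ≤ 1) (hA : 0 ≤ A)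
    (hf : IsAdmissible A F G f) (m : ℕ) :
    IsAdmissible (A * (1 + 4 * (r ^ 2 * (n * β))) ^ m) F (G * (1 - r ^ 2 * δ) ^ m)
      (eulerIterate b (r ^ 2) f m) := by
  induction m with
  | zero =>
    rw [pow_zero, pow_zero, mul_one, mul_one]
    exact hf
  | succ m ih =>
    have hβ₀ := hb.upper_pos
    have hstep := ih.eulerStep hb (sq_nonneg r) hβ (by positivity)
    rwa [mul_assoc A, mul_assoc G, ← pow_succ, ← pow_succ, ← eulerIterate_succ] at hstep

section TransportIterate

variable {h : ℝ} {G : ℕ → ℝ} {m : ℕ}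

lemma lipschitzWith_one_transportIterate (hh : 0 ≤ h) (hA : 1 ≤ A)
    (hsmall : h * (logDerivConst * A ^ 3) ≤ 1)
    (hf : ∀ j < m, IsAdmissible A F (G j) (eulerIterate b h f j)) :
    LipschitzWith 1 (transportIterate b h f m) := by
  induction m with
  | zero => exact LipschitzWith.id
  | succ m ih =>
    rw [transportIterate, ← one_mul 1]
    exact (ih fun j hj => hf j (hj.trans m.lt_succ_self)).comp
      ((hf m m.lt_succ_self).lipschitzWith_one_transportStep hA hh hsmall)

lemma transportIterate_zero (hf : ∀ j < m, IsAdmissible A F (G j) (eulerIterate b h f j)) :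
    transportIterate b h f m 0 = 0 := by
  induction m with
  | zero => rfl
  | succ m ih =>
    rw [transportIterate, Function.comp_apply, (hf m m.lt_succ_self).transportStep_zero]
    exact ih fun j hj => hf j (hj.trans m.lt_succ_self)

lemma IsTestFunction.comp_transportIterate (hφ : IsTestFunction L M φ) (hM : 0 ≤ M) (hh : 0 ≤ h)
    (hA : 1 ≤ A) (hsmall : h * (logDerivConst * A ^ 3) ≤ 1)
    (hf : ∀ j < m, IsAdmissible A F (G j) (eulerIterate b h f j)) :
    IsTestFunction L (M + m * (h * (logDerivConst * A ^ 3) * L))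
      (φ ∘ transportIterate b h f m) := by
  have hL : 0 ≤ L := (norm_nonneg _).trans (hφ.norm_fderiv_le 0)
  have hK := logDerivConst_nonneg
  induction m with
  | zero => simpa [transportIterate] using hφ
  | succ m ih =>
    have hstep := (ih fun j hj => hf j (hj.trans m.lt_succ_self)).comp_transportStep (by positivity)
      (hf m m.lt_succ_self) hA hh hsmall
    exact hstep.mono le_rfl (by push_cast; linarith)

end TransportIterate

lemma abs_integral_transportIterate_sub_le (hb : IsDrift b δ β) (hv : IsPotential v b δ)
    (hA : 1 ≤ A) (hM : 0 ≤ M) (hφ : IsTestFunction L M φ) (hr₀ : 0 ≤ r) (hr₁ : r ≤ 1)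
    (hβ : r ^ 2 * β ≤ 1) (hsmall : r ^ 2 * (logDerivConst * A ^ 3) ≤ 1) {G : ℕ → ℝ} {m : ℕ}
    (hf : ∀ j < m, IsAdmissible A F (G j) (eulerIterate b (r ^ 2) f j))
    (hM' : M + m * (r ^ 2 * (logDerivConst * A ^ 3) * L) ≤ M') :
    |(∫ x, φ (transportIterate b (r ^ 2) f m x) * eulerIterate b (r ^ 2) f m x *
          productDensity v x) - ∫ x, φ x * f x * productDensity v x| ≤
      m * (stepErrorConst n β (A * F) (logDerivConst * A ^ 3) F L M' *
        (∫ x : E n, (1 + ‖x‖) ^ 3 * productDensity v x) * r ^ 3) := by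
  have hL : 0 ≤ L := (norm_nonneg _).trans (hφ.norm_fderiv_le 0)
  have hK := logDerivConst_nonneg
  induction m with
  | zero => simp [transportIterate, eulerIterate]
  | succ m ih =>
    have hf' : ∀ j < m, _ := fun j hj => hf j (hj.trans m.lt_succ_self)
    have hMm : M + m * (r ^ 2 * (logDerivConst * A ^ 3) * L) ≤ M' := by
      refine le_trans ?_ hM'
      gcongr
      exact m.le_succ
    have hφm := (hφ.comp_transportIterate hM (sq_nonneg r) hA hsmall hf').mono le_rfl hMm
    have hstep := abs_integral_transportStep_eulerStep_sub_le hb hv hA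
      ((by positivity : (0 : ℝ) ≤ _).trans hMm) (hf m m.lt_succ_self) hφm hr₀ hr₁ hβ hsmall
    rw [eulerIterate_succ, Nat.cast_succ, add_one_mul]
    exact (abs_sub_le _ _ _).trans ((add_le_add hstep (ih hf' hMm)).trans_eq (add_comm _ _))

end Flow

section Equilibrium

variable {n : ℕ} {b v : ℝ → ℝ} {δ β A A' F G G' L M : ℝ} {f g φ : E n → ℝ}

lemma IsPotential.integrable_productDensity (hv : IsPotential v b δ) (hδ : 0 < δ) :
    Integrable fun x : E n => productDensity v x := by
  simpa only [one_mul] using hv.integrable_mul_of_abs_le_const (n := n) (g := fun _ => 1) hδ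
    continuous_const fun _ => abs_one.le

lemma IsPotential.integrable_norm_mul_productDensity (hv : IsPotential v b δ) (hδ : 0 < δ) :
    Integrable fun x : E n => ‖x‖ * productDensity v x :=
  hv.integrable_mul_of_abs_le (C := 1) hδ continuous_norm fun x => by
    rw [abs_norm, one_mul]
    exact norm_le_one_add_norm_cube x

lemma IsPotential.integral_mul_productDensity_pos (hv : IsPotential v b δ) (hδ : 0 < δ)
    (hg : Continuous g) (hg₀ : ∀ x, 0 < g x) {C : ℝ} (hC : ∀ x, g x ≤ C) :
    0 < ∫ x, g x * productDensity v x := by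
  have hpos (x : E n) : 0 < g x * productDensity v x := mul_pos (hg₀ x) (productDensity_pos x)
  have hint := hv.integrable_mul_of_abs_le_const hδ hg fun x => (abs_of_pos (hg₀ x)).trans_le (hC x)
  rw [integral_pos_iff_support_of_nonneg (fun x => (hpos x).le) hint,
    Function.support_eq_univ fun x => (hpos x).ne']
  exact isOpen_univ.measure_pos _ Set.univ_nonempty

lemma IsPotential.integral_productDensity_pos (hv : IsPotential v b δ) (hδ : 0 < δ) :
    0 < ∫ x : E n, productDensity v x := by
  simpa only [one_mul] using hv.integral_mul_productDensity_pos (n := n) (g := fun _ => 1) hδ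
    continuous_const (fun _ => one_pos) fun _ => le_rfl

lemma IsPotential.abs_integral_mul_productDensity_le (hv : IsPotential v b δ) (hδ : 0 < δ)
    (hφ : ∀ x, |φ x| ≤ 1) : |∫ x, φ x * productDensity v x| ≤ ∫ x : E n, productDensity v x := by
  rw [← Real.norm_eq_abs]
  refine norm_integral_le_of_norm_le (hv.integrable_productDensity hδ) (.of_forall fun x => ?_)
  rw [norm_mul, Real.norm_of_nonneg (productDensity_pos x).le]
  exact mul_le_of_le_one_left (productDensity_pos x).le (hφ x)

lemma IsPotential.abs_integral_mul_sub_apply_zero_le (hv : IsPotential v b δ) (hδ : 0 < δ)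
    (hg : IsAdmissible A F G g) (hφ : Continuous φ) (hφ₁ : ∀ x, |φ x| ≤ 1) :
    |(∫ x, φ x * g x * productDensity v x) - g 0 * ∫ x, φ x * productDensity v x| ≤
      G * ∫ x : E n, ‖x‖ * productDensity v x := by
  have hlip (x : E n) : |g x - g 0| ≤ G * ‖x‖ := by
    simpa only [sub_zero, Real.norm_eq_abs] using convex_univ.norm_image_sub_le_of_norm_fderiv_le
      (fun y _ => hg.contDiff.differentiable three_ne_zero y) (fun y _ => hg.norm_fderiv_le y)
      (Set.mem_univ 0) (Set.mem_univ x)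
  have hint : Integrable fun x => φ x * g x * productDensity v x :=
    hv.integrable_mul_of_abs_le_const hδ (C := F) (hφ.mul hg.contDiff.continuous) fun x => by
      rw [abs_mul]
      exact (mul_le_of_le_one_left (abs_nonneg _) (hφ₁ x)).trans (hg.norm_le x)
  rw [← integral_const_mul, ← integral_const_mul, ← integral_sub hint
    ((hv.integrable_mul_of_abs_le_const hδ hφ hφ₁).const_mul _), ← Real.norm_eq_abs]
  refine norm_integral_le_of_norm_le ((hv.integrable_norm_mul_productDensity hδ).const_mul _)
    (.of_forall fun x => ?_)
  calc ‖φ x * g x * productDensity v x - g 0 * (φ x * productDensity v x)‖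
      = |φ x| * |g x - g 0| * productDensity v x := by
        rw [← abs_mul, ← abs_of_pos (productDensity_pos (v := v) x), ← abs_mul, Real.norm_eq_abs,
          abs_of_pos (productDensity_pos x)]
        ring_nf
    _ ≤ 1 * (G * ‖x‖) * productDensity v x := by
        have := (productDensity_pos (v := v) x).le
        have := hlip x
        have := hφ₁ x
        gcongr
    _ = G * (‖x‖ * productDensity v x) := by ring

lemma abs_div_sub_div_le_of_abs_sub_le {a R P X c η : ℝ} (ha : 0 < a) (hR : 0 < R) (hP : |P| ≤ R)
    (haR : |a - c * R| ≤ η) (hPX : |c * P - X| ≤ η) : |P / R - X / a| ≤ 2 * η / a := by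
  have hη : 0 ≤ η := (abs_nonneg _).trans haR
  have hratio : |P / R| ≤ 1 := by
    rw [abs_div, abs_of_pos hR]
    exact div_le_one_of_le₀ hP hR.le
  calc |P / R - X / a| = |(a - c * R) * (P / R) + (c * P - X)| / a := by
        rw [← abs_of_pos ha, ← abs_div, abs_of_pos ha]
        congr 1
        field_simp
        ring
    _ ≤ (η * 1 + η) / a := by
        gcongr
        refine (abs_add_le _ _).trans (add_le_add ?_ hPX)
        rw [abs_mul]
        gcongr
    _ = 2 * η / a := by ring

-- `g` is the density after a long time; it is nearly constant, so that `g ρ` is nearly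
-- proportional to the equilibrium `ρ`.
lemma IsPotential.abs_weightedMean_comp_sub_le (hv : IsPotential v b δ) (hδ : 0 < δ) (hL : 0 ≤ L)
    (hM : 0 ≤ M) (hf : IsAdmissible A F G f) (hg : IsAdmissible A' F G' g) {T : E n → E n}
    (hT : Continuous T) {η : ℝ}
    (hη : ∀ φ, IsTestFunction L M φ → |(∫ x, φ (T x) * g x * productDensity v x) -
      ∫ x, φ x * f x * productDensity v x| ≤ η) (hφ : IsTestFunction L M φ) :
    |weightedMean (productDensity v) (φ ∘ T) -
        weightedMean (fun x => f x * productDensity v x) φ| ≤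
      2 * (η + G' * ∫ x : E n, ‖x‖ * productDensity v x) /
        ∫ x, f x * productDensity v x := by
  have hclose {ψ : E n → ℝ} (hψ : IsTestFunction L M ψ) :
      |g 0 * (∫ x, ψ (T x) * productDensity v x) - ∫ x, ψ x * f x * productDensity v x| ≤
        η + G' * ∫ x : E n, ‖x‖ * productDensity v x := by
    have hnear := hv.abs_integral_mul_sub_apply_zero_le hδ hg
      (hψ.contDiff.continuous.comp hT) fun x => hψ.abs_le_one (T x)
    rw [abs_sub_comm] at hnear
    exact (abs_sub_le _ _ _).trans ((add_le_add hnear (hη ψ hψ)).trans_eq (add_comm _ _))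
  have hone := hclose (isTestFunction_one hL hM)
  simp only [one_mul] at hone
  simp only [weightedMean, Function.comp_apply, ← mul_assoc]
  exact abs_div_sub_div_le_of_abs_sub_le
    (hv.integral_mul_productDensity_pos hδ hf.contDiff.continuous hf.pos hf.le)
    (hv.integral_productDensity_pos hδ)
    (hv.abs_integral_mul_productDensity_le hδ fun x => hφ.abs_le_one (T x))
    ((abs_sub_comm _ _).trans_le hone) (hclose hφ)

end Equilibrium

section ApproxTransport

variable {n : ℕ} {b v : ℝ → ℝ} {δ β A F G L M : ℝ} {f : E n → ℝ}

lemma one_add_pow_le_exp {x : ℝ} (hx : 0 ≤ 1 + x) (N : ℕ) : (1 + x) ^ N ≤ Real.exp (N * x) := by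
  rw [Real.exp_nat_mul]
  exact pow_le_pow_left₀ hx ((add_comm 1 x).trans_le (Real.add_one_le_exp x)) N

lemma exists_time_exp_mul_le {C η : ℝ} (hδ : 0 < δ) (hη : 0 < η) :
    ∃ t > 0, C * Real.exp (-(δ * t)) ≤ η := by
  have hlim : Tendsto (fun t => C * Real.exp (-(δ * t))) atTop (𝓝 (C * 0)) :=
    (Real.tendsto_exp_atBot.comp (tendsto_neg_atTop_atBot.comp
      (tendsto_id.const_mul_atTop hδ))).const_mul C
  rw [mul_zero] at hlim
  obtain ⟨t, ht, ht₀⟩ := ((hlim.eventually (ge_mem_nhds hη)).and (eventually_gt_atTop 0)).exists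
  exact ⟨t, ht₀, ht⟩

lemma exists_step_size {t c C η : ℝ} (ht : 0 ≤ t) (hη : 0 < η) :
    ∃ (N : ℕ) (r : ℝ), 0 ≤ r ∧ r ≤ 1 ∧ N * r ^ 2 = t ∧ r ^ 2 * c ≤ 1 ∧ C * r ≤ η := by
  have hlim : Tendsto (fun N : ℕ => √(t / N)) atTop (𝓝 0) := by
    simpa using (tendsto_const_div_atTop_nhds_zero_nat t).sqrt
  have hlim_sq : Tendsto (fun N : ℕ => √(t / N) ^ 2 * c) atTop (𝓝 0) := by
    simpa using (hlim.pow 2).mul_const c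
  have hlim_mul : Tendsto (fun N : ℕ => C * √(t / N)) atTop (𝓝 0) := by
    simpa using hlim.const_mul C
  obtain ⟨N, ⟨⟨h_one, h_sq⟩, h_mul⟩, hN⟩ := (((hlim.eventually (ge_mem_nhds one_pos)).and
    (hlim_sq.eventually (ge_mem_nhds one_pos))).and
    (hlim_mul.eventually (ge_mem_nhds hη))).and (eventually_ne_atTop 0) |>.exists
  refine ⟨N, √(t / N), Real.sqrt_nonneg _, h_one, ?_, h_sq, h_mul⟩
  rw [Real.sq_sqrt (by positivity)]
  field_simp

lemma isApproxTransport_transportIterate (hb : IsDrift b δ β) (hv : IsPotential v b δ)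
    (hA : 1 ≤ A) (hL : 0 ≤ L) (hM : 0 ≤ M) {r : ℝ} (hr₀ : 0 ≤ r) (hr₁ : r ≤ 1)
    (hβ : r ^ 2 * β ≤ 1) (hsmall : r ^ 2 * (logDerivConst * A ^ 3) ≤ 1) {G : ℕ → ℝ} {N : ℕ}
    (hf : ∀ j ≤ N, IsAdmissible A F (G j) (eulerIterate b (r ^ 2) f j)) :
    IsApproxTransport L M
      (2 * (N * (stepErrorConst n β (A * F) (logDerivConst * A ^ 3) F L
          (M + N * (r ^ 2 * (logDerivConst * A ^ 3) * L)) *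
            (∫ x : E n, (1 + ‖x‖) ^ 3 * productDensity v x) * r ^ 3) +
          G N * ∫ x : E n, ‖x‖ * productDensity v x) / ∫ x, f x * productDensity v x)
      (productDensity v) (fun x => f x * productDensity v x)
      (transportIterate b (r ^ 2) f N) where
  lipschitzWith :=
    lipschitzWith_one_transportIterate (sq_nonneg r) hA hsmall fun j hj => hf j hj.le
  map_zero := transportIterate_zero fun j hj => hf j hj.le
  abs_weightedMean_sub_le _ hφ :=
    hv.abs_weightedMean_comp_sub_le hb.pos hL hM (hf 0 N.zero_le) (hf N le_rfl)
      (lipschitzWith_one_transportIterate (sq_nonneg r) hA hsmall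
        fun j hj => hf j hj.le).continuous
      (fun _ hψ => abs_integral_transportIterate_sub_le hb hv hA hM hψ hr₀ hr₁ hβ hsmall
        (fun j hj => hf j hj.le) le_rfl) hφ

lemma isAdmissible_eulerIterate_of_le (hb : IsDrift b δ β) {r t : ℝ} (hβ : r ^ 2 * β ≤ 1)
    (hA : 0 ≤ A) (hf : IsAdmissible A F G f) {j N : ℕ} (hN : N * r ^ 2 = t) (hj : j ≤ N) :
    IsAdmissible (A * Real.exp (4 * t * (n * β))) F (G * (1 - r ^ 2 * δ) ^ j)
      (eulerIterate b (r ^ 2) f j) := by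
  have hβ₀ := hb.upper_pos
  refine (isAdmissible_eulerIterate hb hβ hA hf j).mono (mul_le_mul_of_nonneg_left ?_ hA)
  calc (1 + 4 * (r ^ 2 * (n * β))) ^ j ≤ Real.exp (j * (4 * (r ^ 2 * (n * β)))) :=
        one_add_pow_le_exp (by positivity) j
    _ ≤ Real.exp (N * (4 * (r ^ 2 * (n * β)))) := by gcongr
    _ = Real.exp (4 * t * (n * β)) := by
        rw [← hN]
        ring_nf

lemma one_sub_mul_pow_le_exp_neg {r t : ℝ} {N : ℕ} (hN : N * r ^ 2 = t) (hδ : r ^ 2 * δ ≤ 1) :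
    (1 - r ^ 2 * δ) ^ N ≤ Real.exp (-(δ * t)) := by
  refine (one_add_pow_le_exp (x := -(r ^ 2 * δ)) (by linarith) N).trans_eq ?_
  rw [← hN]
  ring_nf

-- The time `t` is chosen so that the evolved density is nearly constant, and then the step size so
-- that the accumulated error of the scheme up to time `t` is small.
theorem exists_isApproxTransport (hb : IsDrift b δ β) (hv : IsPotential v b δ) (hA : 1 ≤ A)
    (hf : IsAdmissible A F G f) {ε : ℝ} (hε : 0 < ε) (hL : 0 ≤ L) (hM : 0 ≤ M) :
    ∃ T, IsApproxTransport L M ε (productDensity v) (fun x => f x * productDensity v x) T := by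
  have hβ₀ := hb.upper_pos
  have hmass := hv.integral_mul_productDensity_pos hb.pos hf.contDiff.continuous hf.pos hf.le
  set a := ∫ x, f x * productDensity v x
  set R := ∫ x : E n, ‖x‖ * productDensity v x with hR
  have hR₀ : 0 ≤ R := integral_nonneg fun x => mul_nonneg (norm_nonneg x) (productDensity_pos x).le
  have hG : 0 ≤ G := (norm_nonneg _).trans (hf.norm_fderiv_le 0)
  obtain ⟨t, ht, hdecay⟩ :=
    exists_time_exp_mul_le (C := G * R) hb.pos (by positivity : 0 < ε * a / 4)
  set A' := A * Real.exp (4 * t * (n * β))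
  have hA' : 1 ≤ A' := one_le_mul_of_one_le_of_one_le hA (Real.one_le_exp (by positivity))
  set K := logDerivConst * A' ^ 3
  set C := stepErrorConst n β (A' * F) K F L (M + t * K * L) *
    ∫ x : E n, (1 + ‖x‖) ^ 3 * productDensity v x with hC
  obtain ⟨N, r, hr₀, hr₁, hN, hsmall, herror⟩ := exists_step_size (c := max β (max K δ))
    (C := t * C) ht.le (by positivity : 0 < ε * a / 4)
  have hsmall' {c : ℝ} (hc : c ≤ max β (max K δ)) : r ^ 2 * c ≤ 1 :=
    (mul_le_mul_of_nonneg_left hc (sq_nonneg r)).trans hsmall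
  have hβ : r ^ 2 * β ≤ 1 := hsmall' (le_max_left _ _)
  have hK : r ^ 2 * K ≤ 1 := hsmall' (by simp)
  obtain ⟨hlip, hzero, hmean⟩ := isApproxTransport_transportIterate hb hv hA' hL hM hr₀ hr₁ hβ hK
    fun j hj => isAdmissible_eulerIterate_of_le hb hβ (zero_le_one.trans hA) hf hN hj
  refine ⟨_, hlip, hzero, fun φ hφ => (hmean φ hφ).trans ?_⟩
  have hgrad : G * (1 - r ^ 2 * δ) ^ N * R ≤ ε * a / 4 := by
    refine le_trans ?_ hdecay
    rw [mul_right_comm]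
    gcongr
    exact one_sub_mul_pow_le_exp_neg hN (hsmall' (by simp))
  have hscheme : N * (C * r ^ 3) = t * C * r := by
    rw [← hN]
    ring
  rw [← mul_assoc (N : ℝ) (r ^ 2 * _) L, ← mul_assoc (N : ℝ) (r ^ 2), hN, ← hC, ← hR, hscheme,
    div_le_iff₀ hmass]
  linarith

end ApproxTransport

/-! ### Passage to the limit -/

section Limit

variable {n : ℕ}

lemma isCompact_setOf_lipschitzWith_one :
    IsCompact {f : C(E n, E n) | LipschitzWith 1 f ∧ f 0 = 0} := by
  refine ArzelaAscoli.isCompact_of_equicontinuous _ ?_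
    (LipschitzWith.uniformEquicontinuous (K := 1) _ fun f => f.2.1).equicontinuous
  have himage : ContinuousMap.toFun '' {f : C(E n, E n) | LipschitzWith 1 f ∧ f 0 = 0} =
      {f : E n → E n | LipschitzWith 1 f ∧ f 0 = 0} := by
    ext f
    exact ⟨fun ⟨_, hg, hgf⟩ => hgf ▸ hg, fun hf => ⟨⟨f, hf.1.continuous⟩, hf, rfl⟩⟩
  have hclosed : IsClosed {f : E n → E n | LipschitzWith 1 f ∧ f 0 = 0} :=
    (isClosed_setOfPred_lipschitzWith 1).inter
      (isClosed_eq (continuous_apply 0) continuous_const)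
  rw [himage]
  refine (isCompact_univ_pi fun x : E n => isCompact_closedBall (0 : E n) ‖x‖).of_isClosed_subset
    hclosed ?_
  rintro f ⟨hlip, hzero⟩ x -
  simpa [hzero] using hlip.dist_le_mul x 0

lemma exists_tendsto_subseq_of_lipschitzWith_one {T : ℕ → E n → E n}
    (hT : ∀ m, LipschitzWith 1 (T m)) (hT₀ : ∀ m, T m 0 = 0) :
    ∃ (S : E n → E n) (ψ : ℕ → ℕ), StrictMono ψ ∧ LipschitzWith 1 S ∧
      ∀ x, Tendsto (fun m => T (ψ m) x) atTop (𝓝 (S x)) := by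
  obtain ⟨S, hS, ψ, hψ, hlim⟩ := isCompact_setOf_lipschitzWith_one.tendsto_subseq
    (x := fun m => (⟨T m, (hT m).continuous⟩ : C(E n, E n))) fun m => ⟨hT m, hT₀ m⟩
  exact ⟨S, ψ, hψ, hS.1, fun x => ((continuous_eval_const x).tendsto S).comp hlim⟩

lemma tendsto_integral_mul_of_dominated {w u : ℕ → E n → ℝ} {w' u' D : E n → ℝ}
    (hD : Integrable D) (hw : ∀ m, Continuous (w m)) (hw₁ : ∀ m x, |w m x| ≤ 1)
    (hw' : ∀ x, Tendsto (fun m => w m x) atTop (𝓝 (w' x))) (hu : ∀ m, Continuous (u m))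
    (huD : ∀ m x, |u m x| ≤ D x) (hu' : ∀ x, Tendsto (fun m => u m x) atTop (𝓝 (u' x))) :
    Tendsto (fun m => ∫ x, w m x * u m x) atTop (𝓝 (∫ x, w' x * u' x)) := by
  refine tendsto_integral_of_dominated_convergence D
    (fun m => ((hw m).mul (hu m)).aestronglyMeasurable) hD (fun m => .of_forall fun x => ?_)
    (.of_forall fun x => (hw' x).mul (hu' x))
  rw [norm_mul]
  exact (mul_le_of_le_one_left (norm_nonneg _) (hw₁ m x)).trans (huD m x)

lemma tendsto_weightedMean {w ρ : ℕ → E n → ℝ} {w' ρ' D : E n → ℝ}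
    (hD : Integrable D) (hw : ∀ m, Continuous (w m)) (hw₁ : ∀ m x, |w m x| ≤ 1)
    (hw' : ∀ x, Tendsto (fun m => w m x) atTop (𝓝 (w' x))) (hρ : ∀ m, Continuous (ρ m))
    (hρD : ∀ m x, |ρ m x| ≤ D x) (hρ' : ∀ x, Tendsto (fun m => ρ m x) atTop (𝓝 (ρ' x)))
    (hρ₀ : ∫ x, ρ' x ≠ 0) :
    Tendsto (fun m => weightedMean (ρ m) (w m)) atTop (𝓝 (weightedMean ρ' w')) := by
  have hmass : Tendsto (fun m => ∫ x, ρ m x) atTop (𝓝 (∫ x, ρ' x)) := by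
    simpa only [one_mul] using tendsto_integral_mul_of_dominated (w := fun _ _ => 1) hD
      (fun _ => continuous_const) (fun _ _ => abs_one.le) (fun _ => tendsto_const_nhds) hρ hρD hρ'
  exact (tendsto_integral_mul_of_dominated hD hw hw₁ hw' hρ hρD hρ').div hmass hρ₀

theorem exists_transport_of_isApproxTransport {ρ σ : ℕ → E n → ℝ} {ρ' σ' D : E n → ℝ}
    (hD : Integrable D) (hρ : ∀ m, Continuous (ρ m)) (hσ : ∀ m, Continuous (σ m))
    (hρD : ∀ m x, |ρ m x| ≤ D x) (hσD : ∀ m x, |σ m x| ≤ D x)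
    (hρ' : ∀ x, Tendsto (fun m => ρ m x) atTop (𝓝 (ρ' x)))
    (hσ' : ∀ x, Tendsto (fun m => σ m x) atTop (𝓝 (σ' x)))
    (hρ₀ : ∫ x, ρ' x ≠ 0) (hσ₀ : ∫ x, σ' x ≠ 0)
    (hT : ∀ (m : ℕ) (ε L M : ℝ), 0 < ε → 0 ≤ L → 0 ≤ M →
      ∃ T, IsApproxTransport L M ε (ρ m) (σ m) T) :
    ∃ T : E n → E n, LipschitzWith 1 T ∧ ∀ (L M : ℝ) (φ : E n → ℝ), IsTestFunction L M φ →
      weightedMean ρ' (φ ∘ T) = weightedMean σ' φ := by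
  choose T hT using fun m : ℕ => hT m (1 / (m + 1)) m m (by positivity) m.cast_nonneg m.cast_nonneg
  obtain ⟨S, ψ, hψ, hS, hTS⟩ := exists_tendsto_subseq_of_lipschitzWith_one
    (fun m => (hT m).lipschitzWith) fun m => (hT m).map_zero
  refine ⟨S, hS, fun L M φ hφ => ?_⟩
  have hφc := hφ.contDiff.continuous
  have hψ_top := hψ.tendsto_atTop
  have hleft : Tendsto (fun m => weightedMean (ρ (ψ m)) (φ ∘ T (ψ m))) atTop
      (𝓝 (weightedMean ρ' (φ ∘ S))) :=
    tendsto_weightedMean hD (fun m => hφc.comp (hT _).lipschitzWith.continuous)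
      (fun m x => hφ.abs_le_one _) (fun x => (hφc.tendsto _).comp (hTS x)) (fun m => hρ _)
      (fun m => hρD _) (fun x => (hρ' x).comp hψ_top) hρ₀
  have hright : Tendsto (fun m => weightedMean (σ (ψ m)) φ) atTop (𝓝 (weightedMean σ' φ)) :=
    tendsto_weightedMean hD (fun _ => hφc) (fun _ => hφ.abs_le_one) (fun _ => tendsto_const_nhds)
      (fun m => hσ _) (fun m => hσD _) (fun x => (hσ' x).comp hψ_top) hσ₀
  have hbound : ∀ᶠ m in atTop, |weightedMean (ρ (ψ m)) (φ ∘ T (ψ m)) - weightedMean (σ (ψ m)) φ| ≤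
      1 / ((ψ m : ℝ) + 1) := by
    obtain ⟨N, hN⟩ := exists_nat_ge (max L M)
    filter_upwards [hψ_top.eventually (eventually_ge_atTop N)] with m hm
    have hLM : max L M ≤ ψ m := hN.trans (Nat.cast_le.2 hm)
    exact (hT (ψ m)).abs_weightedMean_sub_le φ
      (hφ.mono ((le_max_left _ _).trans hLM) ((le_max_right _ _).trans hLM))
  have hle := le_of_tendsto_of_tendsto (hleft.sub hright).abs
    (tendsto_one_div_add_atTop_nhds_zero_nat.comp hψ_top) hbound
  exact sub_eq_zero.1 (abs_nonpos_iff.1 hle)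

end Limit

section CharFun

variable {n : ℕ}

lemma isTestFunction_comp_clm {g g' : ℝ → ℝ} (hg : ∀ t, HasDerivAt g (g' t) t)
    (hg₁ : ∀ t, |g t| ≤ 1) (hg'₁ : ∀ t, |g' t| ≤ 1) (hg'_lip : ∀ s t, |g' s - g' t| ≤ |s - t|)
    (l : E n →L[ℝ] ℝ) : IsTestFunction ‖l‖ (‖l‖ * ‖l‖) (fun x => g (l x)) := by
  have hderiv (x : E n) : fderiv ℝ (fun x => g (l x)) x = g' (l x) • l :=
    ((hg (l x)).comp_hasFDerivAt x l.hasFDerivAt).fderiv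
  have hg'_cont : Continuous g' := by
    refine (LipschitzWith.of_dist_le_mul (K := 1) fun s t => ?_).continuous
    simpa [Real.dist_eq] using hg'_lip s t
  refine ⟨contDiff_one_iff_fderiv.2 ⟨fun x => ?_, ?_⟩, fun x => hg₁ _, fun x => ?_, fun x y => ?_⟩
  · exact ((hg (l x)).comp_hasFDerivAt x l.hasFDerivAt).differentiableAt
  · rw [funext hderiv]
    fun_prop
  · rw [hderiv, norm_smul]
    exact mul_le_of_le_one_left (norm_nonneg _) (hg'₁ _)
  · rw [hderiv, hderiv, ← sub_smul, norm_smul, mul_right_comm]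
    refine mul_le_mul_of_nonneg_right ((hg'_lip _ _).trans ?_) (norm_nonneg _)
    rw [← map_sub]
    exact l.le_opNorm _

lemma charFun_eq_integral_cos_add_integral_sin (μ : Measure (E n)) [IsFiniteMeasure μ] (ξ : E n) :
    charFun μ ξ = ((∫ x, Real.cos (innerSL ℝ ξ x) ∂μ : ℝ) : ℂ) +
      ((∫ x, Real.sin (innerSL ℝ ξ x) ∂μ : ℝ) : ℂ) * Complex.I := by
  have hcos : Integrable (fun x => Real.cos (innerSL ℝ ξ x)) μ :=
    .of_bound (by fun_prop) 1 (.of_forall fun x => Real.abs_cos_le_one _)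
  have hsin : Integrable (fun x => Real.sin (innerSL ℝ ξ x)) μ :=
    .of_bound (by fun_prop) 1 (.of_forall fun x => Real.abs_sin_le_one _)
  rw [charFun_apply, ← integral_complex_ofReal, ← integral_complex_ofReal, ← integral_mul_const,
    ← integral_add hcos.ofReal (hsin.ofReal.mul_const _)]
  congr with x
  rw [Complex.exp_mul_I, innerSL_apply_apply, real_inner_comm, Complex.ofReal_cos,
    Complex.ofReal_sin]

lemma map_eq_of_forall_isTestFunction {ν μ : Measure (E n)} [IsFiniteMeasure ν]
    [IsFiniteMeasure μ] {T : E n → E n} (hT : Continuous T)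
    (h : ∀ (L M : ℝ) (φ : E n → ℝ), IsTestFunction L M φ → ∫ x, φ (T x) ∂ν = ∫ x, φ x ∂μ) :
    ν.map T = μ := by
  refine Measure.ext_of_charFun (funext fun ξ => ?_)
  have hcos := h _ _ _ <| isTestFunction_comp_clm (g' := fun t => -Real.sin t) Real.hasDerivAt_cos
    Real.abs_cos_le_one (fun t => (abs_neg _).trans_le (Real.abs_sin_le_one t))
    (fun s t => by
      rw [neg_sub_neg, abs_sub_comm]
      exact Real.abs_sin_sub_sin_le s t) (innerSL ℝ ξ)
  have hsin := h _ _ _ <| isTestFunction_comp_clm Real.hasDerivAt_sin Real.abs_sin_le_one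
    Real.abs_cos_le_one Real.abs_cos_sub_cos_le (innerSL ℝ ξ)
  have : IsFiniteMeasure (ν.map T) := Measure.isFiniteMeasure_map ν T
  rw [charFun_eq_integral_cos_add_integral_sin, charFun_eq_integral_cos_add_integral_sin,
    integral_map hT.aemeasurable (Continuous.aestronglyMeasurable (by fun_prop)),
    integral_map hT.aemeasurable (Continuous.aestronglyMeasurable (by fun_prop)), hcos, hsin]

end CharFun

/-! ### Smooth strictly convex regularization of `|x| ^ p / p` -/

section RegularizedPotential

open Asymptotics

variable {δ r s : ℝ}

/-- The function `(x² + δ) ^ s`, a smooth regularization of `|x| ^ (2 * s)`. -/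
noncomputable def sqAddRpow (δ s x : ℝ) : ℝ := (x ^ 2 + δ) ^ s

lemma sqAddRpow_pos (hδ : 0 < δ) (s x : ℝ) : 0 < sqAddRpow δ s x :=
  Real.rpow_pos_of_pos (by positivity) s

lemma sq_mul_sqAddRpow_sub_one (hδ : 0 < δ) (s x : ℝ) :
    x ^ 2 * sqAddRpow δ (s - 1) x = sqAddRpow δ s x - δ * sqAddRpow δ (s - 1) x := by
  have hsucc : sqAddRpow δ s x = sqAddRpow δ (s - 1) x * (x ^ 2 + δ) := by
    simpa [sqAddRpow] using Real.rpow_add_one (show x ^ 2 + δ ≠ 0 by positivity) (s - 1)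
  rw [hsucc]
  ring

lemma hasDerivAt_sqAddRpow (hδ : 0 < δ) (s x : ℝ) :
    HasDerivAt (sqAddRpow δ s) (2 * s * x * sqAddRpow δ (s - 1) x) x := by
  have hsq : HasDerivAt (fun x : ℝ => x ^ 2 + δ) (2 * x) x := by
    simpa using (hasDerivAt_pow 2 x).add_const δ
  refine (hsq.rpow_const (p := s) (.inl (by positivity))).congr_deriv ?_
  simp only [sqAddRpow]
  ring

lemma contDiff_sqAddRpow (hδ : 0 < δ) {m : WithTop ℕ∞} : ContDiff ℝ m (sqAddRpow δ s) :=
  ContDiff.rpow_const_of_ne (by fun_prop) fun x => by positivity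

lemma antitoneOn_sqAddRpow (hδ : 0 < δ) (hs : s ≤ 0) : AntitoneOn (sqAddRpow δ s) (Set.Ici 0) := by
  intro x hx y _ hxy
  refine Real.rpow_le_rpow_of_nonpos (by positivity) ?_ hs
  gcongr

lemma isBigO_sqAddRpow (hδ : 0 < δ) (hs : s ≤ 0) : sqAddRpow δ s =O[⊤] fun _ => (1 : ℝ) := by
  refine isBigO_top.2 ⟨δ ^ s, fun x => ?_⟩
  rw [norm_one, mul_one, Real.norm_of_nonneg (sqAddRpow_pos hδ s x).le]
  exact Real.rpow_le_rpow_of_nonpos hδ (by nlinarith) hs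

lemma isBigO_sq_mul_sqAddRpow (hδ : 0 < δ) (hs : s ≤ 0) :
    (fun x => x ^ 2 * sqAddRpow δ (s - 1) x) =O[⊤] fun _ => (1 : ℝ) := by
  simp only [sq_mul_sqAddRpow_sub_one hδ]
  exact (isBigO_sqAddRpow hδ hs).sub
    ((isBigO_sqAddRpow hδ (show s - 1 ≤ 0 by linarith)).const_mul_left δ)

lemma isBigO_id_mul_sqAddRpow (hδ : 0 < δ) (hs : s ≤ 0) :
    (fun x => x * sqAddRpow δ (s - 1) x) =O[⊤] fun _ => (1 : ℝ) := by
  refine IsBigO.trans (isBigO_top.2 ⟨1, fun x => ?_⟩) ((isBigO_sq_mul_sqAddRpow hδ hs).add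
    (isBigO_sqAddRpow hδ (show s - 1 ≤ 0 by linarith)))
  have hpos := sqAddRpow_pos hδ (s - 1) x
  rw [one_mul, norm_mul, Real.norm_of_nonneg hpos.le, ← add_one_mul,
    Real.norm_of_nonneg (mul_nonneg (by positivity) hpos.le), Real.norm_eq_abs, ← sq_abs]
  refine mul_le_mul_of_nonneg_right ?_ hpos.le
  nlinarith [sq_nonneg (|x| - 1)]

/-- The drift `x (x² + δ) ^ r + δ x`; with `r = p / 2 - 1` it is the derivative of
`regularizedPotential p δ`. -/
noncomputable def regularizedDrift (δ r x : ℝ) : ℝ := x * sqAddRpow δ r x + δ * x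

lemma hasDerivAt_regularizedDrift (hδ : 0 < δ) (r x : ℝ) :
    HasDerivAt (regularizedDrift δ r)
      ((1 + 2 * r) * sqAddRpow δ r x - 2 * r * δ * sqAddRpow δ (r - 1) x + δ) x := by
  refine (((hasDerivAt_id x).fun_mul (hasDerivAt_sqAddRpow hδ r x)).fun_add
    ((hasDerivAt_id x).const_mul δ)).congr_deriv ?_
  simp only [id]
  linear_combination 2 * r * sq_mul_sqAddRpow_sub_one hδ r x

lemma deriv_regularizedDrift (hδ : 0 < δ) (r : ℝ) :
    deriv (regularizedDrift δ r) = fun x =>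
      (1 + 2 * r) * sqAddRpow δ r x - 2 * r * δ * sqAddRpow δ (r - 1) x + δ :=
  funext fun x => (hasDerivAt_regularizedDrift hδ r x).deriv

lemma iteratedDeriv_two_regularizedDrift (hδ : 0 < δ) (r : ℝ) :
    iteratedDeriv 2 (regularizedDrift δ r) = fun x =>
      (1 + 2 * r) * (2 * r) * (x * sqAddRpow δ (r - 1) x)
        - 4 * r * δ * (r - 1) * (x * sqAddRpow δ (r - 1 - 1) x) := by
  rw [iteratedDeriv_succ, iteratedDeriv_one, deriv_regularizedDrift hδ]
  refine funext fun x => HasDerivAt.deriv ?_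
  refine ((((hasDerivAt_sqAddRpow hδ r x).const_mul (1 + 2 * r)).fun_sub
    ((hasDerivAt_sqAddRpow hδ (r - 1) x).const_mul (2 * r * δ))).add_const δ).congr_deriv ?_
  ring

lemma iteratedDeriv_three_regularizedDrift (hδ : 0 < δ) (r : ℝ) :
    iteratedDeriv 3 (regularizedDrift δ r) = fun x =>
      (1 + 2 * r) * (2 * r) *
          (sqAddRpow δ (r - 1) x + 2 * (r - 1) * (x ^ 2 * sqAddRpow δ (r - 1 - 1) x))
        - 4 * r * δ * (r - 1) * (sqAddRpow δ (r - 1 - 1) x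
          + 2 * (r - 1 - 1) * (x ^ 2 * sqAddRpow δ (r - 1 - 1 - 1) x)) := by
  rw [iteratedDeriv_succ, iteratedDeriv_two_regularizedDrift hδ]
  refine funext fun x => HasDerivAt.deriv ?_
  have hmul (s : ℝ) := (hasDerivAt_id x).fun_mul (hasDerivAt_sqAddRpow hδ s x)
  refine (((hmul (r - 1)).const_mul ((1 + 2 * r) * (2 * r))).fun_sub
    ((hmul (r - 1 - 1)).const_mul (4 * r * δ * (r - 1)))).congr_deriv ?_
  simp only [id]
  ring

lemma isBigO_deriv_regularizedDrift (hδ : 0 < δ) (hr : r ≤ 0) :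
    deriv (regularizedDrift δ r) =O[⊤] fun _ => (1 : ℝ) := by
  rw [deriv_regularizedDrift hδ]
  exact (((isBigO_sqAddRpow hδ hr).const_mul_left _).sub
    ((isBigO_sqAddRpow hδ (by linarith)).const_mul_left _)).add (isBigO_const_one ℝ δ ⊤)

lemma isBigO_iteratedDeriv_two_regularizedDrift (hδ : 0 < δ) (hr : r ≤ 0) :
    iteratedDeriv 2 (regularizedDrift δ r) =O[⊤] fun _ => (1 : ℝ) := by
  rw [iteratedDeriv_two_regularizedDrift hδ]
  exact ((isBigO_id_mul_sqAddRpow hδ hr).const_mul_left _).sub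
    ((isBigO_id_mul_sqAddRpow hδ (by linarith)).const_mul_left _)

lemma isBigO_iteratedDeriv_three_regularizedDrift (hδ : 0 < δ) (hr : r ≤ 0) :
    iteratedDeriv 3 (regularizedDrift δ r) =O[⊤] fun _ => (1 : ℝ) := by
  rw [iteratedDeriv_three_regularizedDrift hδ]
  have hterm {s : ℝ} (hs : s ≤ 0) :
      (fun x => sqAddRpow δ s x + 2 * s * (x ^ 2 * sqAddRpow δ (s - 1) x)) =O[⊤]
        fun _ => (1 : ℝ) :=
    (isBigO_sqAddRpow hδ hs).add ((isBigO_sq_mul_sqAddRpow hδ hs).const_mul_left _)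
  exact ((hterm (by linarith)).const_mul_left _).sub ((hterm (by linarith)).const_mul_left _)

lemma le_deriv_regularizedDrift (hδ : 0 < δ) (hr : -(1 / 2) ≤ r) (hr₀ : r ≤ 0) (x : ℝ) :
    δ ≤ deriv (regularizedDrift δ r) x := by
  rw [deriv_regularizedDrift hδ]
  have h₁ : 0 ≤ (1 + 2 * r) * sqAddRpow δ r x :=
    mul_nonneg (by linarith) (sqAddRpow_pos hδ r x).le
  have h₂ : 0 ≤ -r * δ * sqAddRpow δ (r - 1) x :=
    mul_nonneg (mul_nonneg (by linarith) hδ.le) (sqAddRpow_pos hδ (r - 1) x).le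
  linarith

lemma concaveOn_regularizedDrift (hδ : 0 < δ) (hr : -(1 / 2) ≤ r) (hr₀ : r ≤ 0) :
    ConcaveOn ℝ (Set.Ici 0) (regularizedDrift δ r) := by
  have hdiff : Differentiable ℝ (regularizedDrift δ r) := fun x =>
    (hasDerivAt_regularizedDrift hδ r x).differentiableAt
  refine AntitoneOn.concaveOn_of_deriv (convex_Ici 0) hdiff.continuous.continuousOn
    hdiff.differentiableOn ?_
  rw [deriv_regularizedDrift hδ, interior_Ici]
  intro x hx y hy hxy
  have hanti {s : ℝ} (hs : s ≤ 0) : sqAddRpow δ s y ≤ sqAddRpow δ s x :=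
    antitoneOn_sqAddRpow hδ hs (Set.Ioi_subset_Ici_self hx) (Set.Ioi_subset_Ici_self hy) hxy
  have h₁ := mul_le_mul_of_nonneg_left (hanti hr₀) (show 0 ≤ 1 + 2 * r by linarith)
  have h₂ := mul_le_mul_of_nonneg_left (hanti (show r - 1 ≤ 0 by linarith))
    (show 0 ≤ -r * δ from mul_nonneg (by linarith) hδ.le)
  linarith

lemma exists_isDrift_regularizedDrift (hδ : 0 < δ) (hr : -(1 / 2) ≤ r) (hr₀ : r ≤ 0) :
    ∃ β, IsDrift (regularizedDrift δ r) δ β := by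
  obtain ⟨C₁, hC₁⟩ := isBigO_top.1 (isBigO_deriv_regularizedDrift hδ hr₀)
  obtain ⟨C₂, hC₂⟩ := isBigO_top.1 (isBigO_iteratedDeriv_two_regularizedDrift hδ hr₀)
  obtain ⟨C₃, hC₃⟩ := isBigO_top.1 (isBigO_iteratedDeriv_three_regularizedDrift hδ hr₀)
  simp only [norm_one, mul_one] at hC₁ hC₂ hC₃
  refine ⟨max C₁ (max C₂ C₃), ?_, fun x => ?_, hδ, le_deriv_regularizedDrift hδ hr hr₀,
    fun x => ?_, fun x => ?_, fun x => ?_, concaveOn_regularizedDrift hδ hr hr₀⟩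
  · exact (contDiff_id.mul (contDiff_sqAddRpow hδ)).add (contDiff_const.mul contDiff_id)
  · simp only [regularizedDrift, sqAddRpow, neg_sq]
    ring
  · exact ((le_abs_self _).trans (hC₁ x)).trans (le_max_left _ _)
  · rw [norm_iteratedFDeriv_eq_norm_iteratedDeriv]
    exact (hC₂ x).trans ((le_max_left _ _).trans (le_max_right _ _))
  · rw [norm_iteratedFDeriv_eq_norm_iteratedDeriv]
    exact (hC₃ x).trans ((le_max_right _ _).trans (le_max_right _ _))

variable {n : ℕ} {p : ℝ}

/-- The one-dimensional potential `|x| ^ p / p`. -/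
noncomputable def powerPotential (p x : ℝ) : ℝ := |x| ^ p / p

/-- A smooth strictly convex majorant of `powerPotential p`, converging to it as `δ → 0`. -/
noncomputable def regularizedPotential (p δ x : ℝ) : ℝ :=
  sqAddRpow δ (p / 2) x / p + δ / 2 * x ^ 2

lemma isPotential_regularizedPotential (hp : 0 < p) (hδ : 0 < δ) :
    IsPotential (regularizedPotential p δ) (regularizedDrift δ (p / 2 - 1)) δ where
  hasDerivAt x := by
    have hsq : HasDerivAt (fun x : ℝ => x ^ 2) (2 * x) x := by simpa using hasDerivAt_pow 2 x
    refine (((hasDerivAt_sqAddRpow hδ (p / 2) x).div_const p).fun_add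
      (hsq.const_mul (δ / 2))).congr_deriv ?_
    simp only [regularizedDrift]
    field_simp
  quadratic_le x :=
    le_add_of_nonneg_left (div_nonneg (sqAddRpow_pos hδ (p / 2) x).le hp.le)

lemma abs_rpow_eq_sq_rpow (p x : ℝ) : |x| ^ p = (x ^ 2) ^ (p / 2) := by
  rw [← sq_abs, ← Real.rpow_natCast, ← Real.rpow_mul (abs_nonneg x)]
  congr 1
  push_cast
  ring

lemma powerPotential_le_regularizedPotential (hp : 0 < p) (hδ : 0 < δ) (x : ℝ) :
    powerPotential p x ≤ regularizedPotential p δ x := by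
  have hrpow : |x| ^ p ≤ sqAddRpow δ (p / 2) x := by
    rw [abs_rpow_eq_sq_rpow]
    exact Real.rpow_le_rpow (sq_nonneg x) (by linarith) (by linarith)
  exact (div_le_div_of_nonneg_right hrpow hp.le).trans (le_add_of_nonneg_right (by positivity))

lemma tendsto_regularizedPotential (hp : 0 < p) {ι : Type*} {l : Filter ι} {δ : ι → ℝ}
    (hδ : Tendsto δ l (𝓝 0)) (x : ℝ) :
    Tendsto (fun i => regularizedPotential p (δ i) x) l (𝓝 (powerPotential p x)) := by
  have hbase : Tendsto (fun i => x ^ 2 + δ i) l (𝓝 (x ^ 2)) := by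
    simpa using hδ.const_add (x ^ 2)
  have hlim := ((hbase.rpow_const (p := p / 2) (.inr (by linarith))).div_const p).add
    ((hδ.div_const 2).mul_const (x ^ 2))
  rw [← abs_rpow_eq_sq_rpow] at hlim
  simpa [regularizedPotential, sqAddRpow, powerPotential] using hlim

lemma productDensity_regularizedPotential_le (hp : 0 < p) (hδ : 0 < δ) (x : E n) :
    productDensity (regularizedPotential p δ) x ≤ productDensity (powerPotential p) x :=
  Real.exp_le_exp.2 <| neg_le_neg <|
    Finset.sum_le_sum fun _ _ => powerPotential_le_regularizedPotential hp hδ _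

lemma tendsto_productDensity_regularizedPotential (hp : 0 < p) {ι : Type*} {l : Filter ι}
    {δ : ι → ℝ} (hδ : Tendsto δ l (𝓝 0)) (x : E n) :
    Tendsto (fun i => productDensity (regularizedPotential p (δ i)) x) l
      (𝓝 (productDensity (powerPotential p) x)) :=
  (Real.continuous_exp.tendsto _).comp
    (tendsto_finsetSum _ fun i _ => tendsto_regularizedPotential hp hδ (x i)).neg

lemma continuous_powerPotential (hp : 0 < p) : Continuous (powerPotential p) :=
  (continuous_abs.rpow_const fun _ => .inr hp.le).div_const p

lemma integrable_exp_neg_powerPotential (hp : 0 < p) :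
    Integrable fun t : ℝ => Real.exp (-powerPotential p t) := by
  have hIoi := integrableOn_rpow_mul_exp_neg_mul_rpow (s := 0) (by norm_num) hp
    (one_div_pos.2 hp)
  refine (integrable_fun_norm_addHaar (E := ℝ) volume (f := fun r => Real.exp (-(r ^ p / p)))).2 ?_
  simpa [inv_mul_eq_div] using hIoi

lemma integrable_productDensity_powerPotential (hp : 0 < p) :
    Integrable (productDensity (powerPotential p) : E n → ℝ) := by
  have hprod := Integrable.fintype_prod (ι := Fin n) (μ := fun _ => volume)
    fun _ => integrable_exp_neg_powerPotential hp
  refine ((PiLp.volume_preserving_ofLp (Fin n)).integrable_comp_of_integrable hprod).congr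
    (.of_forall fun x => ?_)
  simp [productDensity, Real.exp_sum, ← Finset.sum_neg_distrib]

end RegularizedPotential

/-! ### Approximation of unconditional log-concave functions by admissible densities -/

section SumExp

variable {X ι : Type*} [NormedAddCommGroup X] [NormedSpace ℝ X] [Fintype ι]

/-- A finite sum of exponentials of the affine functions `x ↦ l i x + c i`. -/
noncomputable def sumExp (l : ι → X →L[ℝ] ℝ) (c : ι → ℝ) (x : X) : ℝ :=
  ∑ i, Real.exp (l i x + c i)

variable (l : ι → X →L[ℝ] ℝ) (c : ι → ℝ)

lemma sumExp_pos [Nonempty ι] (x : X) : 0 < sumExp l c x :=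
  Finset.sum_pos (fun _ _ => Real.exp_pos _) Finset.univ_nonempty

lemma contDiff_sumExp {m : WithTop ℕ∞} : ContDiff ℝ m (sumExp l c) := by
  unfold sumExp
  fun_prop

lemma norm_iteratedFDeriv_affine_le (L : X →L[ℝ] ℝ) (a : ℝ) {i : ℕ} (hi : i ≠ 0) (x : X) :
    ‖iteratedFDeriv ℝ i (fun y => L y + a) x‖ ≤ ‖L‖ := by
  rw [iteratedFDeriv_add_const_of_ne_zero L.contDiff.contDiffAt a hi]
  have hfderiv : fderiv ℝ (fun y => L y) = fun _ => L := funext fun _ => L.fderiv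
  obtain ⟨j, rfl⟩ := Nat.exists_eq_succ_of_ne_zero hi
  rw [Nat.succ_eq_add_one, ← norm_iteratedFDeriv_fderiv, hfderiv]
  rcases eq_or_ne j 0 with rfl | hj
  · simp
  · simp [iteratedFDeriv_const_of_ne hj]

lemma exists_relDerivBound_sumExp : ∃ A, RelDerivBound A (sumExp l c) := by
  let B := 1 + ∑ i, ‖l i‖
  have hB : 1 ≤ B := le_add_of_nonneg_right (Finset.sum_nonneg fun i _ => norm_nonneg _)
  have hl (j) : ‖l j‖ ≤ B :=
    (Finset.single_le_sum (fun i _ => norm_nonneg (l i)) (Finset.mem_univ j)).trans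
      (le_add_of_nonneg_left zero_le_one)
  refine ⟨expDerivConst * B ^ 3, fun i h1 h3 x => ?_⟩
  have hsum : iteratedFDeriv ℝ i (sumExp l c) x =
      ∑ j, iteratedFDeriv ℝ i (fun y => Real.exp (l j y + c j)) x :=
    iteratedFDeriv_fun_sum_apply fun j _ => (by fun_prop : ContDiff ℝ i _).contDiffAt
  rw [hsum, sumExp, Finset.mul_sum]
  exact norm_sum_le_of_le _ fun j _ => relDerivBound_exp hB (by fun_prop)
    (fun i h1 _ x => (norm_iteratedFDeriv_affine_le (l j) (c j) (by lia) x).trans (hl j)) i h1 h3 x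

lemma sumExp_le_rpow_mul_rpow {a b : ℝ} (ha : 0 < a) (hb : 0 < b) (hab : a + b = 1) (x y : X) :
    sumExp l c (a • x + b • y) ≤ sumExp l c x ^ a * sumExp l c y ^ b := by
  have hconj : a⁻¹.HolderConjugate b⁻¹ :=
    Real.holderConjugate_iff.2 ⟨(one_lt_inv₀ ha).2 (by linarith), by rwa [inv_inv, inv_inv]⟩
  have hexp (i) : Real.exp (l i (a • x + b • y) + c i) =
      Real.exp (l i x + c i) ^ a * Real.exp (l i y + c i) ^ b := by
    rw [← Real.exp_mul, ← Real.exp_mul, ← Real.exp_add]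
    congr 1
    simp only [map_add, map_smul, smul_eq_mul]
    linear_combination (-c i) * hab
  have hholder := Real.inner_le_Lp_mul_Lq_of_nonneg Finset.univ hconj
    (fun i _ => (Real.rpow_nonneg (Real.exp_pos (l i x + c i)).le a))
    (fun i _ => (Real.rpow_nonneg (Real.exp_pos (l i y + c i)).le b))
  simpa only [sumExp, ← hexp, Real.rpow_rpow_inv (Real.exp_pos _).le ha.ne',
    Real.rpow_rpow_inv (Real.exp_pos _).le hb.ne', one_div, inv_inv] using hholder

variable {s : ℝ}

lemma logConcave_sumExp_rpow_neg [Nonempty ι] (hs : 0 ≤ s) :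
    LogConcave fun x => sumExp l c x ^ (-s) := by
  intro a b ha hb hab x y
  have hx := sumExp_pos l c x
  have hy := sumExp_pos l c y
  calc (sumExp l c x ^ (-s)) ^ a * (sumExp l c y ^ (-s)) ^ b
      = (sumExp l c x ^ a * sumExp l c y ^ b) ^ (-s) := by
        rw [Real.mul_rpow (by positivity) (by positivity), ← Real.rpow_mul hx.le,
          ← Real.rpow_mul hx.le, ← Real.rpow_mul hy.le, ← Real.rpow_mul hy.le, mul_comm a,
          mul_comm b]
    _ ≤ sumExp l c (a • x + b • y) ^ (-s) :=
        Real.rpow_le_rpow_of_nonpos (sumExp_pos l c _)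
          (sumExp_le_rpow_mul_rpow l c ha hb hab x y) (neg_nonpos.2 hs)

lemma exists_relDerivBound_sumExp_rpow [Nonempty ι] (s : ℝ) :
    ∃ A, 1 ≤ A ∧ RelDerivBound A fun x => sumExp l c x ^ s := by
  obtain ⟨A₀, hA₀⟩ := exists_relDerivBound_sumExp l c
  have hA := hA₀.mono (le_max_right 1 A₀) fun x => (sumExp_pos l c x).le
  have hlog : ContDiff ℝ 3 fun x => Real.log (sumExp l c x) :=
    (contDiff_sumExp l c).log fun x => (sumExp_pos l c x).ne'
  let B := max 1 (|s| * (logDerivConst * max 1 A₀ ^ 3))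
  have hexp := relDerivBound_exp (le_max_left _ _ : 1 ≤ B) (contDiff_const (c := s) |>.mul hlog)
    fun i h1 h3 x => by
      rw [norm_iteratedFDeriv_const_mul (hlog.of_le (cast_le_three h3)).contDiffAt]
      exact (mul_le_mul_of_nonneg_left (norm_iteratedFDeriv_log_le (le_max_left _ _)
        (contDiff_sumExp l c) (sumExp_pos l c) hA h1 h3 x) (abs_nonneg s)).trans (le_max_right _ _)
  have hrpow : (fun x => sumExp l c x ^ s) = fun x => Real.exp (s * Real.log (sumExp l c x)) :=
    funext fun x => by rw [Real.rpow_def_of_pos (sumExp_pos l c x), mul_comm]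
  rw [← hrpow] at hexp
  exact ⟨_, le_max_left _ _, hexp.mono (le_max_right 1 _) fun x =>
    Real.rpow_nonneg (sumExp_pos l c x).le s⟩

end SumExp

section Approximation

variable {n : ℕ}

lemma exists_isAdmissible_sumExp_rpow_neg {ι : Type*} [Fintype ι] [Nonempty ι] {s F : ℝ}
    (hs : 0 ≤ s) (l : ι → E n →L[ℝ] ℝ) (c : ι → ℝ) (hunc : Unconditional (sumExp l c))
    (hF : ∀ x, sumExp l c x ^ (-s) ≤ F) :
    ∃ A G, 1 ≤ A ∧ IsAdmissible A F G fun x => sumExp l c x ^ (-s) := by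
  obtain ⟨A, hA, hrel⟩ := exists_relDerivBound_sumExp_rpow l c (-s)
  refine ⟨A, A * F, hA, ?_, fun x => Real.rpow_pos_of_pos (sumExp_pos l c x) _, hF, hrel,
    fun x => ?_, fun x ε hε => ?_, logConcave_sumExp_rpow_neg l c hs⟩
  · exact (contDiff_sumExp l c).rpow_const_of_ne fun x => (sumExp_pos l c x).ne'
  · rw [← norm_iteratedFDeriv_one]
    exact (hrel 1 le_rfl (by norm_num) x).trans (mul_le_mul_of_nonneg_left (hF x) (by linarith))
  · exact congrArg (· ^ (-s)) (hunc x ε hε)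

/-- The vector of real signs `±1` given by a tuple of integer units. -/
def realSigns (u : Fin n → ℤˣ) (i : Fin n) : ℝ := ((u i : ℤ) : ℝ)

lemma realSigns_eq_or (u : Fin n → ℤˣ) (i : Fin n) : realSigns u i = 1 ∨ realSigns u i = -1 := by
  rcases Int.units_eq_one_or (u i) with h | h <;> simp [realSigns, h]

lemma exists_realSigns_eq {ε : Fin n → ℝ} (hε : ∀ i, ε i = 1 ∨ ε i = -1) :
    ∃ u : Fin n → ℤˣ, realSigns u = ε := by
  have hunit (i) : ∃ u : ℤˣ, ((u : ℤ) : ℝ) = ε i := by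
    rcases hε i with h | h
    · exact ⟨1, by simp [h]⟩
    · exact ⟨-1, by simp [h]⟩
  choose u hu using hunit
  exact ⟨u, funext hu⟩

/-- The action of a tuple of signs on `E n`; the signs are integer units so that they form a
finite group, over which one can average. -/
noncomputable def signFlip (u : Fin n → ℤˣ) : E n →L[ℝ] E n :=
  (signIso (realSigns u)).toContinuousLinearEquiv.toContinuousLinearMap

lemma signFlip_apply (u : Fin n → ℤˣ) (x : E n) :
    signFlip u x = WithLp.toLp 2 fun i => realSigns u i * x i :=
  signIso_apply (realSigns_eq_or u) x

lemma signFlip_signFlip (u w : Fin n → ℤˣ) (x : E n) :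
    signFlip u (signFlip w x) = signFlip (u * w) x := by
  simp only [signFlip_apply]
  ext i
  simp [realSigns, mul_assoc]

lemma signFlip_one (x : E n) : signFlip 1 x = x := by
  ext i
  simp [signFlip_apply, realSigns]

lemma signFlip_neg_one (x : E n) : signFlip (-1) x = -x := by
  ext i
  simp [signFlip_apply, realSigns]

/-- The linear parts of the functions `(m + 1) (l j + c j)`, `j ≤ m`, composed with all sign
flips. -/
noncomputable def symmLinear (l : ℕ → E n →L[ℝ] ℝ) (m : ℕ)
    (i : Fin (m + 1) × (Fin n → ℤˣ)) : E n →L[ℝ] ℝ :=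
  (m + 1 : ℝ) • (l i.1).comp (signFlip i.2)

/-- The function for which `log (symmSumExp l c m) / (m + 1)` is a smooth convex unconditional
approximation of `⨆ j, l j + c j`. -/
noncomputable def symmSumExp (l : ℕ → E n →L[ℝ] ℝ) (c : ℕ → ℝ) (m : ℕ) : E n → ℝ :=
  sumExp (symmLinear l m) fun i => (m + 1 : ℝ) * c i.1

variable (l : ℕ → E n →L[ℝ] ℝ) (c : ℕ → ℝ)

lemma symmSumExp_pos (m : ℕ) (x : E n) : 0 < symmSumExp l c m x := sumExp_pos _ _ x

lemma symmSumExp_eq_sum (m : ℕ) (x : E n) :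
    symmSumExp l c m x = ∑ i : Fin (m + 1) × (Fin n → ℤˣ),
      Real.exp ((m + 1 : ℝ) * (l i.1 (signFlip i.2 x) + c i.1)) :=
  Finset.sum_congr rfl fun i _ => by simp [symmLinear, mul_add]

lemma unconditional_symmSumExp (m : ℕ) : Unconditional (symmSumExp l c m) := by
  intro x ε hε
  obtain ⟨w, rfl⟩ := exists_realSigns_eq hε
  rw [← signFlip_apply, symmSumExp_eq_sum, symmSumExp_eq_sum]
  refine Fintype.sum_equiv ((Equiv.refl _).prodCongr (Equiv.mulRight w)) _ _ fun i => ?_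
  rw [signFlip_signFlip]
  rfl

lemma le_log_symmSumExp {m j : ℕ} (hj : j ≤ m) (u : Fin n → ℤˣ) (x : E n) :
    (m + 1 : ℝ) * (l j (signFlip u x) + c j) ≤ Real.log (symmSumExp l c m x) := by
  rw [Real.le_log_iff_exp_le (symmSumExp_pos l c m x), symmSumExp_eq_sum]
  exact Finset.single_le_sum
    (f := fun i : Fin (m + 1) × (Fin n → ℤˣ) =>
      Real.exp ((m + 1 : ℝ) * (l i.1 (signFlip i.2 x) + c i.1)))
    (fun i _ => (Real.exp_pos _).le) (Finset.mem_univ (⟨j, Nat.lt_succ_of_le hj⟩, u))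

lemma mul_le_log_symmSumExp (m : ℕ) (x : E n) :
    (m + 1 : ℝ) * c 0 ≤ Real.log (symmSumExp l c m x) := by
  have hflip (u) (hu : 0 ≤ l 0 (signFlip u x)) :
      (m + 1 : ℝ) * c 0 ≤ Real.log (symmSumExp l c m x) :=
    (mul_le_mul_of_nonneg_left (le_add_of_nonneg_left hu) (by positivity)).trans
      (le_log_symmSumExp l c (Nat.zero_le m) u x)
  rcases le_total 0 (l 0 x) with h | h
  · exact hflip 1 (by rwa [signFlip_one])
  · exact hflip (-1) (by rwa [signFlip_neg_one, map_neg, neg_nonneg])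

lemma symmSumExp_rpow_neg_le (m : ℕ) (x : E n) :
    symmSumExp l c m x ^ (-(m + 1 : ℝ)⁻¹) ≤ Real.exp (-c 0) := by
  rw [Real.rpow_def_of_pos (symmSumExp_pos l c m x), Real.exp_le_exp, mul_neg, neg_le_neg_iff,
    ← div_eq_mul_inv, le_div_iff₀ (by positivity), mul_comm]
  exact mul_le_log_symmSumExp l c m x

variable {l c} {U : E n → ℝ}

lemma log_symmSumExp_le (hle : ∀ j x, l j x + c j ≤ U x) (hU : Unconditional U) (m : ℕ)
    (x : E n) :
    Real.log (symmSumExp l c m x) ≤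
      Real.log ((m + 1 : ℝ) * Fintype.card (Fin n → ℤˣ)) + (m + 1 : ℝ) * U x := by
  have hcard : (0 : ℝ) < Fintype.card (Fin n → ℤˣ) := by exact_mod_cast Fintype.card_pos
  have hterm (i : Fin (m + 1) × (Fin n → ℤˣ)) :
      Real.exp ((m + 1 : ℝ) * (l i.1 (signFlip i.2 x) + c i.1)) ≤
        Real.exp ((m + 1 : ℝ) * U x) := by
    have hUx : U (signFlip i.2 x) = U x := by
      rw [signFlip_apply]
      exact hU x _ (realSigns_eq_or i.2)
    rw [Real.exp_le_exp, ← hUx]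
    exact mul_le_mul_of_nonneg_left (hle _ _) (by positivity)
  rw [Real.log_le_iff_le_exp (symmSumExp_pos l c m x), Real.exp_add,
    Real.exp_log (mul_pos (by positivity) hcard), symmSumExp_eq_sum]
  refine (Finset.sum_le_card_nsmul _ _ _ fun i _ => hterm i).trans (le_of_eq ?_)
  simp

lemma tendsto_log_succ_mul_div_succ {C : ℝ} (hC : 0 < C) :
    Tendsto (fun m : ℕ => Real.log ((m + 1 : ℝ) * C) / (m + 1 : ℝ)) atTop (𝓝 0) := by
  have hsucc : Tendsto (fun m : ℕ => (m + 1 : ℝ)) atTop atTop :=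
    tendsto_atTop_add_const_right _ _ tendsto_natCast_atTop_atTop
  have hlim := (Real.isLittleO_log_id_atTop.tendsto_div_nhds_zero.comp hsucc).add
    ((tendsto_const_nhds (x := Real.log C)).div_atTop hsucc)
  rw [add_zero] at hlim
  refine hlim.congr fun m => ?_
  rw [Real.log_mul (by positivity) hC.ne', add_div]
  rfl

lemma tendsto_log_symmSumExp_div (hlub : ∀ x, IsLUB (Set.range fun j => l j x + c j) (U x))
    (hU : Unconditional U) (x : E n) :
    Tendsto (fun m : ℕ => Real.log (symmSumExp l c m x) / (m + 1 : ℝ)) atTop (𝓝 (U x)) := by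
  have hcard : (0 : ℝ) < Fintype.card (Fin n → ℤˣ) := by exact_mod_cast Fintype.card_pos
  refine tendsto_order.2 ⟨fun a ha => ?_, fun a ha => ?_⟩
  · obtain ⟨-, ⟨j, rfl⟩, hj⟩ := (lt_isLUB_iff (hlub x)).1 ha
    filter_upwards [eventually_ge_atTop j] with m hm
    have hlog := le_log_symmSumExp l c hm 1 x
    rw [signFlip_one] at hlog
    exact hj.trans_le ((le_div_iff₀' (by positivity)).2 hlog)
  · have hlim := (tendsto_log_succ_mul_div_succ hcard).add_const (U x)
    rw [zero_add] at hlim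
    filter_upwards [hlim.eventually_lt_const ha] with m hm
    refine lt_of_le_of_lt ?_ hm
    rw [div_le_iff₀ (by positivity), add_mul, div_mul_cancel₀ _ (by positivity), mul_comm (U x)]
    exact log_symmSumExp_le (fun j x => (hlub x).1 ⟨j, rfl⟩) hU m x

lemma exists_affine_isLUB (hU : ConvexOn ℝ Set.univ U) :
    ∃ (l : ℕ → E n →L[ℝ] ℝ) (c : ℕ → ℝ),
      ∀ x, IsLUB (Set.range fun j => l j x + c j) (U x) := by
  have hcont : Continuous U := continuousOn_univ.1 (hU.continuousOn isOpen_univ)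
  obtain ⟨l, c, hle, hsup⟩ :=
    ConvexOn.real_univ_sSup_of_nat_affine_eq hcont.lowerSemicontinuous hU
  refine ⟨l, c, fun x => ?_⟩
  have hx := congrFun hsup x
  rw [iSup_apply] at hx
  rw [← hx]
  exact isLUB_ciSup ⟨U x, Set.forall_mem_range.2 fun j => hle j x⟩

theorem exists_isAdmissible_tendsto_exp_neg (hU : ConvexOn ℝ Set.univ U) (hunc : Unconditional U) :
    ∃ (f : ℕ → E n → ℝ) (F : ℝ), (∀ m, ∃ A G, 1 ≤ A ∧ IsAdmissible A F G (f m)) ∧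
      ∀ x, Tendsto (fun m => f m x) atTop (𝓝 (Real.exp (-U x))) := by
  obtain ⟨l, c, hlub⟩ := exists_affine_isLUB hU
  refine ⟨fun m x => symmSumExp l c m x ^ (-(m + 1 : ℝ)⁻¹), Real.exp (-c 0), fun m => ?_,
    fun x => ?_⟩
  · exact exists_isAdmissible_sumExp_rpow_neg (by positivity) _ _
      (unconditional_symmSumExp l c m) (symmSumExp_rpow_neg_le l c m)
  · refine ((Real.continuous_exp.tendsto _).comp
      (tendsto_log_symmSumExp_div hlub hunc x).neg).congr fun m => ?_
    simp only [Function.comp_apply, Real.rpow_def_of_pos (symmSumExp_pos l c m x), mul_neg,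
      ← div_eq_mul_inv]

end Approximation

/-! ### The contraction from `nuP n p` to its unconditional log-concave perturbations -/

section Contraction

variable {n : ℕ} {p : ℝ} {U : E n → ℝ}

lemma continuous_productDensity_powerPotential (hp : 0 < p) :
    Continuous (productDensity (powerPotential p) : E n → ℝ) := by
  have := continuous_powerPotential hp
  unfold productDensity
  fun_prop

lemma integral_productDensity_powerPotential_pos (hp : 0 < p) :
    0 < ∫ x : E n, productDensity (powerPotential p) x :=
  integral_pos_of_integrable_nonneg_nonzero (continuous_productDensity_powerPotential hp)
    (integrable_productDensity_powerPotential hp) (fun x => (productDensity_pos x).le)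
    (productDensity_pos 0).ne'

lemma nuP_eq_smul_withDensity_productDensity (hp : 0 < p) :
    nuP n p = (ENNReal.ofReal (∫ x : E n, productDensity (powerPotential p) x))⁻¹ •
      volume.withDensity fun x => ENNReal.ofReal (productDensity (powerPotential p) x) := by
  have hdensity (x : E n) :
      Real.exp (-(∑ i, |x i| ^ p) / p) = productDensity (powerPotential p) x := by
    simp only [productDensity, powerPotential, neg_div, Finset.sum_div]
  simp only [nuP, hdensity, withDensity_apply _ MeasurableSet.univ, Measure.restrict_univ]
  rw [ofReal_integral_eq_lintegral_ofReal (integrable_productDensity_powerPotential hp)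
    (.of_forall fun x => (productDensity_pos x).le)]

lemma integral_nuP (hp : 0 < p) (g : E n → ℝ) :
    ∫ x, g x ∂nuP n p = weightedMean (productDensity (powerPotential p)) g := by
  rw [nuP_eq_smul_withDensity_productDensity hp, integral_smul_measure,
    integral_withDensity_eq_integral_toReal_smul
      (continuous_productDensity_powerPotential hp).measurable.ennreal_ofReal
      (.of_forall fun x => ENNReal.ofReal_lt_top),
    ENNReal.toReal_inv, ENNReal.toReal_ofReal (integral_productDensity_powerPotential_pos hp).le,
    smul_eq_mul, weightedMean, div_eq_inv_mul]
  simp only [ENNReal.toReal_ofReal (productDensity_pos _).le, smul_eq_mul, mul_comm (g _)]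

lemma isFiniteMeasure_nuP (hp : 0 < p) : IsFiniteMeasure (nuP n p) := by
  rw [nuP_eq_smul_withDensity_productDensity hp]
  have : IsFiniteMeasure ((volume : Measure (E n)).withDensity fun x =>
      ENNReal.ofReal (productDensity (powerPotential p) x)) :=
    isFiniteMeasure_withDensity_ofReal (integrable_productDensity_powerPotential hp).2
  exact Measure.smul_finite _ (ENNReal.inv_ne_top.2
    (ENNReal.ofReal_pos.2 (integral_productDensity_powerPotential_pos hp)).ne')

lemma volume_absolutelyContinuous_nuP (hp : 0 < p) : (volume : Measure (E n)) ≪ nuP n p := by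
  rw [nuP_eq_smul_withDensity_productDensity hp]
  exact (withDensity_absolutelyContinuous'
    (continuous_productDensity_powerPotential hp).measurable.ennreal_ofReal.aemeasurable
    (.of_forall fun x => (ENNReal.ofReal_pos.2 (productDensity_pos x)).ne')).trans
    (Measure.absolutelyContinuous_smul (ENNReal.inv_ne_zero.2 ENNReal.ofReal_ne_top))

lemma isOpenPosMeasure_withDensity_exp_neg_nuP (hp : 0 < p) (hU : Continuous U) :
    ((nuP n p).withDensity fun x => ENNReal.ofReal (Real.exp (-U x))).IsOpenPosMeasure :=
  ((volume_absolutelyContinuous_nuP hp).trans (withDensity_absolutelyContinuous' (by fun_prop)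
    (.of_forall fun _ => (ENNReal.ofReal_pos.2 (Real.exp_pos _)).ne'))).isOpenPosMeasure

lemma integral_withDensity_exp_neg_nuP (hp : 0 < p) (hU : Continuous U) (g : E n → ℝ) :
    ∫ x, g x ∂(nuP n p).withDensity (fun x => ENNReal.ofReal (Real.exp (-U x))) =
      (∫ x, g x * (Real.exp (-U x) * productDensity (powerPotential p) x)) /
        ∫ x : E n, productDensity (powerPotential p) x := by
  rw [integral_withDensity_eq_integral_toReal_smul (by fun_prop)
    (.of_forall fun _ => ENNReal.ofReal_lt_top), integral_nuP hp, weightedMean]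
  congr 2 with x
  rw [ENNReal.toReal_ofReal (Real.exp_pos _).le, smul_eq_mul]
  ring

lemma integral_exp_neg_mul_productDensity (hp : 0 < p) (hU : Continuous U)
    [IsProbabilityMeasure ((nuP n p).withDensity fun x => ENNReal.ofReal (Real.exp (-U x)))] :
    ∫ x, Real.exp (-U x) * productDensity (powerPotential p) x =
      ∫ x : E n, productDensity (powerPotential p) x := by
  have hone := integral_withDensity_exp_neg_nuP hp hU fun _ => 1
  simp only [integral_const, probReal_univ, smul_eq_mul, one_mul] at hone
  rwa [eq_div_iff (integral_productDensity_powerPotential_pos hp).ne', one_mul, eq_comm] at hone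

theorem exists_lipschitzWith_weightedMean_comp_eq (hp1 : 1 ≤ p) (hp2 : p ≤ 2)
    (hU : ConvexOn ℝ Set.univ U) (hunc : Unconditional U)
    (hmass : ∫ x, Real.exp (-U x) * productDensity (powerPotential p) x ≠ 0) :
    ∃ T : E n → E n, LipschitzWith 1 T ∧ ∀ (L M : ℝ) (φ : E n → ℝ), IsTestFunction L M φ →
      weightedMean (productDensity (powerPotential p)) (φ ∘ T) =
        weightedMean (fun x => Real.exp (-U x) * productDensity (powerPotential p) x) φ := by
  have hp : 0 < p := by linarith
  obtain ⟨f, F, hf, hlim⟩ := exists_isAdmissible_tendsto_exp_neg hU hunc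
  choose A G hA hf using hf
  let δ : ℕ → ℝ := fun m => 1 / (m + 1)
  have hδ (m) : 0 < δ m := by positivity
  have hδ_lim : Tendsto δ atTop (𝓝 0) := tendsto_one_div_add_atTop_nhds_zero_nat
  have hpot (m) := isPotential_regularizedPotential hp (hδ m)
  have hle (m) (x : E n) := productDensity_regularizedPotential_le hp (hδ m) x
  have hρ_lim (x : E n) := tendsto_productDensity_regularizedPotential hp hδ_lim x
  refine exists_transport_of_isApproxTransport
    (ρ := fun m => productDensity (regularizedPotential p (δ m)))
    (σ := fun m x => f m x * productDensity (regularizedPotential p (δ m)) x)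
    (D := fun x => max 1 F * productDensity (powerPotential p) x)
    ((integrable_productDensity_powerPotential hp).const_mul _)
    (fun m => (hpot m).continuous_productDensity)
    (fun m => (hf m).contDiff.continuous.mul (hpot m).continuous_productDensity)
    (fun m x => ?_) (fun m x => ?_) hρ_lim (fun x => (hlim x).mul (hρ_lim x))
    (integral_productDensity_powerPotential_pos hp).ne' hmass (fun m ε L M hε hL hM => ?_)
  · rw [abs_of_pos (productDensity_pos x)]
    exact (hle m x).trans (le_mul_of_one_le_left (productDensity_pos x).le (le_max_left 1 F))
  · rw [abs_of_pos (mul_pos ((hf m).pos x) (productDensity_pos x))]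
    exact mul_le_mul (((hf m).le x).trans (le_max_right 1 F)) (hle m x) (productDensity_pos x).le
      (by positivity)
  · obtain ⟨β, hβ⟩ := exists_isDrift_regularizedDrift (hδ m) (r := p / 2 - 1) (by linarith)
      (by linarith)
    exact exists_isApproxTransport hβ (hpot m) (hA m) (hf m) hε hL hM

theorem exists_lipschitzWith_measurePreserving_nuP (hp1 : 1 ≤ p) (hp2 : p ≤ 2)
    (hU : ConvexOn ℝ Set.univ U) (hunc : Unconditional U)
    [IsProbabilityMeasure ((nuP n p).withDensity fun x => ENNReal.ofReal (Real.exp (-U x)))] :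
    ∃ T : E n → E n, LipschitzWith 1 T ∧ MeasurePreserving T (nuP n p)
      ((nuP n p).withDensity fun x => ENNReal.ofReal (Real.exp (-U x))) := by
  have hp : 0 < p := by linarith
  have hUc : Continuous U := continuousOn_univ.1 (hU.continuousOn isOpen_univ)
  have hmass := integral_exp_neg_mul_productDensity hp hUc
  obtain ⟨T, hT, hTφ⟩ := exists_lipschitzWith_weightedMean_comp_eq hp1 hp2 hU hunc
    (hmass.trans_ne (integral_productDensity_powerPotential_pos hp).ne')
  have := isFiniteMeasure_nuP (n := n) hp
  refine ⟨T, hT, hT.continuous.measurable,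
    map_eq_of_forall_isTestFunction hT.continuous fun L M φ hφ => ?_⟩
  calc ∫ x, φ (T x) ∂nuP n p
      = weightedMean (productDensity (powerPotential p)) (φ ∘ T) := integral_nuP hp _
    _ = weightedMean (fun x => Real.exp (-U x) * productDensity (powerPotential p) x) φ :=
        hTφ L M φ hφ
    _ = _ := by rw [integral_withDensity_exp_neg_nuP hp hUc, weightedMean, hmass]

end Contraction

end SpectralComparison

/-- **Spectral comparison for unconditional log-concave perturbations of `ν_pⁿ`**
(Kim–Milman + Contraction Principle): for `p ∈ [1,2]` and `μ = exp(-U)·ν_pⁿ` a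
probability measure with `U` convex and unconditional,
`λ_k^Lip(ℝⁿ,|·|,μ) ≥ λ_k^Lip(ℝⁿ,|·|,ν_pⁿ)` for all `k ≥ 1`. -/
theorem spectral_comparison_unconditional_perturbation
    (n : ℕ) (hn : 1 ≤ n) (p : ℝ) (hp1 : 1 ≤ p) (hp2 : p ≤ 2)
    (U : EuclideanSpace ℝ (Fin n) → ℝ)
    (hUconv : ConvexOn ℝ Set.univ U)
    (hUuncond : ∀ (x : EuclideanSpace ℝ (Fin n)) (ε : Fin n → ℝ),
      (∀ i, ε i = 1 ∨ ε i = -1) →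
        U (WithLp.toLp 2 (fun i => ε i * x i)) = U x)
    (μ : Measure (EuclideanSpace ℝ (Fin n)))
    (hμ : μ = (nuP n p).withDensity fun x => ENNReal.ofReal (Real.exp (-(U x))))
    [IsProbabilityMeasure μ]
    (k : ℕ) (hk : 1 ≤ k) :
    lambdaLip (nuP n p) k ≤ lambdaLip μ k := by
  subst hμ
  have hp : 0 < p := by linarith
  have hUcont : Continuous U := continuousOn_univ.1 (hUconv.continuousOn isOpen_univ)
  obtain ⟨T, hT, hTμ⟩ := SpectralComparison.exists_lipschitzWith_measurePreserving_nuP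
    hp1 hp2 hUconv hUuncond
  have := SpectralComparison.isOpenPosMeasure_withDensity_exp_neg_nuP (n := n) hp hUcont
  have : Nonempty (Fin n) := ⟨⟨0, hn⟩⟩
  have : Infinite (EuclideanSpace ℝ (Fin n)) := Module.Free.infinite ℝ _
  exact SpectralComparison.lambdaLip_le_of_contraction hT hTμ hk
    (SpectralComparison.exists_le_sobolev_finrank_eq _ k)
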